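/- arXiv:math/0406335 — 3 statements merged into one kernel-verified Lean document; each statement's English description precedes it below -/
import Mathlib

section
/- Let ψ : ℝ → ℝ be any function with ψ(x) → ∞ as x → ∞. Then the number of integers n ≤ x such that Σ_{q prime, q ≤ (log log x)²} v_q(λ(λ(n)))·log q > ψ(x)·(log log x)² is o(x) as x → ∞. -/
/-!
The proof is a first moment computation. Put `y = log log x`, `N = ⌊x⌋` and `Q = ⌊y²⌋`. It is
enough that the sum over `n ≤ N` of `∑_{q ≤ Q} v_q(λ(λ(n))) log q` is `O(x y²)`
(`first_moment_le`): by Markov's inequality the exceptional `n` then number `O(x / ψ(x))`.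

To bound the first moment, expand `v_q(λ(λ(n)))` as the number of `i ≥ 1` with
`q ^ i ∣ λ(λ(n))`. Exponents with `q ^ i ≤ Q` are counted trivially and contribute
`N` times Chebyshev's `ψ(Q) = O(Q)`. For larger exponents one shows that `q ^ i ∣ λ(λ(n))` holds
for `O(N y² / q ^ i)` of the `n ≤ N` (`card_pow_dvd_lamlam`); the geometric series over `i` is
`O(N y² / Q)`, and summing with weight `log q` over `q ≤ Q` costs a factor `θ(Q) = O(Q)`.

The count of `n` with `q ^ k ∣ λ(λ(n))` rests on the shape of `λ`: typically there are primes
`r ∣ n` and `p ∣ r - 1` with `q ^ k ∣ p - 1`, the other possibilities being rarer. Hence everything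
reduces to the estimate `∑ 1 / r = O(log log N / q ^ k)` over the primes `r ≤ N` with `r ≡ 1` modulo
`q ^ k`, uniformly in `q ^ k` (`sum_inv_apPrimes_le`); the case of modulus `p` is used as well.
It follows by a dyadic decomposition from a Brun–Titchmarsh bound (`card_prime_dyadic`), which is
derived from Selberg's upper bound sieve (`selberg_bound`) on top of the diagonalisation of the main
term available in Mathlib.
-/

/-- Carmichael's function: the exponent of the multiplicative group `(ℤ/nℤ)ˣ`. -/
noncomputable def lam (n : ℕ) : ℕ := Monoid.exponent (ZMod n)ˣ

namespace LamLam

open Finset ArithmeticFunction BoundingSieve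
open scoped ArithmeticFunction.Moebius

/-! ### Selberg's upper bound sieve -/

/-- Selberg's normalising sum `S(z) = ∑ g(l)` over the divisors `l ≤ z` of the sieving product,
where `g = selbergTerms`. -/
noncomputable def selS (s : BoundingSieve) (z : ℕ) : ℝ :=
  ∑ l ∈ s.prodPrimes.divisors with l ≤ z, s.selbergTerms l

/-- Selberg's optimal weights of level `z`: with `ν` the sieve density and `g = selbergTerms`,
`w(l) = μ(l) / (ν(l) S(z)) * ∑ g(m)`, the sum running over the divisors `m ≤ z` of the sieving
product that are multiples of `l`. -/
noncomputable def selW (s : BoundingSieve) (z l : ℕ) : ℝ :=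
  (μ l : ℝ) * (s.nu l)⁻¹ * (selS s z)⁻¹ *
    ∑ m ∈ s.prodPrimes.divisors with m ≤ z ∧ l ∣ m, s.selbergTerms m

lemma selS_pos (s : BoundingSieve) {z : ℕ} (hz : 1 ≤ z) : 0 < selS s z := by
  unfold selS
  refine sum_pos (fun l hl => selbergTerms_pos (Nat.dvd_of_mem_divisors (mem_filter.1 hl).1))
    ⟨1, ?_⟩
  simp [prodPrimes_ne_zero, hz]

lemma selbergTerms_nonneg' (s : BoundingSieve) {l : ℕ} (hl : l ∈ s.prodPrimes.divisors) :
    0 ≤ s.selbergTerms l := (selbergTerms_pos (Nat.dvd_of_mem_divisors hl)).le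

lemma selW_one (s : BoundingSieve) {z : ℕ} (hz : 1 ≤ z) : selW s z 1 = 1 := by
  have := selS_pos s hz
  have h1 : s.nu 1 = 1 := s.nu_mult.map_one
  unfold selW
  simp only [moebius_apply_one, h1, one_dvd, and_true]
  change _ * _ * _ * selS s z = 1
  simp [this.ne']

/-- Dual Möbius inversion: the sum of `μ(d)` over `l ∣ d ∣ m` vanishes unless `l = m`. -/
lemma sum_moebius_between {l m : ℕ} (hm : Squarefree m) :
    ∑ d ∈ m.divisors with l ∣ d, (μ d : ℝ) = if l = m then (μ l : ℝ) else 0 := by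
  have hm0 := hm.ne_zero
  by_cases hlm : l ∣ m
  · obtain ⟨c, rfl⟩ := hlm
    have hl0 : l ≠ 0 := left_ne_zero_of_mul hm0
    have hc0 : c ≠ 0 := right_ne_zero_of_mul hm0
    have hcop : l.Coprime c := (Nat.squarefree_mul_iff.1 hm).1
    have : ∑ d ∈ (l * c).divisors with l ∣ d, (μ d : ℝ) = ∑ e ∈ c.divisors, (μ (l * e) : ℝ) := by
      symm
      refine sum_bij (fun e _ => l * e) ?_ ?_ ?_ ?_
      · intro e he
        simp only [mem_filter, Nat.mem_divisors] at he ⊢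
        exact ⟨⟨Nat.mul_dvd_mul_left _ he.1, hm0⟩, dvd_mul_right _ _⟩
      · intro a _ b _ h
        exact Nat.eq_of_mul_eq_mul_left (Nat.pos_of_ne_zero hl0) h
      · intro b hb
        simp only [mem_filter, Nat.mem_divisors] at hb
        obtain ⟨e, rfl⟩ := hb.2
        exact ⟨e, by simp [hc0, Nat.dvd_of_mul_dvd_mul_left (Nat.pos_of_ne_zero hl0) hb.1.1], rfl⟩
      · intro e he; rfl
    rw [this]
    have h2 : ∀ e ∈ c.divisors, (μ (l * e) : ℝ) = μ l * μ e := by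
      intro e he
      rw [isMultiplicative_moebius.map_mul_of_coprime
        (hcop.coprime_dvd_right (Nat.dvd_of_mem_divisors he))]
      push_cast; rfl
    rw [sum_congr rfl h2, ← mul_sum]
    have h3 : ∑ e ∈ c.divisors, (μ e : ℝ) = if c = 1 then 1 else 0 := by
      have h4 := congrArg (fun f : ArithmeticFunction ℤ => f c) moebius_mul_coe_zeta
      simp only [coe_mul_zeta_apply, one_apply] at h4
      exact_mod_cast h4
    rw [h3]
    by_cases hc : c = 1
    · simp [hc]
    · have : l ≠ l * c := fun h => hc (by
        simpa [hl0] using h.symm)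
      rw [if_neg hc, if_neg this, mul_zero]
  · rw [sum_eq_zero, if_neg]
    · rintro rfl; exact hlm dvd_rfl
    · intro d hd
      simp only [mem_filter, Nat.mem_divisors] at hd
      exact absurd (hd.2.trans hd.1.1) hlm

/-- The change of variables diagonalising the main term sends the weights `w` to
`g(l) μ(l) / S(z)`, cut off at `l ≤ z`. -/
lemma selW_diag (s : BoundingSieve) (z : ℕ) {l : ℕ} (hl : l ∈ s.prodPrimes.divisors) :
    (∑ d ∈ s.prodPrimes.divisors, if l ∣ d then s.nu d * selW s z d else 0) =
      if l ≤ z then (selS s z)⁻¹ * s.selbergTerms l * μ l else 0 := by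
  have h1 : ∀ d ∈ s.prodPrimes.divisors, (if l ∣ d then s.nu d * selW s z d else 0) =
      ∑ m ∈ s.prodPrimes.divisors, if m ≤ z then (if l ∣ d ∧ d ∣ m then
        (selS s z)⁻¹ * s.selbergTerms m * μ d else 0) else 0 := by
    intro d hd
    have hnu := nu_ne_zero (s := s) (Nat.dvd_of_mem_divisors hd)
    split_ifs with h
    · unfold selW
      rw [sum_filter, mul_sum, mul_sum]
      refine sum_congr rfl fun m hm => ?_
      by_cases h1 : m ≤ z <;> by_cases h2 : d ∣ m <;> simp [h1, h2, h]
      field_simp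
    · simp [h]
  rw [sum_congr rfl h1, sum_comm]
  have h2 : ∀ m ∈ s.prodPrimes.divisors, (∑ d ∈ s.prodPrimes.divisors,
      if m ≤ z then (if l ∣ d ∧ d ∣ m then
        (selS s z)⁻¹ * s.selbergTerms m * (μ d : ℝ) else 0) else 0) =
      if l = m then (if m ≤ z then (selS s z)⁻¹ * s.selbergTerms m * μ l else 0) else 0 := by
    intro m hm
    have hmP := Nat.dvd_of_mem_divisors hm
    split_ifs with hmz h h
    · have := sum_moebius_between (l := l) (squarefree_of_dvd_prodPrimes hmP)
      rw [if_pos h] at this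
      rw [← this, mul_sum, ← Nat.divisors_filter_dvd_of_dvd prodPrimes_ne_zero hmP, filter_filter,
        sum_filter]
      simp only [and_comm]
    · have := sum_moebius_between (l := l) (squarefree_of_dvd_prodPrimes hmP)
      rw [if_neg h] at this
      rw [← sum_filter, ← mul_sum]
      convert mul_zero _
      rw [← this, ← Nat.divisors_filter_dvd_of_dvd prodPrimes_ne_zero hmP, filter_filter]
      simp only [and_comm]
    · simp
    · simp
  rw [sum_congr rfl h2, sum_ite_eq, if_pos hl]

lemma selberg_mainSum (s : BoundingSieve) {z : ℕ} (hz : 1 ≤ z) :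
    s.mainSum (lambdaSquared (selW s z)) = (selS s z)⁻¹ := by
  have hS := selS_pos s hz
  rw [mainSum_lambdaSquared_eq_sum_mul_sum_sq]
  have : ∀ l ∈ s.prodPrimes.divisors, (s.selbergTerms l)⁻¹ *
        (∑ d ∈ s.prodPrimes.divisors, if l ∣ d then s.nu d * selW s z d else 0) ^ 2
      = if l ≤ z then (selS s z)⁻¹ ^ 2 * s.selbergTerms l else 0 := by
    intro l hl
    have hlP := Nat.dvd_of_mem_divisors hl
    rw [selW_diag s z hl]
    have hg := (selbergTerms_pos (s := s) hlP).ne'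
    have hmu : (μ l : ℝ) ^ 2 = 1 := by
      have := moebius_sq_eq_one_of_squarefree (squarefree_of_dvd_prodPrimes (s := s) hlP)
      exact_mod_cast this
    split_ifs
    · rw [mul_pow, hmu]; field_simp
    · simp
  rw [sum_congr rfl this, ← sum_filter, ← mul_sum]
  change _ * selS s z = _
  field_simp

/-- For density `1 / l` the weights satisfy `|w(l)| ≤ l`, hence `|w(l)| ≤ z`, and they are
supported on `l ≤ z`. Only this crude bound is needed. -/
lemma abs_selW_le (s : BoundingSieve) {z : ℕ} (hz : 1 ≤ z)
    (hnu : ∀ l, l ∣ s.prodPrimes → s.nu l = (l : ℝ)⁻¹) {l : ℕ} (hl : l ∈ s.prodPrimes.divisors) :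
    |selW s z l| ≤ if l ≤ z then (z : ℝ) else 0 := by
  have hS := selS_pos s hz
  have hlP := Nat.dvd_of_mem_divisors hl
  set T := ∑ m ∈ s.prodPrimes.divisors with m ≤ z ∧ l ∣ m, s.selbergTerms m with hT
  have hW : selW s z l = (μ l : ℝ) * (s.nu l)⁻¹ * (selS s z)⁻¹ * T := rfl
  split_ifs with h
  · have hT0 : 0 ≤ T := sum_nonneg fun m hm => selbergTerms_nonneg' s (mem_filter.1 hm).1
    have hTS : T ≤ selS s z := by
      refine sum_le_sum_of_subset_of_nonneg ?_ fun m hm _ =>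
        selbergTerms_nonneg' s (mem_filter.1 hm).1
      intro m hm
      simp only [mem_filter] at hm ⊢
      exact ⟨hm.1, hm.2.1⟩
    have hmu : |(μ l : ℝ)| ≤ 1 := by exact_mod_cast abs_moebius_le_one (n := l)
    rw [hW, hnu l hlP, inv_inv, abs_mul, abs_mul, abs_mul, abs_of_nonneg hT0,
      abs_of_pos (inv_pos.2 hS), Nat.abs_cast]
    calc |(μ l : ℝ)| * l * (selS s z)⁻¹ * T ≤ 1 * z * (selS s z)⁻¹ * selS s z := by
          gcongr
      _ = z := by field_simp
  · have : T = 0 := by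
      rw [hT]
      apply sum_eq_zero
      intro m hm
      simp only [mem_filter, Nat.mem_divisors] at hm
      exact absurd ((Nat.le_of_dvd (Nat.pos_of_dvd_of_pos hm.1.1
        (Nat.pos_of_ne_zero prodPrimes_ne_zero)) hm.2.2).trans hm.2.1) h
    rw [hW, this]; simp

/-- At most `z` weights are nonzero and each is at most `z`, so `∑ |w| ≤ z ^ 2`; the error term
is bounded by the square of this sum. -/
lemma selberg_errSum (s : BoundingSieve) {z : ℕ} (hz : 1 ≤ z)
    (hnu : ∀ l, l ∣ s.prodPrimes → s.nu l = (l : ℝ)⁻¹)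
    (hrem : ∀ l, l ∣ s.prodPrimes → |s.rem l| ≤ 1) :
    s.errSum (lambdaSquared (selW s z)) ≤ (z : ℝ) ^ 4 := by
  have hsum : ∑ d ∈ s.prodPrimes.divisors, |selW s z d| ≤ (z : ℝ) ^ 2 := by
    calc ∑ d ∈ s.prodPrimes.divisors, |selW s z d|
        ≤ ∑ d ∈ s.prodPrimes.divisors, if d ≤ z then (z : ℝ) else 0 :=
          sum_le_sum fun d hd => abs_selW_le s hz hnu hd
      _ = #{d ∈ s.prodPrimes.divisors | d ≤ z} * (z : ℝ) := by
          rw [← sum_filter, sum_const, nsmul_eq_mul]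
      _ ≤ z * z := by
          gcongr
          calc #{d ∈ s.prodPrimes.divisors | d ≤ z} ≤ #(Icc 1 z) := by
                apply card_le_card
                intro d hd
                simp only [mem_filter] at hd
                exact mem_Icc.2 ⟨Nat.pos_of_mem_divisors hd.1, hd.2⟩
            _ = z := by simp
      _ = _ := by ring
  unfold errSum
  calc ∑ e ∈ s.prodPrimes.divisors, |lambdaSquared (selW s z) e| * |s.rem e|
      ≤ ∑ e ∈ s.prodPrimes.divisors, ∑ d1 ∈ s.prodPrimes.divisors, ∑ d2 ∈ s.prodPrimes.divisors,
          if e = d1.lcm d2 then |selW s z d1| * |selW s z d2| else 0 := by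
        refine sum_le_sum fun e he => ?_
        have heP := Nat.dvd_of_mem_divisors he
        have hsub : e.divisors ⊆ s.prodPrimes.divisors :=
          Nat.divisors_subset_of_dvd prodPrimes_ne_zero heP
        calc |lambdaSquared (selW s z) e| * |s.rem e| ≤ |lambdaSquared (selW s z) e| * 1 := by
              gcongr; exact hrem e heP
          _ ≤ ∑ d1 ∈ e.divisors, ∑ d2 ∈ e.divisors,
              if e = d1.lcm d2 then |selW s z d1| * |selW s z d2| else 0 := by
              rw [mul_one]
              unfold lambdaSquared
              refine (abs_sum_le_sum_abs _ _).trans (sum_le_sum fun d1 _ => ?_)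
              refine (abs_sum_le_sum_abs _ _).trans (sum_le_sum fun d2 _ => ?_)
              split_ifs
              · rw [abs_mul]
              · simp
          _ ≤ _ := by
              have hnn : ∀ d1 d2 : ℕ,
                  0 ≤ if e = d1.lcm d2 then |selW s z d1| * |selW s z d2| else 0 := by
                intro d1 d2; split_ifs <;> positivity
              refine (sum_le_sum_of_subset_of_nonneg hsub fun d1 _ _ =>
                sum_nonneg fun d2 _ => hnn d1 d2).trans (sum_le_sum fun d1 _ => ?_)
              exact sum_le_sum_of_subset_of_nonneg hsub fun d2 _ _ => hnn d1 d2
    _ = ∑ d1 ∈ s.prodPrimes.divisors, ∑ d2 ∈ s.prodPrimes.divisors,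
          ∑ e ∈ s.prodPrimes.divisors,
          if e = d1.lcm d2 then |selW s z d1| * |selW s z d2| else 0 := by
        rw [sum_comm]; exact sum_congr rfl fun d1 _ => sum_comm
    _ ≤ ∑ d1 ∈ s.prodPrimes.divisors, ∑ d2 ∈ s.prodPrimes.divisors,
          |selW s z d1| * |selW s z d2| := by
        refine sum_le_sum fun d1 _ => sum_le_sum fun d2 _ => ?_
        rw [sum_ite_eq']
        split_ifs
        · exact le_rfl
        · positivity
    _ = (∑ d ∈ s.prodPrimes.divisors, |selW s z d|) ^ 2 := by
        rw [sq, sum_mul_sum]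
    _ ≤ ((z : ℝ) ^ 2) ^ 2 := by
        have : 0 ≤ ∑ d ∈ s.prodPrimes.divisors, |selW s z d| := sum_nonneg fun _ _ => abs_nonneg _
        gcongr
    _ = (z : ℝ) ^ 4 := by ring

/-- Selberg's upper bound sieve for the density `1 / l` with remainders bounded by `1`. -/
lemma selberg_bound (s : BoundingSieve) {z : ℕ} (hz : 1 ≤ z)
    (hnu : ∀ l, l ∣ s.prodPrimes → s.nu l = (l : ℝ)⁻¹)
    (hrem : ∀ l, l ∣ s.prodPrimes → |s.rem l| ≤ 1) :
    s.siftedSum ≤ s.totalMass * (selS s z)⁻¹ + (z : ℝ) ^ 4 := by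
  refine (siftedSum_le_mainSum_errSum_of_upperMoebius _
    (upperMoebius_lambdaSquared _ (selW_one s hz))).trans ?_
  rw [selberg_mainSum s hz]
  gcongr
  exact selberg_errSum s hz hnu hrem

/-! ### Primes in the progression `1` modulo `q ^ k` -/

/-- The primes `p ≤ z` other than `q`. -/
def sievePrimes (q z : ℕ) : Finset ℕ := (Icc 1 z).filter fun p => p.Prime ∧ p ≠ q

/-- The arithmetic function `n ↦ 1 / n` (with value `0` at `0`). -/
noncomputable def invFun : ArithmeticFunction ℝ := ⟨fun n => (n : ℝ)⁻¹, by simp⟩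

lemma invFun_mult : invFun.IsMultiplicative :=
  ⟨by simp [invFun], fun {m n} _ => by simp [invFun, mul_comm]⟩

lemma prime_of_mem_sievePrimes {q z p : ℕ} (h : p ∈ sievePrimes q z) : p.Prime :=
  (mem_filter.1 h).2.1

lemma prod_sievePrimes_squarefree (q z : ℕ) : Squarefree (∏ p ∈ sievePrimes q z, p) := by
  refine Finset.squarefree_prod_of_pairwise_isCoprime ?_ ?_
  · intro a ha b hb hab
    exact Nat.coprime_iff_isRelPrime.1 ((Nat.coprime_primes (prime_of_mem_sievePrimes ha)
      (prime_of_mem_sievePrimes hb)).2 hab)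
  · intro p hp
    exact (prime_of_mem_sievePrimes hp).prime.squarefree

/-- The sieve problem for the progression `d * m + 1`, `m < N`: unit weights, sifted by the
primes `p ≤ z`, `p ≠ q`, with density `1 / l`. It is used with `d` a power of `q`, so that `d` is
invertible modulo every sieving prime. -/
noncomputable def apSieve (q d N z : ℕ) : BoundingSieve where
  support := (range N).image fun m => d * m + 1
  prodPrimes := ∏ p ∈ sievePrimes q z, p
  prodPrimes_squarefree := prod_sievePrimes_squarefree q z
  weights := fun _ => 1
  weights_nonneg := fun _ => zero_le_one
  totalMass := N
  nu := invFun
  nu_mult := invFun_mult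
  nu_pos_of_prime := fun p hp _ => by
    have := hp.pos
    simp only [invFun, coe_mk]; positivity
  nu_lt_one_of_prime := fun p hp _ => by
    simp only [invFun, coe_mk]
    exact inv_lt_one_of_one_lt₀ (by exact_mod_cast hp.one_lt)

lemma apSieve_nu (q d N z l : ℕ) : (apSieve q d N z).nu l = (l : ℝ)⁻¹ := rfl

lemma coprime_prod_sievePrimes {q : ℕ} (hq : q.Prime) (z : ℕ) :
    q.Coprime (∏ p ∈ sievePrimes q z, p) := by
  refine Nat.Coprime.prod_right fun p hp => ?_
  exact (Nat.coprime_primes hq (prime_of_mem_sievePrimes hp)).2 (mem_filter.1 hp).2.2.symm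

lemma apSieve_rem {q k N z l : ℕ} (hq : q.Prime) (hl : l ∣ (apSieve q (q ^ k) N z).prodPrimes) :
    |(apSieve q (q ^ k) N z).rem l| ≤ 1 := by
  have hd : 0 < q ^ k := pow_pos hq.pos k
  have hl0 : 0 < l := Nat.pos_of_dvd_of_pos hl (Nat.pos_of_ne_zero prodPrimes_ne_zero)
  have hcop : (q ^ k).Coprime l := by
    refine Nat.Coprime.pow_left k ?_
    exact (coprime_prod_sievePrimes hq z).coprime_dvd_right hl
  -- As `q ^ k` is invertible modulo `l`, the condition `l ∣ q ^ k * m + 1` cuts out a single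
  -- residue class of `m` modulo `l`.
  obtain ⟨a, ha⟩ : ∃ a : ℕ, l ∣ q ^ k * a + 1 := by
    obtain ⟨a, ha⟩ := Nat.exists_mul_mod_eq_of_coprime (l - 1) hcop hl0.ne'
    refine ⟨a, ?_⟩
    have h1 : q ^ k * a ≡ l - 1 [MOD l] := ha.2
    have h2 := h1.add_right 1
    rw [Nat.sub_add_cancel hl0] at h2
    exact (Nat.modEq_zero_iff_dvd).1 (h2.trans (by simp [Nat.ModEq]))
  have hiff : ∀ m, l ∣ q ^ k * m + 1 ↔ m ≡ a [MOD l] := by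
    intro m
    constructor
    · intro h
      have h3 : q ^ k * m + 1 ≡ q ^ k * a + 1 [MOD l] :=
        ((Nat.modEq_zero_iff_dvd).2 h).trans ((Nat.modEq_zero_iff_dvd).2 ha).symm
      exact Nat.ModEq.cancel_left_of_coprime hcop.symm (Nat.ModEq.add_right_cancel' 1 h3)
    · intro h
      exact (Nat.modEq_zero_iff_dvd).1
        (((h.mul_left (q ^ k)).add_right 1).trans ((Nat.modEq_zero_iff_dvd).2 ha))
  have hcount : (apSieve q (q ^ k) N z).multSum l = (Nat.count (· ≡ a [MOD l]) N : ℝ) := by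
    have hinj : Set.InjOn (fun m => q ^ k * m + 1) (range N : Set ℕ) := by
      intro x _ y _ h
      exact Nat.eq_of_mul_eq_mul_left hd (Nat.add_right_cancel h)
    simp only [multSum, apSieve]
    rw [sum_image hinj, ← sum_filter, sum_const, nsmul_eq_mul, mul_one,
      Nat.count_eq_card_filter_range]
    simp only [hiff]
  have hmass : (apSieve q (q ^ k) N z).totalMass = N := rfl
  rw [rem, hcount, Nat.count_modEq_card _ hl0, apSieve_nu, hmass]
  have hdm : (l : ℝ) * (N / l : ℕ) + (N % l : ℕ) = N := by exact_mod_cast Nat.div_add_mod N l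
  have hmod : ((N % l : ℕ) : ℝ) < l := by exact_mod_cast Nat.mod_lt N hl0
  have hlr : (0 : ℝ) < l := by exact_mod_cast hl0
  have hfrac : (l : ℝ)⁻¹ * N = (N / l : ℕ) + (N % l : ℕ) / (l : ℝ) := by
    rw [← hdm]; field_simp
  have h0 : 0 ≤ ((N % l : ℕ) : ℝ) / (l : ℝ) := by positivity
  have h1 : ((N % l : ℕ) : ℝ) / (l : ℝ) ≤ 1 := (div_le_one hlr).2 hmod.le
  rw [hfrac, abs_le]
  push_cast
  split_ifs <;> constructor <;> simp <;> linarith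

/-- A prime `q ^ k * m + 1` with `m ≥ z` exceeds `z`, so it survives the sieve; the values
`m < z` account for the extra term. -/
lemma prime_card_le_siftedSum {q k N z : ℕ} (hq : q.Prime) :
    (#{m ∈ range N | (q ^ k * m + 1).Prime} : ℝ) ≤ (apSieve q (q ^ k) N z).siftedSum + z := by
  have hd : 0 < q ^ k := pow_pos hq.pos k
  have hinj : Set.InjOn (fun m => q ^ k * m + 1) (range N : Set ℕ) := by
    intro x _ y _ h
    exact Nat.eq_of_mul_eq_mul_left hd (Nat.add_right_cancel h)
  have hs : (apSieve q (q ^ k) N z).siftedSum =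
      #{m ∈ range N | (∏ p ∈ sievePrimes q z, p).Coprime (q ^ k * m + 1)} := by
    change (∑ n ∈ (range N).image fun m => q ^ k * m + 1,
      if (∏ p ∈ sievePrimes q z, p).Coprime n then (1 : ℝ) else 0) = _
    rw [sum_image hinj, ← sum_filter, sum_const, nsmul_eq_mul, mul_one]
  rw [hs]
  have hsub : {m ∈ range N | (q ^ k * m + 1).Prime} ⊆
      {m ∈ range N | (∏ p ∈ sievePrimes q z, p).Coprime (q ^ k * m + 1)} ∪ range z := by
    intro m hm
    simp only [mem_filter, mem_union, mem_range] at hm ⊢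
    by_contra! hcon
    have h1 := hcon.1 hm.1
    have h2 := mt (Nat.Coprime.symm) h1
    have h3 := (hm.2.coprime_iff_not_dvd).not.1 h2
    rw [not_not] at h3
    obtain ⟨p, hp, hpd⟩ := (hm.2.prime.dvd_finsetProd_iff _).1 h3
    have h4 := Nat.le_of_dvd (prime_of_mem_sievePrimes hp).pos hpd
    have h5 := (mem_Icc.1 (mem_filter.1 hp).1).2
    have : m ≤ q ^ k * m := Nat.le_mul_of_pos_left m hd
    omega
  have := (card_le_card hsub).trans (card_union_le _ _)
  rw [card_range] at this
  exact_mod_cast this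

/-- The reciprocals of the integers with squarefree kernel `d` sum to at most
`d⁻¹ ∏ (1 - p⁻¹)⁻¹ = ∏ 1 / (p - 1)`, the product being over `p ∣ d`: write `n = d * m` with `m`
composed of primes dividing `d`, and use the Euler product. -/
lemma sum_rad_le (d : ℕ) (hd : Squarefree d) (T : Finset ℕ) (hT : ∀ n ∈ T, n ≠ 0) :
    ∑ n ∈ T with ∏ p ∈ n.primeFactors, p = d, (n : ℝ)⁻¹ ≤
      (d : ℝ)⁻¹ * ∏ p ∈ d.primeFactors, (1 - (p : ℝ)⁻¹)⁻¹ := by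
  let f : ℕ →* ℝ :=
    { toFun := fun n => (n : ℝ)⁻¹
      map_one' := by simp
      map_mul' := fun m n => by simp [mul_comm] }
  have hf : ∀ n, f n = (n : ℝ)⁻¹ := fun _ => rfl
  have hsum := (EulerProduct.summable_and_hasSum_factoredNumbers_prod_filter_prime_geometric
    (f := f) (fun {p} hp => by
      rw [hf, norm_inv, Real.norm_natCast]
      exact inv_lt_one_of_one_lt₀ (by exact_mod_cast hp.one_lt)) d.primeFactors).2
  have hprod : ∏ p ∈ d.primeFactors with p.Prime, (1 - f p)⁻¹ =
      ∏ p ∈ d.primeFactors, (1 - (p : ℝ)⁻¹)⁻¹ := by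
    rw [filter_true_of_mem fun p hp => Nat.prime_of_mem_primeFactors hp]
    rfl
  rw [hprod] at hsum
  have hsum' : HasSum (Set.indicator (Nat.factoredNumbers d.primeFactors) f)
      (∏ p ∈ d.primeFactors, (1 - (p : ℝ)⁻¹)⁻¹) := (hasSum_subtype_iff_indicator).1 hsum
  have hd0 : 0 < d := Nat.pos_of_ne_zero hd.ne_zero
  set T' := {n ∈ T | ∏ p ∈ n.primeFactors, p = d} with hT'
  have hdvd : ∀ n ∈ T', d ∣ n := fun n hn => by
    rw [← (mem_filter.1 hn).2]; exact Nat.prod_primeFactors_dvd n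
  have hpf : ∀ n ∈ T', n.primeFactors = d.primeFactors := fun n hn => by
    rw [← (mem_filter.1 hn).2, Nat.primeFactors_prod fun p hp => Nat.prime_of_mem_primeFactors hp]
  have hinj : Set.InjOn (fun n => n / d) (T' : Set ℕ) := by
    intro a ha b hb h
    exact (Nat.div_left_inj (hdvd a ha) (hdvd b hb)).1 h
  have hle := sum_le_hasSum (T'.image fun n => n / d)
    (fun n _ => Set.indicator_nonneg (fun m _ => by rw [hf]; positivity) n) hsum'
  rw [sum_image hinj] at hle
  refine le_trans (le_of_eq ?_) (mul_le_mul_of_nonneg_left hle (by positivity : 0 ≤ (d : ℝ)⁻¹))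
  rw [mul_sum]
  refine sum_congr rfl fun n hn => ?_
  have hn0 : n ≠ 0 := hT n (mem_filter.1 hn).1
  have hnd0 : n / d ≠ 0 :=
    (Nat.div_pos (Nat.le_of_dvd (Nat.pos_of_ne_zero hn0) (hdvd n hn)) hd0).ne'
  rw [Set.indicator_of_mem, hf, ← mul_inv]
  · congr 1
    exact_mod_cast (Nat.mul_div_cancel' (hdvd n hn)).symm
  · refine Nat.mem_factoredNumbers_of_primeFactors_subset hnd0 ?_
    rw [← hpf n hn]
    exact Nat.primeFactors_mono (Nat.div_dvd_of_dvd (hdvd n hn)) hn0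

/-- Grouping the integers `n ≤ z` prime to `q` according to their squarefree kernel bounds the
sum of their reciprocals by `S(z)`. -/
lemma sum_coprime_le_selS (q d N z : ℕ) :
    ∑ n ∈ Icc 1 z with ¬ q ∣ n, (n : ℝ)⁻¹ ≤ selS (apSieve q d N z) z := by
  set T := {n ∈ Icc 1 z | ¬ q ∣ n} with hT
  have hT0 : ∀ n ∈ T, n ≠ 0 := fun n hn => by
    have := (mem_Icc.1 (mem_filter.1 hn).1).1
    omega
  set D := {l ∈ (apSieve q d N z).prodPrimes.divisors | l ≤ z} with hD
  have hmaps : ∀ n ∈ T, (∏ p ∈ n.primeFactors, p) ∈ D := by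
    intro n hn
    have hn1 := mem_filter.1 hn
    have hle := Nat.le_of_dvd (Nat.pos_of_ne_zero (hT0 n hn)) (Nat.prod_primeFactors_dvd n)
    refine mem_filter.2 ⟨Nat.mem_divisors.2 ⟨?_, prodPrimes_ne_zero⟩, hle.trans (mem_Icc.1 hn1.1).2⟩
    change _ ∣ ∏ p ∈ sievePrimes q z, p
    refine prod_dvd_prod_of_subset _ _ _ fun p hp => ?_
    have hpp := Nat.prime_of_mem_primeFactors hp
    have hpn := Nat.dvd_of_mem_primeFactors hp
    refine mem_filter.2 ⟨mem_Icc.2 ⟨hpp.pos, ?_⟩, hpp, ?_⟩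
    · exact (Nat.le_of_dvd (Nat.pos_of_ne_zero (hT0 n hn)) hpn).trans (mem_Icc.1 hn1.1).2
    · rintro rfl
      exact hn1.2 hpn
  rw [← sum_fiberwise_of_maps_to hmaps]
  unfold selS
  refine sum_le_sum fun l hl => ?_
  have hlP := Nat.dvd_of_mem_divisors (mem_filter.1 hl).1
  rw [selbergTerms_apply]
  exact sum_rad_le l (squarefree_of_dvd_prodPrimes hlP) T hT0

/-- Among the `n ≤ z`, the multiples of `q` carry at most a proportion `1 / q ≤ 1 / 2` of the
harmonic sum. -/
lemma half_log_le_selS {q : ℕ} (hq : q.Prime) (d N z : ℕ) :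
    Real.log z / 2 ≤ selS (apSieve q d N z) z := by
  refine le_trans ?_ (sum_coprime_le_selS q d N z)
  have hH : Real.log z ≤ ∑ n ∈ Icc 1 z, (n : ℝ)⁻¹ := by
    rcases Nat.eq_zero_or_pos z with rfl | hz
    · simp
    have := log_add_one_le_harmonic z
    rw [harmonic_eq_sum_Icc] at this
    push_cast at this
    refine le_trans (Real.log_le_log (by exact_mod_cast hz) (by linarith)) this
  have hsplit := sum_filter_add_sum_filter_not (Icc 1 z) (fun n => q ∣ n) (fun n => (n : ℝ)⁻¹)
  have hmult : ∑ n ∈ Icc 1 z with q ∣ n, (n : ℝ)⁻¹ ≤ (1 / 2) * ∑ n ∈ Icc 1 z, (n : ℝ)⁻¹ := by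
    have h1 : ∑ n ∈ Icc 1 z with q ∣ n, (n : ℝ)⁻¹ ≤
        ∑ n ∈ (Icc 1 z).image (fun m => q * m), (n : ℝ)⁻¹ := by
      refine sum_le_sum_of_subset_of_nonneg ?_ fun _ _ _ => by positivity
      intro n hn
      simp only [mem_filter, mem_Icc] at hn
      obtain ⟨m, rfl⟩ := hn.2
      refine mem_image.2 ⟨m, mem_Icc.2 ⟨?_, ?_⟩, rfl⟩
      · rcases Nat.eq_zero_or_pos m with rfl | h
        · simp at hn
        · exact h
      · exact (Nat.le_mul_of_pos_left m hq.pos).trans hn.1.2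
    refine h1.trans ?_
    rw [sum_image fun a _ b _ h => Nat.eq_of_mul_eq_mul_left hq.pos h, mul_sum]
    refine sum_le_sum fun m _ => ?_
    push_cast
    rw [mul_inv]
    gcongr
    rw [one_div]
    exact inv_anti₀ (by norm_num) (by exact_mod_cast hq.two_le)
  linarith

lemma card_prime_ap_le {q k N z : ℕ} (hq : q.Prime) (hz : 2 ≤ z) :
    (#{m ∈ range N | (q ^ k * m + 1).Prime} : ℝ) ≤ 2 * N / Real.log z + 2 * (z : ℝ) ^ 4 := by
  have hlog : 0 < Real.log z := Real.log_pos (by exact_mod_cast hz)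
  have h1 := prime_card_le_siftedSum (k := k) (N := N) (z := z) hq
  have h2 := selberg_bound (apSieve q (q ^ k) N z) (z := z) (by omega)
    (fun l _ => apSieve_nu q (q ^ k) N z l) (fun l hl => apSieve_rem hq hl)
  have h3 := half_log_le_selS hq (q ^ k) N z
  have h4 : (apSieve q (q ^ k) N z).totalMass = N := rfl
  have h5 : (N : ℝ) * (selS (apSieve q (q ^ k) N z) z)⁻¹ ≤ 2 * N / Real.log z := by
    calc (N : ℝ) * (selS (apSieve q (q ^ k) N z) z)⁻¹ ≤ N * (Real.log z / 2)⁻¹ := by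
          gcongr
      _ = _ := by rw [inv_div]; ring
  have h6 : (z : ℝ) ≤ (z : ℝ) ^ 4 := by
    have : (1 : ℝ) ≤ z := by exact_mod_cast (by omega : 1 ≤ z)
    exact le_self_pow₀ this (by norm_num)
  rw [h4] at h2
  linarith

/-- Brun–Titchmarsh type bound, with a constant independent of `q` and `k`, for the number of
primes `q ^ k * m + 1` with `m < 2 ^ j`. -/
lemma card_prime_dyadic {q k : ℕ} (hq : q.Prime) (j : ℕ) :
    (#{m ∈ range (2 ^ j) | (q ^ k * m + 1).Prime} : ℝ) ≤ 100 * 2 ^ j / (j + 1) := by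
  have hj1 : (0 : ℝ) < j + 1 := by positivity
  rw [le_div_iff₀ hj1]
  by_cases hj : j < 8
  · have h1 : (#{m ∈ range (2 ^ j) | (q ^ k * m + 1).Prime} : ℝ) ≤ 2 ^ j := by
      have := card_filter_le (range (2 ^ j)) fun m => (q ^ k * m + 1).Prime
      rw [card_range] at this
      exact_mod_cast this
    have h2 : (j : ℝ) + 1 ≤ 100 := by
      have : (j : ℝ) < 8 := by exact_mod_cast hj
      linarith
    calc _ ≤ (2 : ℝ) ^ j * 100 := by gcongr
      _ = _ := by ring
  -- Sieve to the level `2 ^ i` with `i = j / 8`: the error `2 * (2 ^ i) ^ 4` is then about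
  -- `2 ^ (j / 2)`.
  · obtain ⟨i, r, hr, hi⟩ : ∃ i r, r < 8 ∧ j = 8 * i + r :=
      ⟨j / 8, j % 8, Nat.mod_lt _ (by norm_num), by omega⟩
    have hi1 : 1 ≤ i := by omega
    have h := card_prime_ap_le (k := k) (N := 2 ^ j) (z := 2 ^ i) hq
      (by calc 2 = 2 ^ 1 := rfl
            _ ≤ 2 ^ i := Nat.pow_le_pow_right (by norm_num) hi1)
    push_cast at h
    rw [Real.log_pow] at h
    have hir : (1 : ℝ) ≤ i := by exact_mod_cast hi1
    have hjr : (j : ℝ) + 1 ≤ 8 * i + 8 := by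
      have : (j : ℝ) + 1 ≤ 8 * i + 8 := by exact_mod_cast (by omega : j + 1 ≤ 8 * i + 8)
      exact this
    have hl2 : (0.5 : ℝ) < Real.log 2 := by have := Real.log_two_gt_d9; linarith
    have e1 : 2 * (2 : ℝ) ^ j / (i * Real.log 2) * (j + 1) ≤ 64 * 2 ^ j := by
      rw [div_mul_eq_mul_div, div_le_iff₀ (by positivity)]
      have : (j : ℝ) + 1 ≤ 32 * (i * Real.log 2) := by nlinarith
      calc 2 * (2 : ℝ) ^ j * (j + 1) ≤ 2 * (2 : ℝ) ^ j * (32 * (i * Real.log 2)) := by gcongr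
        _ = _ := by ring
    have e2 : 2 * ((2 : ℝ) ^ i) ^ 4 * (j + 1) ≤ 16 * 2 ^ j := by
      have h1 : (i : ℝ) + 1 ≤ (2 : ℝ) ^ i := by
        have : i + 1 ≤ 2 ^ i := Nat.lt_two_pow_self
        exact_mod_cast this
      have h2 : (1 : ℝ) ≤ 2 ^ i := one_le_pow₀ (by norm_num)
      have h3 : (2 : ℝ) ^ i ≤ ((2 : ℝ) ^ i) ^ 4 := le_self_pow₀ h2 (by norm_num)
      have h4 : ((2 : ℝ) ^ i) ^ 8 ≤ 2 ^ j := by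
        rw [← pow_mul]
        exact pow_le_pow_right₀ (by norm_num) (by omega)
      calc 2 * ((2 : ℝ) ^ i) ^ 4 * (j + 1) ≤ 2 * ((2 : ℝ) ^ i) ^ 4 * (8 * ((2 : ℝ) ^ i) ^ 4) := by
            gcongr; linarith
        _ = 16 * ((2 : ℝ) ^ i) ^ 8 := by ring
        _ ≤ _ := by gcongr
    have hp : (0 : ℝ) < 2 ^ j := by positivity
    calc _ ≤ (2 * (2 : ℝ) ^ j / (i * Real.log 2) + 2 * ((2 : ℝ) ^ i) ^ 4) * (j + 1) := by gcongr
      _ = 2 * (2 : ℝ) ^ j / (i * Real.log 2) * (j + 1) + 2 * ((2 : ℝ) ^ i) ^ 4 * (j + 1) := by ring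
      _ ≤ 100 * 2 ^ j := by linarith

/-! ### Reciprocal sums over primes in progressions -/

lemma sum_inv_dyadic {q k : ℕ} (hq : q.Prime) (J : ℕ) :
    ∑ m ∈ Ico 1 (2 ^ J) with (q ^ k * m + 1).Prime, (m : ℝ)⁻¹ ≤ 200 * Real.log (J + 1) := by
  induction J with
  | zero => simp
  | succ J ih =>
    have hsplit : Ico 1 (2 ^ (J + 1)) = Ico 1 (2 ^ J) ∪ Ico (2 ^ J) (2 ^ (J + 1)) :=
      (Ico_union_Ico_eq_Ico Nat.one_le_two_pow (Nat.pow_le_pow_right (by norm_num) (by omega))).symm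
    rw [hsplit, filter_union]
    have hJ : (0 : ℝ) < J + 1 := by positivity
    -- On `[2 ^ J, 2 ^ (J + 1))` each reciprocal is at most `2 ^ (-J)`, so the block contributes
    -- `O(1 / J)`; summing over the blocks gives a logarithm of the number of blocks.
    have hnew : ∑ m ∈ Ico (2 ^ J) (2 ^ (J + 1)) with (q ^ k * m + 1).Prime, (m : ℝ)⁻¹ ≤
        200 / (J + 2) := by
      calc ∑ m ∈ Ico (2 ^ J) (2 ^ (J + 1)) with (q ^ k * m + 1).Prime, (m : ℝ)⁻¹
          ≤ ∑ m ∈ Ico (2 ^ J) (2 ^ (J + 1)) with (q ^ k * m + 1).Prime, ((2 : ℝ) ^ J)⁻¹ := by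
            refine sum_le_sum fun m hm => ?_
            have := (mem_Ico.1 (mem_filter.1 hm).1).1
            exact inv_anti₀ (by positivity) (by exact_mod_cast this)
        _ = #{m ∈ Ico (2 ^ J) (2 ^ (J + 1)) | (q ^ k * m + 1).Prime} * ((2 : ℝ) ^ J)⁻¹ := by
            rw [sum_const, nsmul_eq_mul]
        _ ≤ #{m ∈ range (2 ^ (J + 1)) | (q ^ k * m + 1).Prime} * ((2 : ℝ) ^ J)⁻¹ := by
            gcongr
            intro m hm
            exact mem_range.2 (mem_Ico.1 hm).2
        _ ≤ (100 * 2 ^ (J + 1) / ((J + 1 : ℕ) + 1)) * ((2 : ℝ) ^ J)⁻¹ := by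
            gcongr
            exact card_prime_dyadic hq (J + 1)
        _ = 200 / (J + 2) := by
            push_cast; rw [pow_succ]; field_simp; ring
    have hlog : 1 / ((J : ℝ) + 2) ≤ Real.log (J + 2) - Real.log (J + 1) := by
      have h1 := Real.one_sub_inv_le_log_of_pos (show 0 < ((J : ℝ) + 2) / (J + 1) by positivity)
      rw [Real.log_div (by positivity) (by positivity), inv_div] at h1
      refine le_trans (le_of_eq ?_) h1
      field_simp; ring
    have hun : ∑ m ∈ ({m ∈ Ico 1 (2 ^ J) | (q ^ k * m + 1).Prime} ∪
        {m ∈ Ico (2 ^ J) (2 ^ (J + 1)) | (q ^ k * m + 1).Prime}), (m : ℝ)⁻¹ ≤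
        (∑ m ∈ Ico 1 (2 ^ J) with (q ^ k * m + 1).Prime, (m : ℝ)⁻¹) +
          ∑ m ∈ Ico (2 ^ J) (2 ^ (J + 1)) with (q ^ k * m + 1).Prime, (m : ℝ)⁻¹ := by
      rw [← sum_union_inter]
      exact le_add_of_nonneg_right (sum_nonneg fun _ _ => by positivity)
    have e : (((J + 1 : ℕ) : ℝ) + 1) = J + 2 := by push_cast; ring
    rw [e]
    have : (200 : ℝ) / (J + 2) = 200 * (1 / (J + 2)) := by ring
    linarith

/-- The primes `r ≤ N` with `r ≡ 1` modulo `d`. -/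
def apPrimes (N d : ℕ) : Finset ℕ := {r ∈ Icc 1 N | r.Prime ∧ d ∣ r - 1}

/-- An explicit quantity of size `O(log log N)`. -/
noncomputable def bigB (N : ℕ) : ℝ := 200 * Real.log (Nat.log 2 N + 2)

lemma one_le_bigB (N : ℕ) : 1 ≤ bigB N := by
  have h1 : Real.log 2 ≤ Real.log (Nat.log 2 N + 2) :=
    Real.log_le_log (by norm_num) (by have : (0:ℝ) ≤ Nat.log 2 N := by positivity
                                      linarith)
  have := Real.log_two_gt_d9
  unfold bigB
  linarith

lemma sum_inv_apPrimes_le {q k : ℕ} (hq : q.Prime) (N : ℕ) :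
    ∑ r ∈ apPrimes N (q ^ k), (r : ℝ)⁻¹ ≤ bigB N / (q : ℝ) ^ k := by
  have hd : 0 < q ^ k := pow_pos hq.pos k
  have hN : N < 2 ^ (Nat.log 2 N + 1) := Nat.lt_pow_succ_log_self (by norm_num) N
  have h := sum_inv_dyadic (k := k) hq (Nat.log 2 N + 1)
  have hB : 200 * Real.log (((Nat.log 2 N + 1 : ℕ) : ℝ) + 1) = bigB N := by
    unfold bigB; push_cast; congr 2; ring
  rw [hB] at h
  set T := {m ∈ Ico 1 (2 ^ (Nat.log 2 N + 1)) | (q ^ k * m + 1).Prime} with hT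
  have hsub : apPrimes N (q ^ k) ⊆ T.image fun m => q ^ k * m + 1 := by
    intro r hr
    simp only [apPrimes, mem_filter, mem_Icc] at hr
    obtain ⟨⟨_, hrN⟩, hrp, m, hm⟩ := hr
    have hr2 := hrp.two_le
    have hrm : q ^ k * m + 1 = r := by omega
    have hm1 : 1 ≤ m := by
      rcases Nat.eq_zero_or_pos m with rfl | h
      · simp at hm; omega
      · exact h
    have : m ≤ q ^ k * m := Nat.le_mul_of_pos_left m hd
    refine mem_image.2 ⟨m, mem_filter.2 ⟨mem_Ico.2 ⟨hm1, by omega⟩, by rwa [hrm]⟩, hrm⟩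
  have hqk : (0 : ℝ) < (q : ℝ) ^ k := by exact_mod_cast hd
  calc ∑ r ∈ apPrimes N (q ^ k), (r : ℝ)⁻¹
      ≤ ∑ r ∈ T.image fun m => q ^ k * m + 1, (r : ℝ)⁻¹ :=
        sum_le_sum_of_subset_of_nonneg hsub fun _ _ _ => by positivity
    _ = ∑ m ∈ T, ((q ^ k * m + 1 : ℕ) : ℝ)⁻¹ :=
        sum_image fun a _ b _ h => Nat.eq_of_mul_eq_mul_left hd (Nat.add_right_cancel h)
    _ ≤ ∑ m ∈ T, ((q : ℝ) ^ k)⁻¹ * (m : ℝ)⁻¹ := by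
        refine sum_le_sum fun m hm => ?_
        have hm1 : (0 : ℝ) < m := by exact_mod_cast (mem_Ico.1 (mem_filter.1 hm).1).1
        rw [← mul_inv]
        refine inv_anti₀ (by positivity) ?_
        push_cast; linarith
    _ ≤ ((q : ℝ) ^ k)⁻¹ * bigB N := by
        rw [← mul_sum]; gcongr
    _ = _ := by ring

/-! ### Prime powers dividing `λ` and its iterate -/

lemma lam_eq {n : ℕ} (hn : n ≠ 0) : lam n = carmichael n := (carmichael_eq_exponent hn).symm

lemma lam_ne_zero {n : ℕ} (hn : n ≠ 0) : lam n ≠ 0 := by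
  have : NeZero n := ⟨hn⟩
  exact Monoid.exponent_ne_zero_of_finite

lemma lam_le {n : ℕ} (hn : n ≠ 0) : lam n ≤ n := by
  rw [lam_eq hn]
  exact (Nat.le_of_dvd (Nat.totient_pos.2 (Nat.pos_of_ne_zero hn))
    (carmichael_dvd_totient n)).trans (Nat.totient_le n)

lemma pow_dvd_lcm_iff {q k : ℕ} (hq : q.Prime) {a b : ℕ} (ha : a ≠ 0) (hb : b ≠ 0)
    (h : q ^ k ∣ a.lcm b) : q ^ k ∣ a ∨ q ^ k ∣ b := by
  rw [hq.pow_dvd_iff_le_factorization (Nat.lcm_ne_zero ha hb), Nat.factorization_lcm ha hb] at h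
  rw [hq.pow_dvd_iff_le_factorization ha, hq.pow_dvd_iff_le_factorization hb]
  simpa using h

lemma pow_dvd_finset_lcm {q k : ℕ} (hq : q.Prime) (hk : 1 ≤ k) (s : Finset ℕ) (f : ℕ → ℕ)
    (hf : ∀ i ∈ s, f i ≠ 0) (h : q ^ k ∣ s.lcm f) : ∃ i ∈ s, q ^ k ∣ f i := by
  induction s using Finset.induction_on with
  | empty =>
    rw [lcm_empty, Nat.dvd_one, Nat.pow_eq_one] at h
    have := hq.one_lt
    omega
  | insert a s ha ih =>
    rw [lcm_insert] at h
    have hs : s.lcm f ≠ 0 := by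
      rw [Ne, Finset.lcm_eq_zero_iff]
      rintro ⟨i, hi, h0⟩
      exact hf i (mem_insert_of_mem hi) h0
    rcases pow_dvd_lcm_iff hq (hf a (mem_insert_self a s)) hs h with h | h
    · exact ⟨a, mem_insert_self a s, h⟩
    · obtain ⟨i, hi, hd⟩ := ih (fun i hi => hf i (mem_insert_of_mem hi)) h
      exact ⟨i, mem_insert_of_mem hi, hd⟩

/-- How a prime power can divide `λ(m)`: it comes either from the `q`-part of `m` or from a prime
`p ∣ m` with `p ≡ 1` modulo `q ^ k`. -/
lemma pow_dvd_lam {q k m : ℕ} (hq : q.Prime) (hk : 1 ≤ k) (hm : m ≠ 0) (h : q ^ k ∣ lam m) :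
    q ^ (k + 1) ∣ m ∨ ∃ p, p.Prime ∧ p ∣ m ∧ q ^ k ∣ p - 1 := by
  have : NeZero m := ⟨hm⟩
  rw [lam_eq hm, carmichael_factorization] at h
  obtain ⟨p, hp, hd⟩ := pow_dvd_finset_lcm hq hk _ _ (fun p hp => by
    have hpp := (Nat.prime_of_mem_primeFactors hp).ne_zero
    rw [← lam_eq (pow_ne_zero _ hpp)]
    exact lam_ne_zero (pow_ne_zero _ hpp)) h
  have hpp := Nat.prime_of_mem_primeFactors hp
  have hpm := Nat.dvd_of_mem_primeFactors hp
  have ha : 0 < m.factorization p := hpp.factorization_pos_of_dvd hm hpm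
  have hd2 := hd.trans (carmichael_dvd_totient _)
  rw [Nat.totient_prime_pow hpp ha] at hd2
  by_cases hpq : p = q
  · subst hpq
    left
    have hcop : (p ^ k).Coprime (p - 1) := by
      refine Nat.Coprime.pow_left k ((Nat.Prime.coprime_iff_not_dvd hpp).2 fun h => ?_)
      have := hpp.two_le
      have := Nat.le_of_dvd (by omega) h
      omega
    have h3 := (Nat.pow_dvd_pow_iff_le_right hpp.one_lt).1 (hcop.dvd_of_dvd_mul_right hd2)
    exact (Nat.pow_dvd_pow p (by omega)).trans (Nat.ordProj_dvd m p)
  · right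
    refine ⟨p, hpp, hpm, ?_⟩
    have hcop : (q ^ k).Coprime (p ^ (m.factorization p - 1)) :=
      Nat.Coprime.pow k _ ((Nat.coprime_primes hq hpp).2 (Ne.symm hpq))
    exact hcop.dvd_of_dvd_mul_left hd2

lemma card_dvd_le (N a : ℕ) : (#{n ∈ Icc 1 N | a ∣ n} : ℝ) ≤ N * (a : ℝ)⁻¹ := by
  have : #{n ∈ Icc 1 N | a ∣ n} = N / a := Nat.Ioc_filter_dvd_card_eq_div N a
  rw [this, ← div_eq_mul_inv]
  exact Nat.cast_div_le

lemma card_biUnion_dvd_le (N : ℕ) (s : Finset ℕ) (f : ℕ → ℕ) :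
    (#(s.biUnion fun r => {n ∈ Icc 1 N | f r ∣ n}) : ℝ) ≤ N * ∑ r ∈ s, (f r : ℝ)⁻¹ := by
  calc (#(s.biUnion fun r => {n ∈ Icc 1 N | f r ∣ n}) : ℝ)
      ≤ ((∑ r ∈ s, #{n ∈ Icc 1 N | f r ∣ n} : ℕ) : ℝ) := by exact_mod_cast card_biUnion_le
    _ ≤ _ := by
        push_cast
        rw [mul_sum]
        exact sum_le_sum fun r _ => card_dvd_le N (f r)

/-- If `q ^ k ∣ λ(λ(n))` then one of four things happens: `q ^ (k + 2) ∣ n`; a prime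
`r ≡ 1` modulo `q ^ (k + 1)` divides `n`; the square of a prime `p ≡ 1` modulo `q ^ k` divides `n`;
or a prime `r ≡ 1` modulo such a `p` divides `n`. Each case concerns at most `N B² / q ^ k` of the
integers `n ≤ N`, where `B = bigB N`. -/
lemma card_pow_dvd_lamlam {q k : ℕ} (hq : q.Prime) (hk : 1 ≤ k) (N : ℕ) :
    (#{n ∈ Icc 1 N | q ^ k ∣ lam (lam n)} : ℝ) ≤ N * (4 * bigB N ^ 2 / (q : ℝ) ^ k) := by
  have hB := one_le_bigB N
  have hq1 : (1 : ℝ) ≤ q := by exact_mod_cast hq.one_lt.le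
  have hqk : (0 : ℝ) < (q : ℝ) ^ k := by positivity
  set A1 := {n ∈ Icc 1 N | q ^ (k + 2) ∣ n} with hA1
  set A2 := (apPrimes N (q ^ (k + 1))).biUnion fun r => {n ∈ Icc 1 N | r ∣ n} with hA2
  set A3 := (apPrimes N (q ^ k)).biUnion fun p => {n ∈ Icc 1 N | p ^ 2 ∣ n} with hA3
  set A4 := (apPrimes N (q ^ k)).biUnion fun p =>
    (apPrimes N p).biUnion fun r => {n ∈ Icc 1 N | r ∣ n} with hA4
  have hsub : {n ∈ Icc 1 N | q ^ k ∣ lam (lam n)} ⊆ A1 ∪ (A2 ∪ (A3 ∪ A4)) := by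
    intro n hn
    obtain ⟨hnI, hdvd⟩ := mem_filter.1 hn
    obtain ⟨hn1, hnN⟩ := mem_Icc.1 hnI
    have hn0 : n ≠ 0 := by omega
    have hmemR : ∀ {r d : ℕ}, r.Prime → r ≤ n → d ∣ r - 1 → r ∈ apPrimes N d :=
      fun {r d} hr hrn hd => mem_filter.2 ⟨mem_Icc.2 ⟨hr.pos, hrn.trans hnN⟩, hr, hd⟩
    simp only [mem_union]
    rcases pow_dvd_lam hq hk (lam_ne_zero hn0) hdvd with h | ⟨p, hp, hpl, hpq⟩
    · rcases pow_dvd_lam hq (by omega) hn0 h with h | ⟨r, hr, hrn, hrq⟩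
      · exact Or.inl (mem_filter.2 ⟨hnI, h⟩)
      · exact Or.inr (Or.inl (mem_biUnion.2 ⟨r, hmemR hr (Nat.le_of_dvd hn1 hrn) hrq,
          mem_filter.2 ⟨hnI, hrn⟩⟩))
    · have hpn : p ≤ n := (Nat.le_of_dvd (Nat.pos_of_ne_zero (lam_ne_zero hn0)) hpl).trans
        (lam_le hn0)
      have hpR := hmemR hp hpn hpq
      rcases pow_dvd_lam hp le_rfl hn0 (by rwa [pow_one]) with h | ⟨r, hr, hrn, hrp⟩
      · exact Or.inr (Or.inr (Or.inl (mem_biUnion.2 ⟨p, hpR, mem_filter.2 ⟨hnI, h⟩⟩)))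
      · rw [pow_one] at hrp
        exact Or.inr (Or.inr (Or.inr (mem_biUnion.2 ⟨p, hpR, mem_biUnion.2
          ⟨r, hmemR hr (Nat.le_of_dvd hn1 hrn) hrp, mem_filter.2 ⟨hnI, hrn⟩⟩⟩)))
  have hcard : (#{n ∈ Icc 1 N | q ^ k ∣ lam (lam n)} : ℝ) ≤ #A1 + (#A2 + (#A3 + #A4)) := by
    have := (card_le_card hsub).trans ((card_union_le _ _).trans (Nat.add_le_add_left
      ((card_union_le _ _).trans (Nat.add_le_add_left (card_union_le _ _) _)) _))
    exact_mod_cast this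
  have hS := sum_inv_apPrimes_le (k := k) hq N
  have hN0 : (0 : ℝ) ≤ N := by positivity
  have h1 : (#A1 : ℝ) ≤ N * (bigB N ^ 2 / (q : ℝ) ^ k) := by
    refine (card_dvd_le N _).trans (mul_le_mul_of_nonneg_left ?_ hN0)
    push_cast
    rw [← one_div]
    refine div_le_div₀ (by positivity) (by nlinarith) hqk (pow_le_pow_right₀ hq1 (by omega))
  have h2 : (#A2 : ℝ) ≤ N * (bigB N ^ 2 / (q : ℝ) ^ k) := by
    refine (card_biUnion_dvd_le N _ fun r => r).trans (mul_le_mul_of_nonneg_left ?_ hN0)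
    refine (sum_inv_apPrimes_le (k := k + 1) hq N).trans ?_
    exact div_le_div₀ (by positivity) (by nlinarith) hqk (pow_le_pow_right₀ hq1 (by omega))
  have h3 : (#A3 : ℝ) ≤ N * (bigB N ^ 2 / (q : ℝ) ^ k) := by
    refine (card_biUnion_dvd_le N _ fun r => r ^ 2).trans (mul_le_mul_of_nonneg_left ?_ hN0)
    calc ∑ r ∈ apPrimes N (q ^ k), ((r ^ 2 : ℕ) : ℝ)⁻¹
        ≤ ∑ r ∈ apPrimes N (q ^ k), (r : ℝ)⁻¹ := by
          refine sum_le_sum fun r hr => ?_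
          have hr1 : (1 : ℝ) ≤ r := by exact_mod_cast (mem_Icc.1 (mem_filter.1 hr).1).1
          push_cast
          exact inv_anti₀ (by linarith) (by nlinarith)
      _ ≤ bigB N / (q : ℝ) ^ k := hS
      _ ≤ _ := by gcongr; nlinarith
  have h4 : (#A4 : ℝ) ≤ N * (bigB N ^ 2 / (q : ℝ) ^ k) := by
    calc (#A4 : ℝ) ≤ ((∑ p ∈ apPrimes N (q ^ k),
          #((apPrimes N p).biUnion fun r => {n ∈ Icc 1 N | r ∣ n}) : ℕ) : ℝ) := by
          exact_mod_cast card_biUnion_le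
      _ ≤ ∑ p ∈ apPrimes N (q ^ k), N * (bigB N * (p : ℝ)⁻¹) := by
          push_cast
          refine sum_le_sum fun p hp => ?_
          refine (card_biUnion_dvd_le N _ fun r => r).trans (mul_le_mul_of_nonneg_left ?_ hN0)
          have := sum_inv_apPrimes_le (k := 1) (mem_filter.1 hp).2.1 N
          rwa [pow_one, pow_one, div_eq_mul_inv] at this
      _ = N * (bigB N * ∑ p ∈ apPrimes N (q ^ k), (p : ℝ)⁻¹) := by
          rw [mul_sum, mul_sum]
      _ ≤ N * (bigB N * (bigB N / (q : ℝ) ^ k)) := by gcongr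
      _ = _ := by ring
  calc _ ≤ _ := hcard
    _ ≤ 4 * (N * (bigB N ^ 2 / (q : ℝ) ^ k)) := by linarith
    _ = _ := by ring

/-! ### The first moment and Markov's inequality -/

/-- With `K = ⌊log_q Q⌋`, count the exponents `i ≤ K` trivially and sum the bound of
`card_pow_dvd_lamlam` over `i > K` as a geometric series, using `q ^ (K + 1) > Q`. -/
lemma sum_factorization_lamlam_le {q : ℕ} (hq : q.Prime) (N Q : ℕ) :
    ∑ n ∈ Icc 1 N, ((lam (lam n)).factorization q : ℝ) ≤
      N * (Nat.log q Q + 8 * bigB N ^ 2 / (Q + 1)) := by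
  have hq2 : (2 : ℝ) ≤ q := by exact_mod_cast hq.two_le
  have hN0 : (0 : ℝ) ≤ N := by positivity
  set K := Nat.log q Q with hK
  -- Any `b > K` with `N < q ^ b` would do as an upper limit for the exponents.
  set b := N + K + 1 with hb
  have hfac : ∀ n ∈ Icc 1 N, (lam (lam n)).factorization q =
      #{i ∈ Ico 1 b | q ^ i ∣ lam (lam n)} := by
    intro n hn
    obtain ⟨hn1, hnN⟩ := mem_Icc.1 hn
    have h0 := lam_ne_zero (show n ≠ 0 by omega)
    refine Nat.factorization_eq_card_pow_dvd_of_lt hq (Nat.pos_of_ne_zero (lam_ne_zero h0)) ?_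
    calc lam (lam n) ≤ lam n := lam_le h0
      _ ≤ n := lam_le (by omega)
      _ ≤ b := by omega
      _ < q ^ b := Nat.lt_pow_self hq.one_lt
  have hswap : ∑ n ∈ Icc 1 N, ((lam (lam n)).factorization q : ℝ) =
      ∑ i ∈ Ico 1 b, (#{n ∈ Icc 1 N | q ^ i ∣ lam (lam n)} : ℝ) := by
    rw [← Nat.cast_sum, ← Nat.cast_sum, sum_congr rfl hfac]
    exact_mod_cast sum_card_bipartiteAbove_eq_sum_card_bipartiteBelow
      (fun n i => q ^ i ∣ lam (lam n))
  rw [hswap, ← sum_Ico_consecutive _ (show 1 ≤ K + 1 by omega) (show K + 1 ≤ b by omega)]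
  have hlow : ∑ i ∈ Ico 1 (K + 1), (#{n ∈ Icc 1 N | q ^ i ∣ lam (lam n)} : ℝ) ≤ N * K := by
    calc _ ≤ ∑ i ∈ Ico 1 (K + 1), (N : ℝ) := by
          refine sum_le_sum fun i _ => ?_
          have := card_filter_le (Icc 1 N) fun n => q ^ i ∣ lam (lam n)
          rw [Nat.card_Icc] at this
          exact_mod_cast this
      _ = N * K := by simp [mul_comm]
  have hQ : (Q : ℝ) + 1 ≤ (q : ℝ) ^ (K + 1) := by
    exact_mod_cast Nat.lt_pow_succ_log_self hq.one_lt Q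
  have hhigh : ∑ i ∈ Ico (K + 1) b, (#{n ∈ Icc 1 N | q ^ i ∣ lam (lam n)} : ℝ) ≤
      N * (8 * bigB N ^ 2 / (Q + 1)) := by
    have hinv : (q : ℝ)⁻¹ ≤ 1 / 2 := by
      rw [← one_div]; exact one_div_le_one_div_of_le (by norm_num) hq2
    calc _ ≤ ∑ i ∈ Ico (K + 1) b, N * (4 * bigB N ^ 2) * ((q : ℝ)⁻¹) ^ i := by
          refine sum_le_sum fun i hi => ?_
          refine (card_pow_dvd_lamlam hq (by have := (mem_Ico.1 hi).1; omega) N).trans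
            (le_of_eq ?_)
          rw [inv_pow]; ring
      _ = N * (4 * bigB N ^ 2) * ∑ i ∈ Ico (K + 1) b, ((q : ℝ)⁻¹) ^ i := by rw [mul_sum]
      _ ≤ N * (4 * bigB N ^ 2) * (2 * ((q : ℝ) ^ (K + 1))⁻¹) := by
          gcongr
          refine (geom_sum_Ico_le_of_lt_one (by positivity) (by linarith)).trans ?_
          rw [inv_pow, div_le_iff₀ (by linarith)]
          have : (0 : ℝ) < ((q : ℝ) ^ (K + 1))⁻¹ := by positivity
          nlinarith
      _ ≤ N * (4 * bigB N ^ 2) * (2 * ((Q : ℝ) + 1)⁻¹) := by gcongr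
      _ = _ := by rw [div_eq_mul_inv]; ring
  linarith

/-- The two parts of `sum_factorization_lamlam_le`, weighted by `log q` and summed over
`q ≤ Q`, give Chebyshev's functions `ψ(Q)` and `θ(Q)`, both `O(Q)`. -/
lemma first_moment_le (N Q : ℕ) :
    ∑ n ∈ Icc 1 N, ∑ q ∈ Nat.primesLE Q, ((lam (lam n)).factorization q : ℝ) * Real.log q ≤
      N * (6 * Q + 16 * bigB N ^ 2) := by
  have hl4 : Real.log 4 ≤ 2 := by
    rw [show (4 : ℝ) = 2 ^ 2 by norm_num, Real.log_pow]
    have := Real.log_two_lt_d9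
    push_cast; linarith
  have hQ0 : (0 : ℝ) ≤ Q := by positivity
  have hpsi : Chebyshev.psi Q ≤ 6 * Q :=
    (Chebyshev.psi_le_const_mul_self hQ0).trans (by gcongr; linarith)
  have htheta : Chebyshev.theta Q ≤ 2 * Q :=
    (Chebyshev.theta_le_log4_mul_x hQ0).trans (by gcongr)
  rw [sum_comm]
  calc _ ≤ ∑ q ∈ Nat.primesLE Q, N * (Nat.log q Q + 8 * bigB N ^ 2 / (Q + 1)) * Real.log q := by
        refine sum_le_sum fun q hq => ?_
        have hqp := Nat.prime_of_mem_primesLE hq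
        rw [← sum_mul]
        exact mul_le_mul_of_nonneg_right (sum_factorization_lamlam_le hqp N Q)
          (Real.log_natCast_nonneg q)
    _ = N * (Chebyshev.psi Q + 8 * bigB N ^ 2 / (Q + 1) * Chebyshev.theta Q) := by
        rw [Chebyshev.psi_eq_sum_mul_log_prime, Chebyshev.theta_eq_sum_primesLE_log, mul_sum,
          ← sum_add_distrib, mul_sum]
        exact sum_congr rfl fun q _ => by ring
    _ ≤ N * (6 * Q + 8 * bigB N ^ 2 / (Q + 1) * (2 * Q)) := by gcongr
    _ ≤ N * (6 * Q + 16 * bigB N ^ 2) := by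
        refine mul_le_mul_of_nonneg_left (add_le_add_right ?_ _) (Nat.cast_nonneg N)
        rw [div_mul_eq_mul_div, div_le_iff₀ (by positivity)]
        nlinarith [sq_nonneg (bigB N)]

/-- `Nat.log 2 ⌊x⌋₊ + 2 ≤ (log x) ^ 4`, whence `bigB ⌊x⌋₊ ≤ 200 * 4 * log log x`. -/
lemma bigB_floor_le {x : ℝ} (hx : Real.exp 2 ≤ x) :
    bigB ⌊x⌋₊ ≤ 800 * Real.log (Real.log x) := by
  have hx0 : 0 < x := (Real.exp_pos 2).trans_le hx
  have hx1 : 1 ≤ x := (Real.one_le_exp (by norm_num)).trans hx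
  have hL : 2 ≤ Real.log x := (Real.le_log_iff_exp_le hx0).2 hx
  have hfl : (⌊x⌋₊ : ℝ) ≤ x := Nat.floor_le hx0.le
  have hfp : 0 < ⌊x⌋₊ := Nat.floor_pos.2 hx1
  have hlog : (Nat.log 2 ⌊x⌋₊ : ℝ) ≤ 2 * Real.log x := by
    have h1 : ((2 : ℝ) ^ Nat.log 2 ⌊x⌋₊) ≤ x :=
      le_trans (by exact_mod_cast Nat.pow_log_le_self 2 hfp.ne') hfl
    have h2 := Real.log_le_log (by positivity) h1
    rw [Real.log_pow] at h2
    have := Real.log_two_gt_d9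
    nlinarith [(Nat.log 2 ⌊x⌋₊).cast_nonneg (α := ℝ)]
  have h3 : (Nat.log 2 ⌊x⌋₊ : ℝ) + 2 ≤ Real.log x ^ 4 := by
    nlinarith [pow_two_nonneg (Real.log x), mul_self_nonneg (Real.log x ^ 2 - 4)]
  have h4 := Real.log_le_log (by positivity) h3
  rw [Real.log_pow] at h4
  unfold bigB
  push_cast at h4
  linarith

lemma finsum_primes_eq {Y : ℝ} (hY : 0 ≤ Y) (f : ℕ → ℝ) :
    ∑ᶠ (q : ℕ) (_ : q.Prime ∧ (q : ℝ) ≤ Y), f q = ∑ q ∈ Nat.primesLE ⌊Y⌋₊, f q := by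
  refine finsum_cond_eq_sum_of_cond_iff f fun {q} _ => ?_
  rw [Nat.mem_primesLE, Nat.le_floor_iff hY, and_comm]

/-- Markov's inequality applied to `first_moment_le` with `Q = ⌊(log log x)²⌋`. -/
lemma card_exceptional_le {x p : ℝ} (hx : Real.exp 2 ≤ x)
    (hy : 1 ≤ Real.log (Real.log x)) (hp : 0 < p) :
    (Set.ncard {n : ℕ | 1 ≤ n ∧ (n : ℝ) ≤ x ∧
        (∑ᶠ (q : ℕ) (_ : q.Prime ∧ (q : ℝ) ≤ (Real.log (Real.log x))^2),
          ((lam (lam n)).factorization q : ℝ) * Real.log q) >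
          p * (Real.log (Real.log x))^2} : ℝ) / x ≤ (6 + 16 * 800 ^ 2) / p := by
  have hx0 : 0 < x := (Real.exp_pos 2).trans_le hx
  have hB := bigB_floor_le hx
  have hB1 := one_le_bigB ⌊x⌋₊
  set y := Real.log (Real.log x)
  set N := ⌊x⌋₊
  set Q := ⌊y ^ 2⌋₊
  set F : ℕ → ℝ := fun n => ∑ q ∈ Nat.primesLE Q,
    ((lam (lam n)).factorization q : ℝ) * Real.log q with hF
  have hy2 : 0 < y ^ 2 := by positivity
  have hset : {n : ℕ | 1 ≤ n ∧ (n : ℝ) ≤ x ∧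
        (∑ᶠ (q : ℕ) (_ : q.Prime ∧ (q : ℝ) ≤ y ^ 2),
          ((lam (lam n)).factorization q : ℝ) * Real.log q) > p * y ^ 2} =
      (({n ∈ Icc 1 N | p * y ^ 2 < F n} : Finset ℕ) : Set ℕ) := by
    ext n
    simp only [Set.mem_ofPred_eq, coe_filter, mem_Icc, hF, finsum_primes_eq hy2.le,
      Nat.le_floor_iff hx0.le, and_assoc, gt_iff_lt, N, Q]
  rw [hset, Set.ncard_coe_finset]
  set S := {n ∈ Icc 1 N | p * y ^ 2 < F n}
  have hF0 : ∀ n, 0 ≤ F n := fun n => sum_nonneg fun q _ =>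
    mul_nonneg (Nat.cast_nonneg _) (Real.log_natCast_nonneg q)
  have hmarkov : (#S : ℝ) * (p * y ^ 2) ≤ ∑ n ∈ Icc 1 N, F n := by
    rw [← nsmul_eq_mul]
    refine (card_nsmul_le_sum S F _ fun n hn => (mem_filter.1 hn).2.le).trans ?_
    exact sum_le_sum_of_subset_of_nonneg (filter_subset _ _) fun n _ _ => hF0 n
  have hbound : (N : ℝ) * (6 * Q + 16 * bigB N ^ 2) ≤ x * ((6 + 16 * 800 ^ 2) * y ^ 2) := by
    have hNx : (N : ℝ) ≤ x := Nat.floor_le hx0.le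
    have hQy : (Q : ℝ) ≤ y ^ 2 := Nat.floor_le hy2.le
    have hBy : bigB N ^ 2 ≤ (800 * y) ^ 2 := by gcongr
    exact mul_le_mul hNx (by nlinarith) (by positivity) hx0.le
  have htot := hmarkov.trans ((first_moment_le N Q).trans hbound)
  rw [div_le_div_iff₀ hx0 hp]
  refine le_of_mul_le_mul_right ?_ hy2
  linarith

end LamLam

/-- For any `ψ` tending to infinity, the number of `n ≤ x` for which the contribution
of the small primes to `λ(λ(n))`, namely
`Σ_{q ≤ (log log x)²} v_q(λ(λ(n))) log q`, exceeds `ψ(x) (log log x)²` is `o(x)`. -/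
theorem small_primes_in_lambda_lambda (ψ : ℝ → ℝ)
    (hψ : Filter.Tendsto ψ Filter.atTop Filter.atTop) :
    Filter.Tendsto (fun x : ℝ =>
      (Set.ncard {n : ℕ | 1 ≤ n ∧ (n : ℝ) ≤ x ∧
        (∑ᶠ (q : ℕ) (_ : q.Prime ∧ (q : ℝ) ≤ (Real.log (Real.log x))^2),
          ((lam (lam n)).factorization q : ℝ) * Real.log q) >
          ψ x * (Real.log (Real.log x))^2} : ℝ) / x)
      Filter.atTop (nhds 0) := by
  refine squeeze_zero' ?_ ?_ (hψ.const_div_atTop (6 + 16 * 800 ^ 2))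
  · filter_upwards [Filter.eventually_ge_atTop 0] with x hx
    positivity
  · have hloglog := Real.tendsto_log_atTop.comp Real.tendsto_log_atTop
    filter_upwards [Filter.eventually_ge_atTop (Real.exp 2),
      hloglog.eventually_ge_atTop 1, hψ.eventually_gt_atTop 0] with x hx hy hp
    exact LamLam.card_exceptional_le hx hy hp
end

section
/- Let ψ : ℝ → ℝ be any function with ψ(x) → ∞ as x → ∞. Then the number of integers n ≤ x such that |Σ_{q prime, q ≤ (log log x)²} v_q(φ(φ(n)))·log q − h_x(n)| > ψ(x)·(log log x)·(log log log x) is o(x) as x → ∞. -/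
/-!
Write `y = log log x`, `N = ⌊x⌋`, and let `L(m) = Σ_{q ≤ y²} v_q(m) log q` be the logarithm of the
`y²`-smooth part of `m`. The proof is a first-moment argument: the mean over `n ≤ N` of
`|L(φ(φ(n))) - h_x(n)|` is `O(y log y)` (`exists_sum_abs_sub_le`), so by Markov's inequality at
most `O(x / ψ(x))` integers violate the bound.

The identity `v_q(φ(m)) = (v_q(m) - 1)⁺ + Σ_{r ∣ m} v_q(r - 1)` applied to `m = φ(n)` shows that
`L(φ(φ(n)))` equals `Σ_{r ∣ φ(n)} L(r - 1)` up to an error of at most `L(φ(n))`. On the other hand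
`h_x(n) = Σ_r c_r L(r - 1)`, where `c_r` is the number of primes `p ∣ n` with `p ≡ 1` modulo `r`,
and a prime `r` divides `φ(n)` only if `r² ∣ n` or `c_r ≥ 1`. Hence (`abs_smoothLog_sub_le`) the
error is at most
`L(φ(n)) + Σ_{r² ∣ n} L(r - 1) + Σ_r (c_r - 1)⁺ L(r - 1)`,
and each of the three terms is averaged over `n`, with `L(r - 1) ≤ log r`.

The first and third averages rest on `Σ_{p ≤ N, p ≡ 1 (d)} 1 / p ≪ (y + log d) / d` for prime powers `d`
(`recipSum_prime_pow_le`), which follows from a Brun–Titchmarsh inequality on dyadic blocks, itself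
an instance of Selberg's sieve (`selberg_sieve`). The first average is then
`≪ y Σ_{q ≤ y²} log q / q ≪ y log y` by Mertens. The second is bounded by a convergent series. In
the third, primes `r ≤ y²` are handled with `(c_r - 1)⁺ ≤ c_r`, again giving
`y Σ_{r ≤ y²} log r / r`, and primes `r > y²` with `(c_r - 1)⁺ ≤ c_r (c_r - 1)`, giving
`Σ_{r > y²} log r (y log r / r)² ≪ y`.
-/

/-- The additive function `h_x(n) = Σ_{p ∣ n} Σ_{r ∣ p−1} Σ_{q ≤ (log log x)²}
v_q(r−1) log q`, where `p`, `r`, `q` range over primes. -/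
noncomputable def hAux (x : ℝ) (n : ℕ) : ℝ :=
  ∑ p ∈ n.primeFactors, ∑ r ∈ (p - 1).primeFactors,
    ∑ᶠ (q : ℕ) (_ : q.Prime ∧ (q : ℝ) ≤ (Real.log (Real.log x))^2),
      ((r - 1).factorization q : ℝ) * Real.log q


section

open Finset

/-! ### Selberg's upper bound sieve -/

/-- Selberg's weights `λ_l` for the finite set of sieving moduli `E`, in closed form:
`λ_l = l · Σ_{f ∈ E, l ∣ f} μ(f / l) μ(f) / (φ(f) G)` with `G = Σ_{e ∈ E} 1 / φ(e)`. They
diagonalise the quadratic form `Σ λ_a λ_b / lcm(a, b)` and minimise it subject to `λ_1 = 1`. -/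
noncomputable def selbergWeight (E : Finset ℕ) (l : ℕ) : ℝ :=
  l * ∑ f ∈ E with l ∣ f,
    (ArithmeticFunction.moebius (f / l) : ℝ) *
      ((ArithmeticFunction.moebius f : ℝ) / (Nat.totient f * ∑ e ∈ E, (1 : ℝ) / Nat.totient e))

/-- Möbius inversion inside a divisor-closed set, along multiples. -/
lemma sum_moebius_between {E : Finset ℕ} (hE0 : ∀ e ∈ E, e ≠ 0)
    (hdiv : ∀ e ∈ E, ∀ l, l ∣ e → l ∈ E) {e f : ℕ} (he : e ∈ E) (hf : f ∈ E) :
    ∑ l ∈ E with e ∣ l ∧ l ∣ f, (ArithmeticFunction.moebius (f / l) : ℝ) =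
      if f = e then 1 else 0 := by
  by_cases hef : e ∣ f
  · obtain ⟨m, rfl⟩ := hef
    have he0 : 0 < e := Nat.pos_of_ne_zero (hE0 e he)
    have hm0 : m ≠ 0 := fun h => hE0 _ hf (by simp [h])
    have h1 : (E.filter fun l => e ∣ l ∧ l ∣ e * m) = m.divisors.image (e * ·) := by
      ext l
      simp only [mem_filter, mem_image, Nat.mem_divisors]
      constructor
      · rintro ⟨_, ⟨t, rfl⟩, h⟩
        exact ⟨t, ⟨(Nat.mul_dvd_mul_iff_left he0).1 h, hm0⟩, rfl⟩
      · rintro ⟨t, ⟨ht, _⟩, rfl⟩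
        have := Nat.mul_dvd_mul_left e ht
        exact ⟨hdiv _ hf _ this, dvd_mul_right _ _, this⟩
    rw [h1, sum_image (fun a _ b _ h => Nat.eq_of_mul_eq_mul_left he0 h)]
    simp only [Nat.mul_div_mul_left _ _ he0]
    rw [Nat.sum_div_divisors m (fun t => (ArithmeticFunction.moebius t : ℝ))]
    have := congrArg (fun g : ArithmeticFunction ℤ => g m)
      ArithmeticFunction.coe_zeta_mul_moebius
    simp only [ArithmeticFunction.coe_zeta_mul_apply, ArithmeticFunction.one_apply] at this
    have h2 : (∑ t ∈ m.divisors, (ArithmeticFunction.moebius t : ℝ)) =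
        ((if m = 1 then 1 else 0 : ℤ) : ℝ) := by rw [← this]; push_cast; rfl
    rw [h2]
    have : (e * m = e) ↔ m = 1 := by
      constructor
      · intro h; exact Nat.eq_of_mul_eq_mul_left he0 (by simpa using h)
      · rintro rfl; simp
    simp [this]
  · have : (E.filter fun l => e ∣ l ∧ l ∣ f) = ∅ := by
      apply filter_eq_empty_iff.2
      rintro l _ ⟨h1, h2⟩
      exact hef (h1.trans h2)
    rw [this, if_neg]
    · simp
    · rintro rfl; exact hef dvd_rfl

/-- Inverting the definition of the weights: these sums are the diagonal coordinates of the
Selberg quadratic form. -/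
lemma sum_selbergWeight_div {E : Finset ℕ} (hE0 : ∀ e ∈ E, e ≠ 0)
    (hdiv : ∀ e ∈ E, ∀ l, l ∣ e → l ∈ E) {e : ℕ} (he : e ∈ E) :
    ∑ l ∈ E with e ∣ l, selbergWeight E l / l =
      (ArithmeticFunction.moebius e : ℝ) / (Nat.totient e * ∑ e ∈ E, (1 : ℝ) / Nat.totient e) := by
  set y : ℕ → ℝ := fun f => (ArithmeticFunction.moebius f : ℝ) /
    (Nat.totient f * ∑ e ∈ E, (1 : ℝ) / Nat.totient e) with hy
  have h1 : ∀ l ∈ E.filter (e ∣ ·), selbergWeight E l / l =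
      ∑ f ∈ E with l ∣ f, (ArithmeticFunction.moebius (f / l) : ℝ) * y f := by
    intro l hl
    have : (l : ℝ) ≠ 0 := by exact_mod_cast hE0 l (mem_filter.1 hl).1
    rw [selbergWeight, mul_div_assoc, mul_comm, div_mul_cancel₀ _ this]
  rw [sum_congr rfl h1]
  simp_rw [sum_filter]
  have h2 : ∑ a ∈ E, (if e ∣ a then ∑ a_1 ∈ E, if a ∣ a_1 then
      (ArithmeticFunction.moebius (a_1 / a) : ℝ) * y a_1 else 0 else 0) =
      ∑ f ∈ E, y f * ∑ l ∈ E with e ∣ l ∧ l ∣ f, (ArithmeticFunction.moebius (f / l) : ℝ) := by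
    simp_rw [mul_sum, sum_filter]
    conv_rhs => rw [sum_comm]
    refine sum_congr rfl fun l _ => ?_
    by_cases h : e ∣ l
    · simp only [h, true_and, if_true]
      exact sum_congr rfl fun f _ => by split_ifs <;> ring
    · simp [h]
  rw [h2, sum_congr rfl (fun f hf => by rw [sum_moebius_between hE0 hdiv he hf])]
  simp [he, hy]

/-- The value of the Selberg quadratic form. It is diagonalised by writing
`1 / lcm(a, b) = gcd(a, b) / (a b)` and `gcd(a, b) = Σ_{e ∣ a, e ∣ b} φ(e)`. -/
lemma sum_selbergWeight_lcm {E : Finset ℕ} (hE0 : ∀ e ∈ E, e ≠ 0)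
    (hsq : ∀ e ∈ E, Squarefree e) (hne : E.Nonempty)
    (hdiv : ∀ e ∈ E, ∀ l, l ∣ e → l ∈ E) :
    ∑ a ∈ E, ∑ b ∈ E, selbergWeight E a * selbergWeight E b / (a.lcm b : ℝ) =
      1 / ∑ e ∈ E, (1 : ℝ) / Nat.totient e := by
  set G := ∑ e ∈ E, (1 : ℝ) / Nat.totient e with hG
  have hGpos : 0 < G := sum_pos (fun e he => by
    have := Nat.totient_pos.2 (Nat.pos_of_ne_zero (hE0 e he)); positivity) hne
  have h1 : ∀ a ∈ E, ∀ b ∈ E, selbergWeight E a * selbergWeight E b / (a.lcm b : ℝ) =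
      ∑ e ∈ E, (Nat.totient e : ℝ) * ((if e ∣ a then selbergWeight E a / a else 0) *
        (if e ∣ b then selbergWeight E b / b else 0)) := by
    intro a ha b hb
    have ha0 : (a : ℝ) ≠ 0 := by exact_mod_cast hE0 a ha
    have hb0 : (b : ℝ) ≠ 0 := by exact_mod_cast hE0 b hb
    have hl0 : (a.lcm b : ℝ) ≠ 0 := by
      exact_mod_cast Nat.lcm_ne_zero (hE0 a ha) (hE0 b hb)
    have hgl : (a.gcd b : ℝ) * a.lcm b = a * b := by exact_mod_cast Nat.gcd_mul_lcm a b
    have hg : (a.gcd b : ℝ) = ∑ e ∈ E, if e ∣ a ∧ e ∣ b then (Nat.totient e : ℝ) else 0 := by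
      rw [← sum_filter]
      have : (E.filter fun e => e ∣ a ∧ e ∣ b) = (a.gcd b).divisors := by
        ext e
        simp only [mem_filter, Nat.mem_divisors, Nat.dvd_gcd_iff]
        constructor
        · rintro ⟨_, h⟩; exact ⟨h, Nat.gcd_ne_zero_left (hE0 a ha)⟩
        · rintro ⟨h, _⟩; exact ⟨hdiv a ha e h.1, h⟩
      rw [this]
      exact_mod_cast (Nat.sum_totient (a.gcd b)).symm
    have : selbergWeight E a * selbergWeight E b / (a.lcm b : ℝ) =
        (a.gcd b : ℝ) * (selbergWeight E a / a * (selbergWeight E b / b)) := by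
      field_simp
      linear_combination (- selbergWeight E a * selbergWeight E b) * hgl
    rw [this, hg, sum_mul]
    refine sum_congr rfl fun e _ => ?_
    by_cases h1 : e ∣ a <;> by_cases h2 : e ∣ b <;> simp [h1, h2]
  rw [sum_congr rfl fun a ha => sum_congr rfl fun b hb => h1 a ha b hb]
  have h3 : ∑ a ∈ E, ∑ b ∈ E, ∑ e ∈ E, (Nat.totient e : ℝ) *
      ((if e ∣ a then selbergWeight E a / a else 0) *
        (if e ∣ b then selbergWeight E b / b else 0)) =
      ∑ e ∈ E, (Nat.totient e : ℝ) * (∑ l ∈ E with e ∣ l, selbergWeight E l / l) ^ 2 := by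
    simp_rw [sum_filter, pow_two, sum_mul_sum, mul_sum]
    rw [sum_comm' (t' := E) (s' := fun _ => E) (by tauto)]
    conv_rhs => rw [sum_comm]
    rw [sum_comm]
    refine sum_congr rfl fun a _ => ?_
    rw [sum_comm]
  rw [h3]
  have h4 : ∀ e ∈ E, (Nat.totient e : ℝ) * (∑ l ∈ E with e ∣ l, selbergWeight E l / l) ^ 2 =
      (1 / Nat.totient e) * (1 / G ^ 2) := by
    intro e he
    have hp := Nat.totient_pos.2 (Nat.pos_of_ne_zero (hE0 e he))
    have hp' : (Nat.totient e : ℝ) ≠ 0 := by positivity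
    rw [sum_selbergWeight_div hE0 hdiv he, ← hG]
    have hm : ((ArithmeticFunction.moebius e : ℤ) : ℝ) ^ 2 = 1 := by
      have := ArithmeticFunction.moebius_sq_eq_one_of_squarefree (hsq e he)
      exact_mod_cast this
    rw [div_pow, hm]
    field_simp
  rw [sum_congr rfl h4, ← sum_mul, ← hG]
  field_simp

lemma selbergWeight_one {E : Finset ℕ} (hE0 : ∀ e ∈ E, e ≠ 0)
    (hsq : ∀ e ∈ E, Squarefree e) (hne : E.Nonempty) : selbergWeight E 1 = 1 := by
  set G := ∑ e ∈ E, (1 : ℝ) / Nat.totient e with hG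
  have hGpos : 0 < G := sum_pos (fun e he => by
    have := Nat.totient_pos.2 (Nat.pos_of_ne_zero (hE0 e he)); positivity) hne
  have h : ∀ e ∈ E, (ArithmeticFunction.moebius e : ℝ) *
      ((ArithmeticFunction.moebius e : ℝ) / (Nat.totient e * G)) = 1 / Nat.totient e * (1 / G) := by
    intro e he
    have hp := Nat.totient_pos.2 (Nat.pos_of_ne_zero (hE0 e he))
    have hm : ((ArithmeticFunction.moebius e : ℤ) : ℝ) ^ 2 = 1 := by
      have := ArithmeticFunction.moebius_sq_eq_one_of_squarefree (hsq e he)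
      exact_mod_cast this
    rw [← mul_div_assoc, ← pow_two, hm]
    field_simp
  rw [selbergWeight, ← hG]
  simp only [one_dvd, filter_true, Nat.div_one, Nat.cast_one, one_mul]
  rw [sum_congr rfl h, ← sum_mul, ← hG]
  field_simp

/-- A crude bound (the true one is `|λ_l| ≤ 1`); it suffices because the sieving level used
below is a small power of the length of the sieved interval. -/
lemma abs_selbergWeight_le {E : Finset ℕ} (hE0 : ∀ e ∈ E, e ≠ 0) (hne : E.Nonempty) (l : ℕ) :
    |selbergWeight E l| ≤ l := by
  set G := ∑ e ∈ E, (1 : ℝ) / Nat.totient e with hG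
  have hGpos : 0 < G := sum_pos (fun e he => by
    have := Nat.totient_pos.2 (Nat.pos_of_ne_zero (hE0 e he)); positivity) hne
  have hmu : ∀ n : ℕ, |(ArithmeticFunction.moebius n : ℝ)| ≤ 1 := fun n => by
    exact_mod_cast ArithmeticFunction.abs_moebius_le_one
  have key : |∑ f ∈ E with l ∣ f, (ArithmeticFunction.moebius (f / l) : ℝ) *
      ((ArithmeticFunction.moebius f : ℝ) / (Nat.totient f * G))| ≤ 1 := by
    calc _ ≤ ∑ f ∈ E with l ∣ f, |(ArithmeticFunction.moebius (f / l) : ℝ) *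
      ((ArithmeticFunction.moebius f : ℝ) / (Nat.totient f * G))| := abs_sum_le_sum_abs _ _
      _ ≤ ∑ f ∈ E with l ∣ f, 1 / (Nat.totient f : ℝ) * (1 / G) := by
        refine sum_le_sum fun f hf => ?_
        have hp := Nat.totient_pos.2 (Nat.pos_of_ne_zero (hE0 f (mem_filter.1 hf).1))
        rw [abs_mul, abs_div, abs_of_pos (by positivity : 0 < (Nat.totient f : ℝ) * G)]
        calc _ ≤ 1 * (1 / ((Nat.totient f : ℝ) * G)) := by
              gcongr
              · exact hmu _
              · exact hmu _
          _ = _ := by field_simp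
      _ ≤ ∑ f ∈ E, 1 / (Nat.totient f : ℝ) * (1 / G) :=
        sum_le_sum_of_subset_of_nonneg (filter_subset _ _) fun _ _ _ => by positivity
      _ = 1 := by rw [← sum_mul, ← hG]; field_simp
  rw [selbergWeight, ← hG, abs_mul, Nat.abs_cast]
  exact mul_le_of_le_one_right (Nat.cast_nonneg l) key

/-- Selberg's upper bound sieve: if every `lcm(a, b)` with `a, b ∈ E` divides `X / lcm(a, b)`
elements of `A` up to an error of at most `1`, then the elements of `A` free of divisors in
`E` other than `1` number at most `X / G` plus an error term. -/
lemma selberg_sieve {E A B : Finset ℕ} (hE0 : ∀ e ∈ E, e ≠ 0)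
    (hsq : ∀ e ∈ E, Squarefree e) (h1 : 1 ∈ E)
    (hdiv : ∀ e ∈ E, ∀ l, l ∣ e → l ∈ E) (X : ℝ)
    (hA : ∀ a ∈ E, ∀ b ∈ E, |(#{m ∈ A | a.lcm b ∣ m} : ℝ) - X / (a.lcm b : ℝ)| ≤ 1)
    (hBA : B ⊆ A) (hB : ∀ m ∈ B, ∀ l ∈ E, l ∣ m → l = 1) :
    (#B : ℝ) ≤ X / (∑ e ∈ E, (1 : ℝ) / Nat.totient e) + (∑ e ∈ E, (e : ℝ)) ^ 2 := by
  have hne : E.Nonempty := ⟨1, h1⟩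
  -- The sieve inequality `1_B(m) ≤ (Σ_{l ∣ m} λ_l)²`.
  have s1 : (#B : ℝ) ≤ ∑ m ∈ A, (∑ l ∈ E with l ∣ m, selbergWeight E l) ^ 2 := by
    calc (#B : ℝ) = ∑ m ∈ B, (∑ l ∈ E with l ∣ m, selbergWeight E l) ^ 2 := by
          rw [card_eq_sum_ones, Nat.cast_sum]
          refine sum_congr rfl fun m hm => ?_
          have : (E.filter fun l => l ∣ m) = {1} := by
            ext l
            simp only [mem_filter, mem_singleton]
            constructor
            · rintro ⟨h, h'⟩; exact hB m hm l h h'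
            · rintro rfl; exact ⟨h1, one_dvd _⟩
          rw [this, sum_singleton, selbergWeight_one hE0 hsq hne]; simp
      _ ≤ _ := sum_le_sum_of_subset_of_nonneg hBA fun _ _ _ => sq_nonneg _
  have s2 : ∑ m ∈ A, (∑ l ∈ E with l ∣ m, selbergWeight E l) ^ 2 =
      ∑ a ∈ E, ∑ b ∈ E, selbergWeight E a * selbergWeight E b * #{m ∈ A | a.lcm b ∣ m} := by
    simp_rw [pow_two, sum_filter, sum_mul_sum]
    rw [sum_comm]
    refine sum_congr rfl fun a _ => ?_
    rw [sum_comm]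
    refine sum_congr rfl fun b _ => ?_
    rw [card_eq_sum_ones, Nat.cast_sum, mul_sum, sum_filter]
    refine sum_congr rfl fun m _ => ?_
    simp only [Nat.lcm_dvd_iff]
    by_cases h1 : a ∣ m <;> by_cases h2 : b ∣ m <;> simp [h1, h2]
  have s3 : ∑ a ∈ E, ∑ b ∈ E, selbergWeight E a * selbergWeight E b * #{m ∈ A | a.lcm b ∣ m} ≤
      ∑ a ∈ E, ∑ b ∈ E, (X * (selbergWeight E a * selbergWeight E b / (a.lcm b : ℝ)) + a * b) := by
    refine sum_le_sum fun a ha => sum_le_sum fun b hb => ?_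
    have h := hA a ha b hb
    have hab : |selbergWeight E a * selbergWeight E b *
        ((#{m ∈ A | a.lcm b ∣ m} : ℝ) - X / (a.lcm b : ℝ))| ≤ a * b := by
      rw [abs_mul, abs_mul]
      calc _ ≤ (a : ℝ) * b * 1 := by
            gcongr
            · exact abs_selbergWeight_le hE0 hne a
            · exact abs_selbergWeight_le hE0 hne b
        _ = _ := mul_one _
    have := (abs_le.1 hab).2
    have e : X * (selbergWeight E a * selbergWeight E b / (a.lcm b : ℝ)) =
      selbergWeight E a * selbergWeight E b * (X / (a.lcm b : ℝ)) := by ring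
    rw [e]; linarith [mul_sub (selbergWeight E a * selbergWeight E b)
      (#{m ∈ A | a.lcm b ∣ m} : ℝ) (X / (a.lcm b : ℝ))]
  refine s1.trans (s2.le.trans (s3.trans (le_of_eq ?_)))
  simp_rw [sum_add_distrib, ← mul_sum]
  rw [sum_selbergWeight_lcm hE0 hsq hne hdiv, pow_two, sum_mul]
  simp [div_eq_mul_inv, mul_sum]

/-! ### Primes congruent to one modulo a prime power -/

lemma abs_card_modEq_sub_le (T r v : ℕ) (hr : 0 < r) :
    |(#{m ∈ range T | m ≡ v [MOD r]} : ℝ) - T / r| ≤ 1 := by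
  rw [← Nat.count_eq_card_filter_range, Nat.count_modEq_card _ hr]
  have h1 : ((T / r : ℕ) : ℝ) ≤ (T : ℝ) / r := Nat.cast_div_le
  have h2 : (T : ℝ) / r < (T / r : ℕ) + 1 := by
    rw [div_lt_iff₀ (by exact_mod_cast hr)]
    have := Nat.lt_mul_div_succ T hr
    have h3 : T < (T / r + 1) * r := by linarith
    exact_mod_cast h3
  split_ifs <;> push_cast <;> rw [abs_le] <;> constructor <;> linarith

/-- By the Chinese remainder theorem, the multiples of `L` that are `1` modulo `d` form a single
residue class modulo `L d`. -/
lemma abs_card_dvd_modEq_sub_le (T d L : ℕ) (hd : 0 < d) (hL : 0 < L) (h : L.Coprime d) :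
    |(#{m ∈ {m ∈ range T | m ≡ 1 [MOD d]} | L ∣ m} : ℝ) - (T / d : ℝ) / L| ≤ 1 := by
  obtain ⟨c, hc1, hc2⟩ := Nat.chineseRemainder h 0 1
  have : {m ∈ {m ∈ range T | m ≡ 1 [MOD d]} | L ∣ m} = {m ∈ range T | m ≡ c [MOD (L * d)]} := by
    ext m
    simp only [mem_filter, and_assoc]
    rw [← Nat.modEq_and_modEq_iff_modEq_mul h, ← Nat.modEq_zero_iff_dvd]
    constructor
    · rintro ⟨h1, h2, h3⟩; exact ⟨h1, h3.trans hc1.symm, h2.trans hc2.symm⟩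
    · rintro ⟨h1, h2, h3⟩; exact ⟨h1, h3.trans hc2, h2.trans hc1⟩
  rw [this, div_div]
  have := abs_card_modEq_sub_le T (L * d) c (Nat.mul_pos hL hd)
  push_cast at this
  rwa [mul_comm (d : ℝ)]

/-- The sieving moduli: squarefree `e ≤ z` not divisible by `q`. Leaving out the multiples of
`q` makes the moduli coprime to the modulus `q ^ k` of the progression being sieved. -/
def sieveRange (z q : ℕ) : Finset ℕ := {e ∈ Icc 1 z | Squarefree e ∧ ¬ q ∣ e}

/-- Lower bound for the Selberg denominator `G`. Every `n ≤ z` is `e q^ε b²` with `e` in the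
sieving range, `ε ∈ {0, 1}` and `b ≤ z`, so the harmonic sum up to `z` is at most
`G (1 + 1/q) Σ 1/b² ≤ 3 G`. -/
lemma log_le_sum_sieveRange (z q : ℕ) (hq : q.Prime) :
    Real.log (z + 1) / 3 ≤ ∑ e ∈ sieveRange z q, (1 : ℝ) / Nat.totient e := by
  have hq2 : (2 : ℝ) ≤ q := by exact_mod_cast hq.two_le
  have hsq : ∑ b ∈ Icc 1 z, (1 : ℝ) / (b : ℝ) ^ 2 ≤ 2 := by
    have := sum_Ioo_inv_sq_le (α := ℝ) 0 (z + 1)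
    have e : Ioo 0 (z + 1) = Icc 1 z := by ext; simp; omega
    rw [e] at this
    simpa using this
  have hsub : Icc 1 z ⊆ ((sieveRange z q ×ˢ range 2) ×ˢ Icc 1 z).image
      (fun t => t.1.1 * q ^ t.1.2 * t.2 ^ 2) := by
    intro n hn
    obtain ⟨hn1, hnz⟩ := mem_Icc.1 hn
    obtain ⟨a, b, ha, hb, hab, hsqf⟩ := Nat.sq_mul_squarefree_of_pos hn1
    have haz : a ≤ z := (Nat.le_of_dvd hn1 ⟨b ^ 2, by rw [← hab]; ring⟩).trans hnz
    have hbz : b ≤ z := (Nat.le_of_dvd hn1 ⟨b * a, by rw [← hab]; ring⟩).trans hnz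
    simp only [mem_image, mem_product, mem_range, Prod.exists, sieveRange, mem_filter, mem_Icc]
    by_cases hqa : q ∣ a
    · obtain ⟨e, rfl⟩ := hqa
      have he0 : 0 < e := Nat.pos_of_mul_pos_left ha
      refine ⟨e, 1, b, ⟨⟨⟨⟨he0, ?_⟩, ?_, ?_⟩, by norm_num⟩, hb, hbz⟩, ?_⟩
      · exact (Nat.le_mul_of_pos_left e hq.pos).trans haz
      · exact hsqf.squarefree_of_dvd (dvd_mul_left _ _)
      · intro h
        have := hsqf q (Nat.mul_dvd_mul_left q h)
        exact hq.one_lt.ne' (Nat.isUnit_iff.1 this)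
      · rw [← hab]; ring
    · exact ⟨a, 0, b, ⟨⟨⟨⟨ha, haz⟩, hsqf, hqa⟩, by norm_num⟩, hb, hbz⟩, by rw [← hab]; ring⟩
  have h1 : Real.log (z + 1) ≤ ∑ n ∈ Icc 1 z, (1 : ℝ) / n := by
    have := log_add_one_le_harmonic z
    rw [harmonic_eq_sum_Icc] at this
    push_cast at this
    simpa using this
  have h2 : ∑ n ∈ Icc 1 z, (1 : ℝ) / n ≤ ∑ t ∈ (sieveRange z q ×ˢ range 2) ×ˢ Icc 1 z,
      (1 : ℝ) / ((t.1.1 * q ^ t.1.2 * t.2 ^ 2 : ℕ) : ℝ) := by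
    refine (sum_le_sum_of_subset_of_nonneg hsub fun _ _ _ => by positivity).trans ?_
    exact sum_image_le_of_nonneg (g := fun t : (ℕ × ℕ) × ℕ => t.1.1 * q ^ t.1.2 * t.2 ^ 2)
      (f := fun n : ℕ => (1 : ℝ) / n) (fun _ _ => by positivity)
  have h3 : ∑ t ∈ (sieveRange z q ×ˢ range 2) ×ˢ Icc 1 z,
      (1 : ℝ) / ((t.1.1 * q ^ t.1.2 * t.2 ^ 2 : ℕ) : ℝ) =
      (∑ e ∈ sieveRange z q, (1 : ℝ) / e) * (1 + 1 / q) * ∑ b ∈ Icc 1 z, (1 : ℝ) / (b : ℝ) ^ 2 := by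
    have : (1 + 1 / (q : ℝ)) = ∑ i ∈ range 2, (1 : ℝ) / (q : ℝ) ^ i := by simp [sum_range_succ]
    rw [this, sum_mul_sum, ← sum_product', sum_mul_sum, ← sum_product']
    refine sum_congr rfl fun t _ => ?_
    push_cast
    field_simp
  have h4 : ∑ e ∈ sieveRange z q, (1 : ℝ) / e ≤ ∑ e ∈ sieveRange z q, (1 : ℝ) / Nat.totient e := by
    refine sum_le_sum fun e he => ?_
    have he0 : 0 < e := (mem_Icc.1 (mem_filter.1 he).1).1
    have := Nat.totient_pos.2 he0
    have := Nat.totient_le e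
    gcongr
  have h5 : (1 + 1 / (q : ℝ)) ≤ 3 / 2 := by
    have : 1 / (q : ℝ) ≤ 1 / 2 := by gcongr
    linarith
  have h0 : 0 ≤ ∑ e ∈ sieveRange z q, (1 : ℝ) / e := sum_nonneg fun _ _ => by positivity
  have h6 : (∑ e ∈ sieveRange z q, (1 : ℝ) / e) * (1 + 1 / q) * ∑ b ∈ Icc 1 z, (1 : ℝ) / (b : ℝ) ^ 2
      ≤ (∑ e ∈ sieveRange z q, (1 : ℝ) / e) * (3 / 2) * 2 := by gcongr
  linarith

/-- A Brun–Titchmarsh inequality for the residue class `1` modulo a prime power, with a free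
sieving level `z`. -/
lemma card_primes_modEq_one_le (T z q k : ℕ) (hq : q.Prime) (hz : 1 ≤ z) :
    (#{p ∈ range T | p.Prime ∧ z < p ∧ p ≡ 1 [MOD q ^ k]} : ℝ) ≤
      3 * T / ((q : ℝ) ^ k * Real.log (z + 1)) + (z : ℝ) ^ 4 := by
  have hE0 : ∀ e ∈ sieveRange z q, e ≠ 0 := fun e he => by
    have := (mem_Icc.1 (mem_filter.1 he).1).1; omega
  have hdk : 0 < q ^ k := pow_pos hq.pos k
  have key := selberg_sieve (E := sieveRange z q) (A := {m ∈ range T | m ≡ 1 [MOD q ^ k]})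
    (B := {p ∈ range T | p.Prime ∧ z < p ∧ p ≡ 1 [MOD q ^ k]}) hE0
    (fun e he => (mem_filter.1 he).2.1)
    (by simp [sieveRange, hz, hq.one_lt.ne'])
    (fun e he l hl => by
      obtain ⟨h1, h2, h3⟩ := mem_filter.1 he
      rw [mem_Icc] at h1
      refine mem_filter.2 ⟨mem_Icc.2 ⟨Nat.pos_of_dvd_of_pos hl h1.1,
        (Nat.le_of_dvd h1.1 hl).trans h1.2⟩, h2.squarefree_of_dvd hl, fun h => h3 (h.trans hl)⟩)
    ((T : ℝ) / (q ^ k : ℕ))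
    (fun a ha b hb => by
      refine abs_card_dvd_modEq_sub_le T (q ^ k) (a.lcm b) hdk
        (Nat.pos_of_ne_zero (Nat.lcm_ne_zero (hE0 a ha) (hE0 b hb))) ?_
      refine Nat.Coprime.pow_right k ?_
      rw [Nat.coprime_comm, Nat.Prime.coprime_iff_not_dvd hq]
      intro h
      rcases (Nat.Prime.dvd_lcm hq).1 h with h | h
      · exact (mem_filter.1 ha).2.2 h
      · exact (mem_filter.1 hb).2.2 h)
    (fun p hp => by
      simp only [mem_filter] at hp ⊢
      exact ⟨hp.1, hp.2.2.2⟩)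
    (fun p hp l hl hlp => by
      simp only [mem_filter] at hp
      rcases (Nat.dvd_prime hp.2.1).1 hlp with h | h
      · exact h
      · have := (mem_Icc.1 (mem_filter.1 hl).1).2
        omega)
  have hG := log_le_sum_sieveRange z q hq
  have hlog : 0 < Real.log (z + 1) := Real.log_pos (by
    have : (1 : ℝ) ≤ z := by exact_mod_cast hz
    linarith)
  have h1 : ∑ e ∈ sieveRange z q, (e : ℝ) ≤ (z : ℝ) ^ 2 := by
    calc ∑ e ∈ sieveRange z q, (e : ℝ) ≤ ∑ e ∈ sieveRange z q, (z : ℝ) :=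
          sum_le_sum fun e he => by exact_mod_cast (mem_Icc.1 (mem_filter.1 he).1).2
      _ ≤ ∑ e ∈ Icc 1 z, (z : ℝ) :=
          sum_le_sum_of_subset_of_nonneg (filter_subset _ _) fun _ _ _ => by positivity
      _ = _ := by simp [pow_two]
  refine key.trans ?_
  have h2 : (∑ e ∈ sieveRange z q, (e : ℝ)) ^ 2 ≤ (z : ℝ) ^ 4 := by
    calc _ ≤ ((z : ℝ) ^ 2) ^ 2 := by
          gcongr
      _ = _ := by ring
  have h3 : (T : ℝ) / (q ^ k : ℕ) / (∑ e ∈ sieveRange z q, (1 : ℝ) / Nat.totient e) ≤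
      (T : ℝ) / (q ^ k : ℕ) / (Real.log (z + 1) / 3) := by gcongr
  refine (add_le_add h3 h2).trans (le_of_eq ?_)
  have : (q : ℝ) ^ k ≠ 0 := by exact_mod_cast hdk.ne'
  push_cast
  field_simp

/-- Primes `p ≡ 1` modulo `q ^ k` in the dyadic block `[2 ^ i, 2 ^ (i + 1))`, once the block is
long compared with the modulus. -/
lemma sum_inv_dyadic_le (i q k : ℕ) (hq : q.Prime) (hi : 16 ≤ i) (hd : q ^ k ≤ 2 ^ (8 * (i / 16))) :
    ∑ p ∈ range (2 ^ (i + 1)) with p.Prime ∧ 2 ^ i ≤ p ∧ p ≡ 1 [MOD q ^ k], (1 : ℝ) / p ≤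
      416 / ((q : ℝ) ^ k * i) := by
  set j := i / 16 with hj
  have hj1 : 1 ≤ j := by omega
  have hij : i ≤ 32 * j := by omega
  have hji : 16 * j ≤ i := by omega
  have hdk : (0 : ℝ) < (q : ℝ) ^ k := by exact_mod_cast pow_pos hq.pos k
  -- The level is about the sixteenth root of the block length, so that the error `z ^ 4` and
  -- the modulus, at most the square root of `2 ^ i`, leave room for the main term to dominate.
  have hcard := card_primes_modEq_one_le (2 ^ (i + 1)) (2 ^ j) q k hq Nat.one_le_two_pow
  have h1 : ∑ p ∈ range (2 ^ (i + 1)) with p.Prime ∧ 2 ^ i ≤ p ∧ p ≡ 1 [MOD q ^ k], (1 : ℝ) / p ≤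
      (#{p ∈ range (2 ^ (i + 1)) | p.Prime ∧ 2 ^ j < p ∧ p ≡ 1 [MOD q ^ k]} : ℝ) * (1 / 2 ^ i) := by
    rw [← nsmul_eq_mul, ← sum_const]
    refine (sum_le_sum (g := fun _ => (1 : ℝ) / 2 ^ i) ?_).trans
      (sum_le_sum_of_subset_of_nonneg ?_ fun _ _ _ => by positivity)
    · intro p hp
      have : (2 : ℝ) ^ i ≤ p := by exact_mod_cast (mem_filter.1 hp).2.2.1
      gcongr
    · intro p hp
      simp only [mem_filter] at hp ⊢
      refine ⟨hp.1, hp.2.1, lt_of_lt_of_le ?_ hp.2.2.1, hp.2.2.2⟩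
      exact Nat.pow_lt_pow_right (by norm_num) (by omega)
  have hlog : (j : ℝ) * (1 / 2) ≤ Real.log (((2 ^ j : ℕ) : ℝ) + 1) := by
    have : Real.log ((2 : ℝ) ^ j) ≤ Real.log (((2 ^ j : ℕ) : ℝ) + 1) := by
      apply Real.log_le_log (by positivity); push_cast; linarith
    rw [Real.log_pow] at this
    have h2 := Real.log_two_gt_d9
    have : (j : ℝ) * (1 / 2) ≤ j * Real.log 2 := by gcongr; linarith
    linarith
  have hj0 : (0 : ℝ) < j := by exact_mod_cast hj1
  have hi0 : (0 : ℝ) < i := by exact_mod_cast (by omega : 0 < i)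
  have hmain : 3 * ((2 ^ (i + 1) : ℕ) : ℝ) / ((q : ℝ) ^ k * Real.log (((2 ^ j : ℕ) : ℝ) + 1)) ≤
      12 * 2 ^ i / ((q : ℝ) ^ k * j) := by
    calc _ ≤ 3 * ((2 ^ (i + 1) : ℕ) : ℝ) / ((q : ℝ) ^ k * (j * (1 / 2))) := by gcongr
      _ = _ := by push_cast; field_simp; ring
  have herr : (((2 ^ j : ℕ) : ℝ)) ^ 4 ≤ 2 ^ i / ((q : ℝ) ^ k * j) := by
    rw [le_div_iff₀ (by positivity)]
    have hn : (2 ^ j) ^ 4 * (q ^ k * j) ≤ 2 ^ i := by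
      calc (2 ^ j) ^ 4 * (q ^ k * j) ≤ (2 ^ j) ^ 4 * (2 ^ (8 * j) * 2 ^ j) := by
            gcongr
            exact Nat.lt_two_pow_self.le
        _ = 2 ^ (13 * j) := by rw [← pow_mul, ← pow_add, ← pow_add]; congr 1; ring
        _ ≤ _ := Nat.pow_le_pow_right (by norm_num) (by omega)
    exact_mod_cast hn
  calc _ ≤ _ := h1
    _ ≤ (12 * 2 ^ i / ((q : ℝ) ^ k * j) + 2 ^ i / ((q : ℝ) ^ k * j)) * (1 / 2 ^ i) := by
        gcongr
        exact hcard.trans (add_le_add hmain herr)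
    _ = 11 / ((q : ℝ) ^ k * j) + 2 / ((q : ℝ) ^ k * j) := by field_simp; ring
    _ = 13 * 32 / ((q : ℝ) ^ k * (32 * j)) := by field_simp; ring
    _ ≤ 13 * 32 / ((q : ℝ) ^ k * i) := by
        gcongr; exact_mod_cast hij
    _ ≤ _ := by gcongr; norm_num

/-! ### Reciprocal sums of primes in progressions -/

/-- `Σ 1 / p` over the primes `p ≤ N` with `p ≡ 1` modulo `d`, the congruence being written
`d ∣ p - 1`. -/
noncomputable def recipSum (N d : ℕ) : ℝ := ∑ p ∈ Icc 1 N with p.Prime ∧ d ∣ p - 1, (1 : ℝ) / p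

lemma recipSum_nonneg (N d : ℕ) : 0 ≤ recipSum N d := sum_nonneg fun _ _ => by positivity

/-- Over small `p` primality is dropped: `p = 1 + d m` gives `1 / p ≤ 1 / (d m)`, and the sum over
`m` is harmonic. -/
lemma sum_inv_modEq_one_le (N T d : ℕ) (hd0 : 0 < d) :
    (∑ p ∈ {p ∈ Icc 1 N | p.Prime ∧ d ∣ p - 1} with p < T, (1 : ℝ) / p) ≤
      (1 + Real.log T) / d := by
  have hdR : (0 : ℝ) < d := by exact_mod_cast hd0
  set S := {p ∈ {p ∈ Icc 1 N | p.Prime ∧ d ∣ p - 1} | p < T} with hS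
  have hmem : ∀ p ∈ S, 2 ≤ p ∧ d * ((p - 1) / d) = p - 1 ∧ p < T := by
    intro p hp
    simp only [hS, mem_filter] at hp
    exact ⟨hp.1.2.1.two_le, Nat.mul_div_cancel' hp.1.2.2, hp.2⟩
  have hpos : ∀ p ∈ S, 0 < (p - 1) / d := by
    intro p hp
    obtain ⟨h1, h2, _⟩ := hmem p hp
    by_contra h
    have : (p - 1) / d = 0 := Nat.eq_zero_of_not_pos h
    rw [this] at h2; omega
  have hinj : Set.InjOn (fun p => (p - 1) / d) S := by
    intro a ha b hb hab
    obtain ⟨h1, h2, _⟩ := hmem a ha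
    obtain ⟨h3, h4, _⟩ := hmem b hb
    simp only at hab
    rw [hab, h4] at h2
    omega
  calc ∑ p ∈ S, (1 : ℝ) / p ≤ ∑ p ∈ S, (1 : ℝ) / d * (((p - 1) / d : ℕ) : ℝ)⁻¹ := by
        refine sum_le_sum fun p hp => ?_
        have h1 := hpos p hp
        obtain ⟨h2, h3, _⟩ := hmem p hp
        have h1' : (0 : ℝ) < ((p - 1) / d : ℕ) := by exact_mod_cast h1
        rw [← div_eq_mul_inv, div_div]
        apply one_div_le_one_div_of_le (by positivity)
        have : d * ((p - 1) / d) ≤ p := by rw [h3]; omega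
        exact_mod_cast this
    _ = ∑ m ∈ S.image (fun p => (p - 1) / d), (1 : ℝ) / d * (m : ℝ)⁻¹ := by
        rw [sum_image hinj]
    _ ≤ ∑ m ∈ Icc 1 T, (1 : ℝ) / d * ((m : ℕ) : ℝ)⁻¹ := by
        refine sum_le_sum_of_subset_of_nonneg ?_ fun _ _ _ => by positivity
        intro m hm
        obtain ⟨p, hp, rfl⟩ := mem_image.1 hm
        refine mem_Icc.2 ⟨hpos p hp, ?_⟩
        have := (hmem p hp).2.2
        exact (Nat.div_le_self _ _).trans (by omega)
    _ = (1 : ℝ) / d * (harmonic T : ℝ) := by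
        rw [← mul_sum, harmonic_eq_sum_Icc]; push_cast; rfl
    _ ≤ (1 : ℝ) / d * (1 + Real.log T) := by
        gcongr
        exact harmonic_le_one_add_log _
    _ = _ := by ring

/-- The reciprocal sum of primes `≡ 1` modulo a prime power `d`, for `log log N ≤ y`. Primes
below a fixed power of `2 d` cost `O(log d / d)` trivially; the others are split into dyadic
blocks, the sieve bound `O(1 / (d i))` on the `i`-th of which sums to `O(y / d)`. -/
lemma recipSum_prime_pow_le {N q k : ℕ} {y : ℝ} (hq : q.Prime) (hy : 1 ≤ y)
    (hN : (N : ℝ) ≤ Real.exp (Real.exp y)) :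
    recipSum N (q ^ k) ≤ 1300 * (y + Real.log ((q : ℝ) ^ k)) / (q : ℝ) ^ k := by
  set d := q ^ k with hd
  have hd0 : 0 < d := pow_pos hq.pos k
  have hdR : (0 : ℝ) < d := by exact_mod_cast hd0
  have hdcast : (q : ℝ) ^ k = d := by rw [hd]; push_cast; rfl
  rw [hdcast]
  set s := Nat.log 2 d with hs
  set i₀ := 16 * (s + 1) with hi₀
  have hsplit : recipSum N d =
      (∑ p ∈ {p ∈ Icc 1 N | p.Prime ∧ d ∣ p - 1} with p < 2 ^ i₀, (1 : ℝ) / p) +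
      ∑ p ∈ {p ∈ Icc 1 N | p.Prime ∧ d ∣ p - 1} with ¬ p < 2 ^ i₀, (1 : ℝ) / p :=
    (sum_filter_add_sum_filter_not _ _ _).symm
  have hlogd : 0 ≤ Real.log d := Real.log_nonneg (by exact_mod_cast hd0)
  have hl2 := Real.log_two_lt_d9
  have hl2' := Real.log_two_gt_d9
  -- the small primes, through all integers congruent to `1` modulo `d`
  have hsmall : (∑ p ∈ {p ∈ Icc 1 N | p.Prime ∧ d ∣ p - 1} with p < 2 ^ i₀, (1 : ℝ) / p) ≤
      (13 + 16 * Real.log d) / d := by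
    refine (sum_inv_modEq_one_le N (2 ^ i₀) d hd0).trans ?_
    refine div_le_div_of_nonneg_right ?_ hdR.le
    rw [Nat.cast_pow, Nat.cast_two, Real.log_pow, hi₀]
    have hsd : (s : ℝ) * Real.log 2 ≤ Real.log d := by
      rw [← Real.log_pow]
      apply Real.log_le_log (by positivity)
      exact_mod_cast Nat.pow_log_le_self 2 hd0.ne'
    rw [Nat.cast_mul, Nat.cast_add, Nat.cast_one, Nat.cast_ofNat]
    linarith [hsd, hl2]
  set M := Nat.log 2 N with hM
  have hlarge : (∑ p ∈ {p ∈ Icc 1 N | p.Prime ∧ d ∣ p - 1} with ¬ p < 2 ^ i₀, (1 : ℝ) / p) ≤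
      416 * (2 + y) / d := by
    have hmaps : ∀ p ∈ {p ∈ {p ∈ Icc 1 N | p.Prime ∧ d ∣ p - 1} | ¬ p < 2 ^ i₀},
        Nat.log 2 p ∈ Icc i₀ M := by
      intro p hp
      simp only [mem_filter, mem_Icc, not_lt] at hp
      exact mem_Icc.2 ⟨Nat.le_log_of_pow_le (by norm_num) hp.2, Nat.log_mono_right hp.1.1.2⟩
    rw [← sum_fiberwise_of_maps_to hmaps]
    calc _ ≤ ∑ i ∈ Icc i₀ M, 416 / (d : ℝ) * ((i : ℕ) : ℝ)⁻¹ := by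
          refine sum_le_sum fun i hi => ?_
          have hi1 := (mem_Icc.1 hi).1
          have h16 : s + 1 ≤ i / 16 := by omega
          have hdd : q ^ k ≤ 2 ^ (8 * (i / 16)) := by
            calc q ^ k ≤ 2 ^ (s + 1) := (Nat.lt_pow_succ_log_self (by norm_num) d).le
              _ ≤ _ := Nat.pow_le_pow_right (by norm_num) (by omega)
          have := sum_inv_dyadic_le i q k hq (by omega) hdd
          rw [hdcast] at this
          have e : 416 / ((d : ℝ) * i) = 416 / (d : ℝ) * (i : ℝ)⁻¹ := by
            rw [div_mul_eq_div_div, div_eq_mul_inv _ (i : ℝ)]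
          rw [← e]
          refine le_trans (sum_le_sum_of_subset_of_nonneg ?_ fun _ _ _ => by positivity) this
          intro p hp
          simp only [mem_filter, mem_Icc, not_lt, mem_range] at hp ⊢
          obtain ⟨⟨⟨⟨hp1, _⟩, hpp, hpd⟩, _⟩, hlog⟩ := hp
          refine ⟨?_, hpp, ?_, ?_⟩
          · rw [← hlog]; exact Nat.lt_pow_succ_log_self (by norm_num) p
          · rw [← hlog]; exact Nat.pow_log_le_self 2 (by omega)
          · exact ((Nat.modEq_iff_dvd' hp1).2 hpd).symm
      _ ≤ ∑ i ∈ Icc 1 M, 416 / (d : ℝ) * ((i : ℕ) : ℝ)⁻¹ := by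
          refine sum_le_sum_of_subset_of_nonneg ?_ fun _ _ _ => by positivity
          exact Icc_subset_Icc (by omega) le_rfl
      _ = 416 / (d : ℝ) * (harmonic M : ℝ) := by
          rw [← mul_sum, harmonic_eq_sum_Icc]; push_cast; rfl
      _ ≤ 416 / (d : ℝ) * (2 + y) := by
          gcongr
          refine (harmonic_le_one_add_log _).trans ?_
          rcases Nat.eq_zero_or_pos M with h0 | h0
          · rw [h0]; simp; linarith
          have hN0 : N ≠ 0 := by rintro rfl; simp [hM] at h0
          have h1 : (M : ℝ) * Real.log 2 ≤ Real.exp y := by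
            rw [← Real.log_pow, Real.log_le_iff_le_exp (by positivity)]
            refine le_trans ?_ hN
            exact_mod_cast Nat.pow_log_le_self 2 hN0
          have hM0 : (0 : ℝ) < M := by exact_mod_cast h0
          have h2 : (M : ℝ) ≤ 2 * Real.exp y := by nlinarith
          have h3 := Real.log_le_log hM0 h2
          rw [Real.log_mul (by norm_num) (Real.exp_pos y).ne', Real.log_exp] at h3
          linarith
      _ = _ := by ring
  rw [hsplit]
  refine (add_le_add hsmall hlarge).trans ?_
  rw [← add_div]
  gcongr
  linarith

/-! ### Smooth parts and valuations of totients -/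

/-- The primes up to `t`. -/
def primesUpTo (t : ℕ) : Finset ℕ := {q ∈ Icc 1 t | q.Prime}

/-- The logarithm of the `t`-smooth part of `m`, namely `Σ_{q ≤ t} v_q(m) log q`. -/
noncomputable def smoothLog (t m : ℕ) : ℝ :=
  ∑ q ∈ primesUpTo t, (m.factorization q : ℝ) * Real.log q

/-- The number of primes `p ∣ n` with `p ≡ 1` modulo `d`. -/
def primeDivCount (n d : ℕ) : ℕ := #{p ∈ n.primeFactors | d ∣ p - 1}

lemma mem_primesUpTo {t q : ℕ} : q ∈ primesUpTo t ↔ q ≤ t ∧ q.Prime := by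
  simp only [primesUpTo, mem_filter, mem_Icc]
  exact ⟨fun h => ⟨h.1.2, h.2⟩, fun h => ⟨⟨h.2.one_le, h.1⟩, h.2⟩⟩

lemma finsum_eq_smoothLog {Y : ℝ} (hY : 0 ≤ Y) (m : ℕ) :
    ∑ᶠ (q : ℕ) (_ : q.Prime ∧ (q : ℝ) ≤ Y), (m.factorization q : ℝ) * Real.log q =
      smoothLog ⌊Y⌋₊ m := by
  refine finsum_cond_eq_sum_of_cond_iff _ fun {q} _ => ?_
  rw [mem_primesUpTo, Nat.le_floor_iff hY, and_comm]

lemma smoothLog_nonneg (t m : ℕ) : 0 ≤ smoothLog t m :=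
  sum_nonneg fun q _ => mul_nonneg (Nat.cast_nonneg _) (Real.log_natCast_nonneg q)

lemma smoothLog_le_log (t : ℕ) {m : ℕ} (hm : m ≠ 0) : smoothLog t m ≤ Real.log m := by
  have h1 : Real.log m = ∑ q ∈ m.primeFactors, (m.factorization q : ℝ) * Real.log q := by
    conv_lhs => rw [← Nat.prod_factorization_pow_eq_self hm]
    rw [Finsupp.prod, Nat.cast_prod, Real.log_prod]
    · refine sum_congr rfl fun q _ => ?_
      rw [Nat.cast_pow, Real.log_pow]
    · intro q hq
      have := (Nat.prime_of_mem_primeFactors hq).pos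
      positivity
  rw [h1, smoothLog]
  rw [← sum_filter_ne_zero]
  refine sum_le_sum_of_subset_of_nonneg (fun q hq => ?_)
    fun q _ _ => mul_nonneg (Nat.cast_nonneg _) (Real.log_natCast_nonneg q)
  rw [← Nat.support_factorization, Finsupp.mem_support_iff]
  intro h0
  exact (mem_filter.1 hq).2 (by simp [h0])

/-- The valuation of `φ(m) = ∏_{r ∣ m} r ^ (v_r(m) - 1) (r - 1)`. The subtraction in
`v_q(m) - 1` truncates, which gives the correct contribution `0` when `q ∤ m`. -/
lemma factorization_totient {m : ℕ} (hm : m ≠ 0) (q : ℕ) :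
    (Nat.totient m).factorization q =
      (m.factorization q - 1) + ∑ r ∈ m.primeFactors, (r - 1).factorization q := by
  rw [Nat.totient_eq_prod_factorization hm, Finsupp.prod, Nat.factorization_prod_apply]
  · rw [Nat.support_factorization]
    have h1 : ∀ r ∈ m.primeFactors, (r ^ (m.factorization r - 1) * (r - 1)).factorization q =
        (if r = q then m.factorization q - 1 else 0) + (r - 1).factorization q := by
      intro r hr
      have hp := Nat.prime_of_mem_primeFactors hr
      rw [Nat.factorization_mul (pow_ne_zero _ hp.ne_zero) (by have := hp.two_le; omega),
        Finsupp.add_apply, Nat.Prime.factorization_pow hp, Finsupp.single_apply]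
      split_ifs with h
      · rw [h]
      · rfl
    rw [sum_congr rfl h1, sum_add_distrib, sum_ite_eq']
    congr 1
    split_ifs with h
    · rfl
    · rw [← Nat.support_factorization, Finsupp.notMem_support_iff] at h
      rw [h]
      rfl
  · intro r hr
    have hp := Nat.prime_of_mem_primeFactors (by rwa [Nat.support_factorization] at hr)
    exact mul_ne_zero (pow_ne_zero _ hp.ne_zero) (by have := hp.two_le; omega)

/-- A prime divides `φ(n)` either because its square divides `n` or because it divides `p - 1` for
some prime `p ∣ n`. -/
lemma prime_dvd_totient {n r : ℕ} (hn : n ≠ 0) (hr : r.Prime) (h : r ∣ Nat.totient n) :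
    r ^ 2 ∣ n ∨ 0 < primeDivCount n r := by
  have h1 : (Nat.totient n).factorization r ≠ 0 := by
    have := (hr.dvd_iff_one_le_factorization (Nat.totient_pos.2 (Nat.pos_of_ne_zero hn)).ne').1 h
    omega
  rw [factorization_totient hn] at h1
  by_cases h2 : 2 ≤ n.factorization r
  · left; exact (hr.pow_dvd_iff_le_factorization hn).2 h2
  · right
    have h3 : ∑ p ∈ n.primeFactors, (p - 1).factorization r ≠ 0 := by omega
    obtain ⟨p, hp, hpr⟩ := exists_ne_zero_of_sum_ne_zero h3
    refine card_pos.2 ⟨p, mem_filter.2 ⟨hp, ?_⟩⟩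
    by_contra h4
    exact hpr (Nat.factorization_eq_zero_of_not_dvd h4)

lemma dvd_totient_of_primeDivCount {n r : ℕ} (h : 0 < primeDivCount n r) :
    r ∣ Nat.totient n := by
  obtain ⟨p, hp⟩ := card_pos.1 h
  obtain ⟨hp, hr⟩ := mem_filter.1 hp
  have := Nat.totient_dvd_of_dvd (Nat.dvd_of_mem_primeFactors hp)
  rw [Nat.totient_prime (Nat.prime_of_mem_primeFactors hp)] at this
  exact hr.trans this

/-- The double sum defining `h_x` counts each prime `r` as many times as there are primes
`p ∣ n` with `p ≡ 1` modulo `r`. -/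
lemma sum_primeFactors_sub_one {n N : ℕ} (hnN : n ≤ N) (hn : 1 ≤ n) (f : ℕ → ℝ) :
    ∑ p ∈ n.primeFactors, ∑ r ∈ (p - 1).primeFactors, f r =
      ∑ r ∈ primesUpTo N, (primeDivCount n r : ℝ) * f r := by
  have h1 : ∀ p ∈ n.primeFactors, ∑ r ∈ (p - 1).primeFactors, f r =
      ∑ r ∈ primesUpTo N, if r ∣ p - 1 then f r else 0 := by
    intro p hp
    have hpp := Nat.prime_of_mem_primeFactors hp
    have hple := Nat.le_of_dvd hn (Nat.dvd_of_mem_primeFactors hp)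
    have hp2 := hpp.two_le
    rw [← sum_filter]
    refine sum_congr ?_ fun _ _ => rfl
    ext r
    simp only [Nat.mem_primeFactors, mem_filter, mem_primesUpTo]
    constructor
    · rintro ⟨h1, h2, h3⟩
      exact ⟨⟨by have := Nat.le_of_dvd (by omega) h2; omega, h1⟩, h2⟩
    · rintro ⟨⟨_, h1⟩, h2⟩
      exact ⟨h1, h2, by omega⟩
  rw [sum_congr rfl h1, sum_comm]
  refine sum_congr rfl fun r _ => ?_
  rw [← sum_filter, sum_const, nsmul_eq_mul, primeDivCount]

/-- The valuation formula for `φ(m)`, summed over `q ≤ t`: up to the contribution of prime powers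
in `m`, the smooth part of `φ(m)` comes from the factors `r - 1`. -/
lemma smoothLog_totient_sub {t m : ℕ} (hm : m ≠ 0) :
    0 ≤ smoothLog t (Nat.totient m) - ∑ r ∈ m.primeFactors, smoothLog t (r - 1) ∧
    smoothLog t (Nat.totient m) - ∑ r ∈ m.primeFactors, smoothLog t (r - 1) ≤ smoothLog t m := by
  have h : smoothLog t (Nat.totient m) - ∑ r ∈ m.primeFactors, smoothLog t (r - 1) =
      ∑ q ∈ primesUpTo t, ((m.factorization q - 1 : ℕ) : ℝ) * Real.log q := by
    simp only [smoothLog]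
    rw [sum_comm, ← sum_sub_distrib]
    refine sum_congr rfl fun q _ => ?_
    rw [factorization_totient hm, ← sum_mul]
    push_cast
    ring
  rw [h]
  constructor
  · exact sum_nonneg fun q _ => mul_nonneg (Nat.cast_nonneg _) (Real.log_natCast_nonneg q)
  · refine sum_le_sum fun q _ => ?_
    gcongr
    omega

/-- Pointwise bound for the error. Passing from `φ(φ(n))` to `Σ_{r ∣ φ(n)}` costs the first term;
replacing the indicator of `r ∣ φ(n)` by the number of `p ∣ n` with `r ∣ p - 1` costs the other
two. The truncated `primeDivCount n r - 1` is the positive part of the excess over `1`. -/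
lemma abs_smoothLog_sub_le {n N t : ℕ} (hn : 1 ≤ n) (hnN : n ≤ N) :
    |smoothLog t (Nat.totient (Nat.totient n)) -
        ∑ p ∈ n.primeFactors, ∑ r ∈ (p - 1).primeFactors, smoothLog t (r - 1)| ≤
      smoothLog t (Nat.totient n) +
      ∑ r ∈ primesUpTo N, (if r ^ 2 ∣ n then smoothLog t (r - 1) else 0) +
      ∑ r ∈ primesUpTo N, ((primeDivCount n r - 1 : ℕ) : ℝ) * smoothLog t (r - 1) := by
  have hφ := Nat.totient_pos.2 (show 0 < n from hn)
  obtain ⟨h1, h2⟩ := smoothLog_totient_sub (t := t) hφ.ne'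
  rw [sum_primeFactors_sub_one hnN hn]
  have h3 : ∑ r ∈ n.totient.primeFactors, smoothLog t (r - 1) =
      ∑ r ∈ primesUpTo N, if r ∣ n.totient then smoothLog t (r - 1) else 0 := by
    rw [← sum_filter]
    refine sum_congr ?_ fun _ _ => rfl
    ext r
    simp only [Nat.mem_primeFactors, mem_filter, mem_primesUpTo]
    constructor
    · rintro ⟨h1, h2, h3⟩
      exact ⟨⟨(Nat.le_of_dvd hφ h2).trans ((Nat.totient_le n).trans hnN), h1⟩, h2⟩
    · rintro ⟨⟨_, h1⟩, h2⟩
      exact ⟨h1, h2, hφ.ne'⟩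
  have h4 : |∑ r ∈ n.totient.primeFactors, smoothLog t (r - 1) -
      ∑ r ∈ primesUpTo N, (primeDivCount n r : ℝ) * smoothLog t (r - 1)| ≤
      ∑ r ∈ primesUpTo N, (if r ^ 2 ∣ n then smoothLog t (r - 1) else 0) +
      ∑ r ∈ primesUpTo N, ((primeDivCount n r - 1 : ℕ) : ℝ) * smoothLog t (r - 1) := by
    rw [h3, ← sum_sub_distrib, ← sum_add_distrib]
    refine (abs_sum_le_sum_abs _ _).trans (sum_le_sum fun r hr => ?_)
    have hw := smoothLog_nonneg t (r - 1)
    by_cases hc : 0 < primeDivCount n r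
    · rw [if_pos (dvd_totient_of_primeDivCount hc)]
      have : ((primeDivCount n r - 1 : ℕ) : ℝ) = primeDivCount n r - 1 := by
        rw [Nat.cast_sub hc]; simp
      have hc1 : (1 : ℝ) ≤ primeDivCount n r := by exact_mod_cast hc
      rw [this, abs_of_nonpos (by nlinarith)]
      have : (0 : ℝ) ≤ if r ^ 2 ∣ n then smoothLog t (r - 1) else 0 := by split_ifs <;> simp [hw]
      linarith
    · have hc0 : primeDivCount n r = 0 := by omega
      simp only [hc0, Nat.cast_zero, zero_mul, sub_zero, zero_le, Nat.sub_eq_zero_of_le, add_zero]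
      by_cases hd : r ∣ n.totient
      · rcases prime_dvd_totient (by omega) (mem_primesUpTo.1 hr).2 hd with h | h
        · simp [h, hd, abs_of_nonneg hw]
        · omega
      · simp only [hd, if_false, abs_zero]
        split_ifs <;> simp [hw]
  have h5 := abs_sub_le (smoothLog t (Nat.totient (Nat.totient n)))
    (∑ r ∈ n.totient.primeFactors, smoothLog t (r - 1))
    (∑ r ∈ primesUpTo N, (primeDivCount n r : ℝ) * smoothLog t (r - 1))
  rw [abs_of_nonneg h1] at h5
  linarith

/-! ### First moments of prime divisor counts -/

lemma card_multiples_le (N m : ℕ) : (#{n ∈ Icc 1 N | m ∣ n} : ℝ) ≤ N / m := by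
  have : Icc 1 N = Ioc 0 N := by ext; simp; omega
  rw [this, Nat.Ioc_filter_dvd_card_eq_div]
  exact Nat.cast_div_le

lemma primeDivCount_eq {n N d : ℕ} (hn : n ∈ Icc 1 N) :
    primeDivCount n d = #{p ∈ {p ∈ Icc 1 N | p.Prime ∧ d ∣ p - 1} | p ∣ n} := by
  obtain ⟨hn1, hnN⟩ := mem_Icc.1 hn
  rw [primeDivCount]
  congr 1
  ext p
  simp only [mem_filter, Nat.mem_primeFactors, mem_Icc]
  constructor
  · rintro ⟨⟨h1, h2, _⟩, h3⟩
    exact ⟨⟨⟨h1.one_le, (Nat.le_of_dvd hn1 h2).trans hnN⟩, h1, h3⟩, h2⟩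
  · rintro ⟨⟨_, h1, h3⟩, h2⟩
    exact ⟨⟨h1, h2, by omega⟩, h3⟩

lemma sum_primeDivCount_le (N d : ℕ) :
    ∑ n ∈ Icc 1 N, (primeDivCount n d : ℝ) ≤ N * recipSum N d := by
  have h : ∑ n ∈ Icc 1 N, (primeDivCount n d : ℝ) =
      ∑ p ∈ Icc 1 N with p.Prime ∧ d ∣ p - 1, (#{n ∈ Icc 1 N | p ∣ n} : ℝ) := by
    rw [sum_congr rfl fun n hn => by rw [primeDivCount_eq hn]]
    simp only [card_filter (p := fun x => _ ∣ x), card_filter (p := fun x => x ∣ _), Nat.cast_sum]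
    rw [sum_comm]
  rw [h, recipSum, mul_sum]
  refine sum_le_sum fun p _ => ?_
  rw [mul_one_div]
  exact card_multiples_le N p

/-- If `c` primes `p ≡ 1` modulo `d` divide `n`, then `(c - 1)⁺ ≤ c (c - 1)`, and the right side
counts ordered pairs of distinct such primes, whose product divides `n`. -/
lemma sum_primeDivCount_sub_one_le (N d : ℕ) :
    ∑ n ∈ Icc 1 N, ((primeDivCount n d - 1 : ℕ) : ℝ) ≤ N * recipSum N d ^ 2 := by
  set D := {p ∈ Icc 1 N | p.Prime ∧ d ∣ p - 1} with hD
  have h1 : ∀ n ∈ Icc 1 N, ((primeDivCount n d - 1 : ℕ) : ℝ) ≤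
      ∑ t ∈ D.offDiag, if t.1 * t.2 ∣ n then (1 : ℝ) else 0 := by
    intro n hn
    rw [primeDivCount_eq hn, ← hD]
    set c := #{p ∈ D | p ∣ n} with hc
    have h2 : (c - 1 : ℕ) ≤ #({p ∈ D | p ∣ n}.offDiag) := by
      rw [offDiag_card, ← hc]
      rcases Nat.eq_zero_or_pos c with h0 | h0
      · simp [h0]
      · obtain ⟨e, he⟩ : ∃ e, c = e + 1 := ⟨c - 1, by omega⟩
        rw [he, show (e + 1) * (e + 1) - (e + 1) = e * (e + 1) by
          rw [← Nat.sub_one_mul]; simp]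
        simp only [Nat.add_sub_cancel]
        nlinarith [Nat.zero_le e]
    have h3 : {p ∈ D | p ∣ n}.offDiag ⊆ {t ∈ D.offDiag | t.1 * t.2 ∣ n} := by
      rintro ⟨a, b⟩ hab
      simp only [mem_offDiag, mem_filter] at hab ⊢
      obtain ⟨⟨ha, han⟩, ⟨hb, hbn⟩, hne⟩ := hab
      refine ⟨⟨ha, hb, hne⟩, Nat.Coprime.mul_dvd_of_dvd_of_dvd ?_ han hbn⟩
      exact (Nat.coprime_primes (mem_filter.1 ha).2.1 (mem_filter.1 hb).2.1).2 hne
    rw [← sum_filter, sum_const, nsmul_eq_mul, mul_one]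
    exact_mod_cast h2.trans (card_le_card h3)
  calc _ ≤ _ := sum_le_sum h1
    _ = ∑ t ∈ D.offDiag, (#{n ∈ Icc 1 N | t.1 * t.2 ∣ n} : ℝ) := by
        rw [sum_comm]
        refine sum_congr rfl fun t _ => ?_
        rw [← sum_filter, sum_const, nsmul_eq_mul, mul_one]
    _ ≤ ∑ t ∈ D.offDiag, (N : ℝ) / ((t.1 * t.2 : ℕ) : ℝ) :=
        sum_le_sum fun t _ => card_multiples_le N _
    _ ≤ ∑ t ∈ D ×ˢ D, (N : ℝ) / ((t.1 * t.2 : ℕ) : ℝ) := by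
        refine sum_le_sum_of_subset_of_nonneg ?_ fun _ _ _ => by positivity
        intro t ht
        rw [mem_offDiag] at ht
        exact mem_product.2 ⟨ht.1, ht.2.1⟩
    _ = _ := by
        rw [recipSum, ← hD, pow_two, sum_mul_sum, ← sum_product', mul_sum]
        refine sum_congr rfl fun t _ => ?_
        push_cast
        rw [one_div_mul_one_div_rev, mul_one_div, mul_comm (t.2 : ℝ)]

/-! ### First moments of the three error terms -/

/-- The upper bound in Mertens' first theorem, from `log t! ≤ t log t` and Chebyshev's bound for
`θ(t)`. -/
lemma sum_log_div_primesUpTo_le {t : ℕ} (ht : 1 ≤ t) :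
    ∑ q ∈ primesUpTo t, Real.log q / q ≤ Real.log t + Real.log 4 := by
  have ht0 : (0 : ℝ) < t := by exact_mod_cast ht
  have h1 : ∑ q ∈ primesUpTo t, ((t / q : ℕ) : ℝ) * Real.log q ≤ t * Real.log t := by
    calc _ ≤ smoothLog t t.factorial := by
          refine sum_le_sum fun q hq => ?_
          obtain ⟨hqt, hqp⟩ := mem_primesUpTo.1 hq
          gcongr
          have : q ^ (t / q) ∣ t.factorial := by
            refine (pow_dvd_pow q ?_).trans (Nat.ordProj_dvd t.factorial q)
            rw [Nat.factorization_factorial hqp (Nat.lt_succ_self (Nat.log q t))]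
            have hmem : 1 ∈ Ico 1 (Nat.log q t + 1) := by
              have := Nat.log_pos hqp.one_lt hqt
              exact mem_Ico.2 ⟨le_rfl, by omega⟩
            have := single_le_sum (f := fun i => t / q ^ i) (fun _ _ => Nat.zero_le _) hmem
            simpa using this
          exact (hqp.pow_dvd_iff_le_factorization t.factorial_ne_zero).1 this
      _ ≤ Real.log t.factorial := smoothLog_le_log t t.factorial_ne_zero
      _ ≤ Real.log ((t : ℝ) ^ t) := by
          apply Real.log_le_log (by exact_mod_cast t.factorial_pos)
          exact_mod_cast t.factorial_le_pow
      _ = _ := by rw [Real.log_pow]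
  have h2 : ∑ q ∈ primesUpTo t, Real.log q ≤ Real.log 4 * t := by
    have := Chebyshev.theta_le_log4_mul_x ht0.le
    rw [Chebyshev.theta, Nat.floor_natCast] at this
    convert this using 2
    ext p
    rw [mem_primesUpTo, mem_filter, mem_Ioc]
    exact ⟨fun h => ⟨⟨h.2.pos, h.1⟩, h.2⟩, fun h => ⟨h.1.2, h.2⟩⟩
  have h3 : t * ∑ q ∈ primesUpTo t, Real.log q / q ≤
      ∑ q ∈ primesUpTo t, ((t / q : ℕ) : ℝ) * Real.log q + ∑ q ∈ primesUpTo t, Real.log q := by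
    rw [mul_sum, ← sum_add_distrib]
    refine sum_le_sum fun q hq => ?_
    have hqp := (mem_primesUpTo.1 hq).2.pos
    have hq0 : (0 : ℝ) < q := by exact_mod_cast hqp
    have h4 : (t : ℝ) / q ≤ (t / q : ℕ) + 1 := by
      rw [div_le_iff₀ hq0]
      have := Nat.lt_mul_div_succ t hqp
      have h3 : t ≤ (t / q + 1) * q := by linarith
      exact_mod_cast h3
    have h5 : (t : ℝ) * (Real.log q / q) = t / q * Real.log q := by ring
    rw [h5, ← add_one_mul]
    gcongr
  have h6 : t * ∑ q ∈ primesUpTo t, Real.log q / q ≤ t * (Real.log t + Real.log 4) := by linarith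
  exact le_of_mul_le_mul_left h6 ht0

lemma sum_div_pow_le {q : ℕ} (hq : 2 ≤ q) (K : ℕ) :
    ∑ k ∈ Icc 1 K, (k : ℝ) / (q : ℝ) ^ k ≤ 4 / q := by
  have hq2 : (2 : ℝ) ≤ q := by exact_mod_cast hq
  -- It is enough to treat `q = 2`, because `k / q ^ k ≤ (2 / q) (k / 2 ^ k)`.
  have h1 : ∀ K : ℕ, ∑ k ∈ Icc 1 K, (k : ℝ) / 2 ^ k = 2 - (K + 2) / 2 ^ K := by
    intro K
    induction K with
    | zero => simp
    | succ K ih =>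
      rw [sum_Icc_succ_top (by omega), ih]
      push_cast
      field_simp
      ring
  calc _ ≤ ∑ k ∈ Icc 1 K, 2 / (q : ℝ) * ((k : ℝ) / 2 ^ k) := by
        refine sum_le_sum fun k hk => ?_
        obtain ⟨j, rfl⟩ : ∃ j, k = j + 1 := ⟨k - 1, by have := (mem_Icc.1 hk).1; omega⟩
        have h2 : (2 : ℝ) ^ j ≤ (q : ℝ) ^ j := by gcongr
        have e : 2 / (q : ℝ) * (((j + 1 : ℕ) : ℝ) / 2 ^ (j + 1)) =
            ((j + 1 : ℕ) : ℝ) / (2 ^ j * q) := by field_simp; ring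
        rw [e, pow_succ (q : ℝ)]
        gcongr
    _ = 2 / (q : ℝ) * (2 - (K + 2) / 2 ^ K) := by rw [← mul_sum, h1]
    _ ≤ 2 / (q : ℝ) * 2 := by
        gcongr
        have : (0 : ℝ) ≤ (K + 2) / 2 ^ K := by positivity
        linarith
    _ = _ := by ring

lemma factorization_eq_card {m N q : ℕ} (hq : q.Prime) (hm : m ≠ 0) (hmN : m ≤ N) :
    m.factorization q = #{k ∈ Icc 1 N | q ^ k ∣ m} := by
  have : {k ∈ Icc 1 N | q ^ k ∣ m} = Icc 1 (m.factorization q) := by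
    ext k
    simp only [mem_filter, mem_Icc]
    rw [hq.pow_dvd_iff_le_factorization hm]
    constructor
    · rintro ⟨⟨h1, _⟩, h2⟩; exact ⟨h1, h2⟩
    · rintro ⟨h1, h2⟩
      exact ⟨⟨h1, h2.trans ((Nat.factorization_lt q hm).le.trans hmN)⟩, h2⟩
  rw [this]; simp

/-- The mean of `v_q(φ(n))` over `n ≤ N` is `O((y + log q) / q)`: write the valuation as the number
of `k ≥ 1` with `q ^ k` dividing `n` or some `p - 1`, and sum over `n` first. -/
lemma sum_factorization_totient_le {N q : ℕ} {y : ℝ} (hq : q.Prime) (hy : 1 ≤ y)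
    (hN : (N : ℝ) ≤ Real.exp (Real.exp y)) :
    ∑ n ∈ Icc 1 N, ((Nat.totient n).factorization q : ℝ) ≤
      N * (5204 * (y + Real.log q) / q) := by
  have hq0 : (0 : ℝ) < q := by exact_mod_cast hq.pos
  have hlq : 0 ≤ Real.log q := Real.log_natCast_nonneg q
  have h1 : ∀ n ∈ Icc 1 N, ((Nat.totient n).factorization q : ℝ) ≤
      ∑ k ∈ Icc 1 N, ((if q ^ k ∣ n then (1 : ℝ) else 0) + primeDivCount n (q ^ k)) := by
    intro n hn
    obtain ⟨hn1, hnN⟩ := mem_Icc.1 hn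
    have h2 : (Nat.totient n).factorization q ≤
        n.factorization q + ∑ p ∈ n.primeFactors, (p - 1).factorization q := by
      rw [factorization_totient (by omega)]
      gcongr
      omega
    have h3 : ∑ p ∈ n.primeFactors, (p - 1).factorization q =
        ∑ k ∈ Icc 1 N, primeDivCount n (q ^ k) := by
      have : ∀ p ∈ n.primeFactors, (p - 1).factorization q =
          ∑ k ∈ Icc 1 N, if q ^ k ∣ p - 1 then 1 else 0 := by
        intro p hp
        have hp2 := (Nat.prime_of_mem_primeFactors hp).two_le
        have hple := Nat.le_of_dvd hn1 (Nat.dvd_of_mem_primeFactors hp)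
        rw [factorization_eq_card hq (by omega) (by omega : p - 1 ≤ N), card_filter]
      rw [sum_congr rfl this, sum_comm]
      simp only [primeDivCount, card_filter]
    rw [h3, factorization_eq_card hq (by omega) hnN, card_filter, ← sum_add_distrib] at h2
    exact_mod_cast h2
  calc _ ≤ _ := sum_le_sum h1
    _ = ∑ k ∈ Icc 1 N, ((#{n ∈ Icc 1 N | q ^ k ∣ n} : ℝ) +
          ∑ n ∈ Icc 1 N, (primeDivCount n (q ^ k) : ℝ)) := by
        rw [sum_comm]
        refine sum_congr rfl fun k _ => ?_
        rw [sum_add_distrib, ← sum_filter, sum_const, nsmul_eq_mul, mul_one]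
    _ ≤ ∑ k ∈ Icc 1 N, (N * (1301 * (y + Real.log q))) * ((k : ℝ) / (q : ℝ) ^ k) := by
        refine sum_le_sum fun k hk => ?_
        have hk1 : (1 : ℝ) ≤ k := by exact_mod_cast (mem_Icc.1 hk).1
        have h2 := card_multiples_le N (q ^ k)
        have h3 := sum_primeDivCount_le N (q ^ k)
        have h4 := recipSum_prime_pow_le (k := k) hq hy hN
        rw [Real.log_pow] at h4
        have h5 : (N : ℝ) * recipSum N (q ^ k) ≤
          N * (1300 * (y + k * Real.log q) / (q : ℝ) ^ k) := by gcongr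
        push_cast at h2
        calc _ ≤ (N : ℝ) / (q : ℝ) ^ k + N * (1300 * (y + k * Real.log q) / (q : ℝ) ^ k) := by
              linarith
          _ = N * (1 + 1300 * (y + k * Real.log q)) / (q : ℝ) ^ k := by ring
          _ ≤ N * (1301 * (y + Real.log q) * k) / (q : ℝ) ^ k := by
              gcongr
              nlinarith
          _ = _ := by ring
    _ = (N * (1301 * (y + Real.log q))) * ∑ k ∈ Icc 1 N, ((k : ℝ) / (q : ℝ) ^ k) := by
        rw [mul_sum]
    _ ≤ (N * (1301 * (y + Real.log q))) * (4 / q) := by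
        gcongr
        exact sum_div_pow_le hq.two_le N
    _ = _ := by ring

lemma smoothLog_sub_one_le {t r : ℕ} (hr : r.Prime) : smoothLog t (r - 1) ≤ Real.log r := by
  have h2 := hr.two_le
  refine (smoothLog_le_log t (by omega)).trans ?_
  apply Real.log_le_log
  · exact_mod_cast (by omega : 0 < r - 1)
  · exact_mod_cast Nat.sub_le r 1

lemma log_primesUpTo_le {y : ℝ} (hy : 1 ≤ y) {q : ℕ} (hq : q ∈ primesUpTo ⌊y ^ 2⌋₊) :
    Real.log q ≤ 2 * y := by
  obtain ⟨h1, h2⟩ := mem_primesUpTo.1 hq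
  have h3 : (q : ℝ) ≤ y ^ 2 := (Nat.le_floor_iff (by positivity)).1 h1
  have h4 := Real.log_le_log (by exact_mod_cast h2.pos) h3
  rw [Real.log_pow] at h4
  have := Real.log_le_self (show 0 ≤ y by linarith)
  push_cast at h4
  linarith

lemma sum_log_div_sq_le {y : ℝ} (hy : 3 ≤ y) :
    ∑ q ∈ primesUpTo ⌊y ^ 2⌋₊, Real.log q / q ≤ 4 * Real.log y := by
  have h1 : 1 ≤ ⌊y ^ 2⌋₊ := by
    rw [Nat.le_floor_iff (by positivity)]; push_cast; nlinarith
  have h2 := sum_log_div_primesUpTo_le h1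
  have h3 : Real.log (⌊y ^ 2⌋₊ : ℕ) ≤ Real.log (y ^ 2) :=
    Real.log_le_log (by exact_mod_cast h1) (Nat.floor_le (by positivity))
  rw [Real.log_pow] at h3
  have h4 : Real.log 4 ≤ 2 * Real.log y := by
    have : Real.log 4 = 2 * Real.log 2 := by
      rw [show (4 : ℝ) = 2 ^ 2 by norm_num, Real.log_pow]; norm_num
    rw [this]
    gcongr
    linarith
  push_cast at h3
  linarith

/-- First moment of the first error term. -/
lemma sum_smoothLog_totient_le {N : ℕ} {y : ℝ} (hy : 3 ≤ y)
    (hN : (N : ℝ) ≤ Real.exp (Real.exp y)) :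
    ∑ n ∈ Icc 1 N, smoothLog ⌊y ^ 2⌋₊ (Nat.totient n) ≤ 62448 * (N * (y * Real.log y)) := by
  simp only [smoothLog]
  rw [sum_comm]
  calc _ ≤ ∑ q ∈ primesUpTo ⌊y ^ 2⌋₊, (N * (5204 * (3 * y))) * (Real.log q / q) := by
        refine sum_le_sum fun q hq => ?_
        have hqp := (mem_primesUpTo.1 hq).2
        have h1 := sum_factorization_totient_le hqp (by linarith) hN
        have h2 := log_primesUpTo_le (by linarith) hq
        have h3 : 0 ≤ Real.log q := Real.log_natCast_nonneg q
        rw [← sum_mul]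
        calc _ ≤ (N * (5204 * (y + Real.log q) / q)) * Real.log q := by gcongr
          _ ≤ (N * (5204 * (3 * y) / q)) * Real.log q := by gcongr; linarith
          _ = _ := by ring
    _ = (N * (5204 * (3 * y))) * ∑ q ∈ primesUpTo ⌊y ^ 2⌋₊, (Real.log q / q) := by rw [mul_sum]
    _ ≤ (N * (5204 * (3 * y))) * (4 * Real.log y) := by
        gcongr
        exact sum_log_div_sq_le hy
    _ = _ := by ring

lemma summable_five_four : Summable fun r : ℕ => ((r : ℝ) ^ (5 / 4 : ℝ))⁻¹ :=
  Real.summable_nat_rpow_inv.2 (by norm_num)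

/-- First moment of the second error term, `≪ N Σ_r log r / r²`. The exponent `5/4` is chosen so
that one convergent series serves both here and for the third error term. -/
lemma sum_square_dvd_le (N t : ℕ) :
    ∑ n ∈ Icc 1 N, ∑ r ∈ primesUpTo N, (if r ^ 2 ∣ n then smoothLog t (r - 1) else 0) ≤
      2 * (∑' r : ℕ, ((r : ℝ) ^ (5 / 4 : ℝ))⁻¹) * N := by
  rw [sum_comm]
  calc _ ≤ ∑ r ∈ primesUpTo N, 2 * N * ((r : ℝ) ^ (5 / 4 : ℝ))⁻¹ := by
        refine sum_le_sum fun r hr => ?_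
        have hrp := (mem_primesUpTo.1 hr).2
        have hr0 : (0 : ℝ) < r := by exact_mod_cast hrp.pos
        rw [← sum_filter, sum_const, nsmul_eq_mul]
        have h1 := card_multiples_le N (r ^ 2)
        have h2 := smoothLog_sub_one_le (t := t) hrp
        have h3 : Real.log r ≤ 2 * (r : ℝ) ^ (3 / 4 : ℝ) := by
          have := Real.log_le_rpow_div hr0.le (show (0 : ℝ) < 3 / 4 by norm_num)
          have h4 : 0 ≤ (r : ℝ) ^ (3 / 4 : ℝ) := by positivity
          linarith
        have h4 := smoothLog_nonneg t (r - 1)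
        calc _ ≤ ((N : ℝ) / (r ^ 2 : ℕ)) * (2 * (r : ℝ) ^ (3 / 4 : ℝ)) := by
              gcongr
              exact h2.trans h3
          _ = 2 * N * ((r : ℝ) ^ (3 / 4 : ℝ) / (r : ℝ) ^ (2 : ℝ)) := by
              rw [Real.rpow_two]; push_cast; ring
          _ = _ := by
              rw [← Real.rpow_sub hr0, ← Real.rpow_neg hr0.le]
              norm_num
    _ = 2 * N * ∑ r ∈ primesUpTo N, ((r : ℝ) ^ (5 / 4 : ℝ))⁻¹ := by rw [mul_sum]
    _ ≤ 2 * N * ∑' r : ℕ, ((r : ℝ) ^ (5 / 4 : ℝ))⁻¹ := by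
        gcongr
        exact summable_five_four.sum_le_tsum _ fun _ _ => by positivity
    _ = _ := by ring

/-- For `r > y²` the square of `recipSum N r ≪ y log r / r` contains a factor `y² / r²`; trading one
`y` for `r ^ (1/2)` and absorbing `log³ r` into `r ^ (1/4)` leaves `y` times the term of a
convergent series. -/
lemma large_prime_term_le {N r : ℕ} {y : ℝ} (hr : r.Prime) (hy : 3 ≤ y)
    (hN : (N : ℝ) ≤ Real.exp (Real.exp y)) (hry : y ^ 2 < r) :
    Real.log r * recipSum N r ^ 2 ≤ 11681280000 * y * ((r : ℝ) ^ (5 / 4 : ℝ))⁻¹ := by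
  have hr0 : (0 : ℝ) < r := by exact_mod_cast hr.pos
  have hl1 : 1 ≤ Real.log r := by
    rw [Real.le_log_iff_exp_le hr0]
    have := Real.exp_one_lt_d9
    nlinarith
  have h1 := recipSum_prime_pow_le (k := 1) hr (by linarith) hN
  rw [pow_one, pow_one] at h1
  have h2 : recipSum N r ≤ 2600 * (y * Real.log r) / r := by
    refine h1.trans ?_
    gcongr ?_ / _
    nlinarith
  have h3 : Real.log r ≤ 12 * (r : ℝ) ^ (1 / 12 : ℝ) := by
    have := Real.log_le_rpow_div hr0.le (show (0 : ℝ) < 1 / 12 by norm_num)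
    linarith
  have h4 : Real.log r ^ 3 ≤ 1728 * (r : ℝ) ^ (1 / 4 : ℝ) := by
    calc _ ≤ (12 * (r : ℝ) ^ (1 / 12 : ℝ)) ^ 3 := by gcongr
      _ = 1728 * ((r : ℝ) ^ (1 / 12 : ℝ)) ^ (3 : ℕ) := by ring
      _ = _ := by rw [← Real.rpow_natCast, ← Real.rpow_mul hr0.le]; norm_num
  have h5 : y ≤ (r : ℝ) ^ (1 / 2 : ℝ) := by
    rw [← Real.sqrt_eq_rpow]
    exact Real.le_sqrt_of_sq_le hry.le
  calc _ ≤ Real.log r * (2600 * (y * Real.log r) / r) ^ 2 := by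
        gcongr
        exact recipSum_nonneg N r
    _ = 6760000 * y * y * (Real.log r ^ 3) / (r : ℝ) ^ 2 := by ring
    _ ≤ 6760000 * y * (r : ℝ) ^ (1 / 2 : ℝ) * (1728 * (r : ℝ) ^ (1 / 4 : ℝ)) / (r : ℝ) ^ 2 := by
        gcongr
    _ = 11681280000 * y *
        ((r : ℝ) ^ (1 / 2 : ℝ) * (r : ℝ) ^ (1 / 4 : ℝ) / (r : ℝ) ^ (2 : ℝ)) := by
        rw [Real.rpow_two]; ring
    _ = _ := by
        rw [← Real.rpow_add hr0, ← Real.rpow_sub hr0, ← Real.rpow_neg hr0.le]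
        norm_num

/-- First moment of the third error term: the excess over `1` is bounded by the count itself for
`r ≤ y²`, where Mertens gives `Σ log r / r ≪ log y`, and by the number of pairs for `r > y²`. -/
lemma sum_primeDivCount_smoothLog_le {N : ℕ} {y : ℝ} (hy : 3 ≤ y)
    (hN : (N : ℝ) ≤ Real.exp (Real.exp y)) :
    ∑ n ∈ Icc 1 N, ∑ r ∈ primesUpTo N,
      ((primeDivCount n r - 1 : ℕ) : ℝ) * smoothLog ⌊y ^ 2⌋₊ (r - 1) ≤
      15600 * (N * (y * Real.log y)) +
        11681280000 * (∑' r : ℕ, ((r : ℝ) ^ (5 / 4 : ℝ))⁻¹) * (N * y) := by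
  set t := ⌊y ^ 2⌋₊ with ht
  rw [sum_comm]
  have key : ∀ r ∈ primesUpTo N,
      ∑ n ∈ Icc 1 N, ((primeDivCount n r - 1 : ℕ) : ℝ) * smoothLog t (r - 1) ≤
      (if r ∈ primesUpTo t then (N * (3900 * y)) * (Real.log r / r) else 0) +
      N * (11681280000 * y) * ((r : ℝ) ^ (5 / 4 : ℝ))⁻¹ := by
    intro r hr
    have hrp := (mem_primesUpTo.1 hr).2
    have hr0 : (0 : ℝ) < r := by exact_mod_cast hrp.pos
    have hw := smoothLog_sub_one_le (t := t) hrp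
    have hw0 := smoothLog_nonneg t (r - 1)
    have hl0 : 0 ≤ Real.log r := Real.log_natCast_nonneg r
    rw [← sum_mul]
    by_cases hrt : r ∈ primesUpTo t
    · rw [if_pos hrt]
      have h1 : ∑ n ∈ Icc 1 N, ((primeDivCount n r - 1 : ℕ) : ℝ) ≤ N * recipSum N r := by
        refine (sum_le_sum fun n _ => ?_).trans (sum_primeDivCount_le N r)
        exact_mod_cast Nat.sub_le _ _
      have h2 := recipSum_prime_pow_le (k := 1) hrp (by linarith) hN
      rw [pow_one, pow_one] at h2
      have h3 := log_primesUpTo_le (by linarith) hrt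
      have h4 : recipSum N r ≤ 3900 * y / r := by
        refine h2.trans ?_
        gcongr ?_ / _
        linarith
      have h5 : 0 ≤ N * (11681280000 * y) * ((r : ℝ) ^ (5 / 4 : ℝ))⁻¹ := by positivity
      calc _ ≤ (N * (3900 * y / r)) * Real.log r := by
            gcongr
            exact h1.trans (by gcongr)
        _ = (N * (3900 * y)) * (Real.log r / r) := by ring
        _ ≤ _ := by linarith
    · rw [if_neg hrt, zero_add]
      have hry : y ^ 2 < r := by
        by_contra h
        refine hrt (mem_primesUpTo.2 ⟨?_, hrp⟩)
        rw [ht, Nat.le_floor_iff (by positivity)]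
        linarith
      calc _ ≤ (N * recipSum N r ^ 2) * Real.log r := by
            gcongr
            exact sum_primeDivCount_sub_one_le N r
        _ = N * (Real.log r * recipSum N r ^ 2) := by ring
        _ ≤ N * (11681280000 * y * ((r : ℝ) ^ (5 / 4 : ℝ))⁻¹) := by
            exact mul_le_mul_of_nonneg_left (large_prime_term_le hrp hy hN hry) (Nat.cast_nonneg N)
        _ = _ := by ring
  refine (sum_le_sum key).trans ?_
  rw [sum_add_distrib]
  have h1 : ∑ r ∈ primesUpTo N,
      (if r ∈ primesUpTo t then (N * (3900 * y)) * (Real.log r / r) else 0) ≤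
      15600 * (N * (y * Real.log y)) := by
    rw [← sum_filter]
    calc _ ≤ ∑ r ∈ primesUpTo t, (N * (3900 * y)) * (Real.log r / r) := by
          refine sum_le_sum_of_subset_of_nonneg (fun r hr => (mem_filter.1 hr).2) fun r _ _ => ?_
          have := Real.log_natCast_nonneg r
          positivity
      _ = (N * (3900 * y)) * ∑ r ∈ primesUpTo t, (Real.log r / r) := by rw [mul_sum]
      _ ≤ (N * (3900 * y)) * (4 * Real.log y) := by
          gcongr
          exact sum_log_div_sq_le hy
      _ = _ := by ring
  have h2 : ∑ r ∈ primesUpTo N, N * (11681280000 * y) * ((r : ℝ) ^ (5 / 4 : ℝ))⁻¹ ≤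
      11681280000 * (∑' r : ℕ, ((r : ℝ) ^ (5 / 4 : ℝ))⁻¹) * (N * y) := by
    rw [← mul_sum]
    calc _ ≤ N * (11681280000 * y) * ∑' r : ℕ, ((r : ℝ) ^ (5 / 4 : ℝ))⁻¹ := by
          gcongr
          exact summable_five_four.sum_le_tsum _ fun _ _ => by positivity
      _ = _ := by ring
  exact add_le_add h1 h2

/-! ### The first moment of the error -/

/-- The first moment of the error is `O(N y log y)`, uniformly for `log log N ≤ y`. -/
lemma exists_sum_abs_sub_le : ∃ C : ℝ, 0 ≤ C ∧ ∀ (N : ℕ) (y : ℝ), 3 ≤ y →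
    (N : ℝ) ≤ Real.exp (Real.exp y) →
    ∑ n ∈ Icc 1 N, |smoothLog ⌊y ^ 2⌋₊ (Nat.totient (Nat.totient n)) -
      ∑ p ∈ n.primeFactors, ∑ r ∈ (p - 1).primeFactors, smoothLog ⌊y ^ 2⌋₊ (r - 1)| ≤
    C * (N * (y * Real.log y)) := by
  set Z : ℝ := ∑' r : ℕ, ((r : ℝ) ^ (5 / 4 : ℝ))⁻¹ with hZ
  have hZ0 : 0 ≤ Z := tsum_nonneg fun r => by positivity
  refine ⟨78048 + 11681280002 * Z, by positivity, fun N y hy hN => ?_⟩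
  have h1 := sum_smoothLog_totient_le hy hN
  have h2 := sum_square_dvd_le N ⌊y ^ 2⌋₊
  have h3 := sum_primeDivCount_smoothLog_le hy hN
  rw [← hZ] at h2 h3
  have hlog : 1 ≤ Real.log y := by
    rw [Real.le_log_iff_exp_le (by linarith)]
    linarith [Real.exp_one_lt_three]
  have h4 : y ≤ y * Real.log y := le_mul_of_one_le_right (by linarith) hlog
  have hN0 : (0 : ℝ) ≤ N := N.cast_nonneg
  have h5 : N * y ≤ N * (y * Real.log y) := mul_le_mul_of_nonneg_left h4 hN0
  have h6 : (N : ℝ) ≤ N * (y * Real.log y) :=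
    le_mul_of_one_le_right hN0 (by linarith)
  have h7 := mul_le_mul_of_nonneg_left h5 hZ0
  have h8 := mul_le_mul_of_nonneg_left h6 hZ0
  calc _ ≤ ∑ n ∈ Icc 1 N, (smoothLog ⌊y ^ 2⌋₊ (Nat.totient n) +
      ∑ r ∈ primesUpTo N, (if r ^ 2 ∣ n then smoothLog ⌊y ^ 2⌋₊ (r - 1) else 0) +
      ∑ r ∈ primesUpTo N,
        ((primeDivCount n r - 1 : ℕ) : ℝ) * smoothLog ⌊y ^ 2⌋₊ (r - 1)) :=
        sum_le_sum fun n hn => abs_smoothLog_sub_le (mem_Icc.1 hn).1 (mem_Icc.1 hn).2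
    _ ≤ _ := by
        rw [sum_add_distrib, sum_add_distrib]
        linarith

end

/-! ### Conclusion -/

/-- For any `ψ` tending to infinity, the number of `n ≤ x` with
`|Σ_{q ≤ (log log x)²} v_q(φ(φ(n))) log q − h_x(n)| > ψ(x) log log x log log log x`
is `o(x)`. -/
theorem h_good_approximation (ψ : ℝ → ℝ)
    (hψ : Filter.Tendsto ψ Filter.atTop Filter.atTop) :
    Filter.Tendsto (fun x : ℝ =>
      (Set.ncard {n : ℕ | 1 ≤ n ∧ (n : ℝ) ≤ x ∧
        |(∑ᶠ (q : ℕ) (_ : q.Prime ∧ (q : ℝ) ≤ (Real.log (Real.log x))^2),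
            ((Nat.totient (Nat.totient n)).factorization q : ℝ) * Real.log q) - hAux x n| >
          ψ x * (Real.log (Real.log x) * Real.log (Real.log (Real.log x)))} : ℝ) / x)
      Filter.atTop (nhds 0) := by
  obtain ⟨C, hC, hmean⟩ := exists_sum_abs_sub_le
  refine squeeze_zero' (g := fun x => C / ψ x) ?_ ?_ (hψ.const_div_atTop C)
  · filter_upwards [Filter.eventually_ge_atTop 0] with x hx
    positivity
  have hy : Filter.Tendsto (fun x => Real.log (Real.log x)) Filter.atTop Filter.atTop :=
    Real.tendsto_log_atTop.comp Real.tendsto_log_atTop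
  filter_upwards [hψ.eventually_gt_atTop 0, hy.eventually_ge_atTop 3,
    Filter.eventually_gt_atTop 1] with x hψx hy3 hx1
  have hx0 : 0 < x := by linarith
  simp only [hAux, finsum_eq_smoothLog (sq_nonneg (Real.log (Real.log x)))]
  set y := Real.log (Real.log x) with hydef
  have hxy : Real.exp (Real.exp y) = x := by
    rw [hydef, Real.exp_log (Real.log_pos hx1), Real.exp_log hx0]
  have hNx : (⌊x⌋₊ : ℝ) ≤ x := Nat.floor_le hx0.le
  have hmean' := hmean ⌊x⌋₊ y hy3 (by rw [hxy]; exact hNx)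
  set D : ℕ → ℝ := fun n => |smoothLog ⌊y ^ 2⌋₊ (Nat.totient (Nat.totient n)) -
      ∑ p ∈ n.primeFactors, ∑ r ∈ (p - 1).primeFactors, smoothLog ⌊y ^ 2⌋₊ (r - 1)|
  have hlogy : 0 < Real.log y := Real.log_pos (by linarith)
  have hyl : 0 < y * Real.log y := by positivity
  have hset : {n : ℕ | 1 ≤ n ∧ (n : ℝ) ≤ x ∧ D n > ψ x * (y * Real.log y)} =
      ((Finset.Icc 1 ⌊x⌋₊).filter fun n => ψ x * (y * Real.log y) < D n : Finset ℕ) := by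
    ext n
    simp only [Set.mem_ofPred_eq, Finset.coe_filter, Finset.mem_Icc, Nat.le_floor_iff hx0.le,
      and_assoc, gt_iff_lt]
  rw [hset, Set.ncard_coe_finset]
  set B := (Finset.Icc 1 ⌊x⌋₊).filter fun n => ψ x * (y * Real.log y) < D n
  -- Markov's inequality.
  have hmarkov : (B.card : ℝ) * (ψ x * (y * Real.log y)) ≤ C * (x * (y * Real.log y)) := by
    calc (B.card : ℝ) * (ψ x * (y * Real.log y)) = ∑ _n ∈ B, ψ x * (y * Real.log y) := by
          rw [Finset.sum_const, nsmul_eq_mul]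
      _ ≤ ∑ n ∈ B, D n := Finset.sum_le_sum fun n hn => (Finset.mem_filter.1 hn).2.le
      _ ≤ ∑ n ∈ Finset.Icc 1 ⌊x⌋₊, D n :=
          Finset.sum_le_sum_of_subset_of_nonneg (Finset.filter_subset _ _)
            fun n _ _ => abs_nonneg _
      _ ≤ C * (⌊x⌋₊ * (y * Real.log y)) := hmean'
      _ ≤ _ := by gcongr
  rw [div_le_div_iff₀ hx0 hψx]
  refine le_of_mul_le_mul_right ?_ hyl
  linarith
end

section
/- There is a constant C > 0 such that for every real x > e^{e^e}, every prime q, and every integer a ≥ 1, the number of positive integers n ≤ x for which q^a divides λ(λ(n)) is at most C·x·(log log x)²/q^a. -/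
open Finset

/-! ### Möbius inversion and counting in residue classes -/

/-- Dual Möbius inversion (over multiples) on a finite divisor-closed set. -/
theorem moebius_inversion_on (F : Finset ℕ) (hpos : ∀ d ∈ F, 0 < d)
    (hcl : ∀ g ∈ F, ∀ d, d ∣ g → d ∈ F) (y : ℕ → ℝ) (f : ℕ) (hf : f ∈ F) :
    ∑ d ∈ F with f ∣ d, ∑ g ∈ F with d ∣ g,
      (ArithmeticFunction.moebius (g / d) : ℝ) * y g = y f := by
  have hin : ∀ g ∈ F, ∑ d ∈ F with (f ∣ d ∧ d ∣ g),
      (ArithmeticFunction.moebius (g / d) : ℝ) = if g = f then 1 else 0 := by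
    intro g hg
    by_cases hfg : f ∣ g
    · have hg0 := hpos g hg
      have hf0 := hpos f hf
      have h1 : ∑ d ∈ F with (f ∣ d ∧ d ∣ g), (ArithmeticFunction.moebius (g / d) : ℝ)
          = ∑ e ∈ (g / f).divisors, (ArithmeticFunction.moebius e : ℝ) := by
        refine Finset.sum_nbij' (fun d => g / d) (fun e => g / e) ?_ ?_ ?_ ?_ ?_
        · intro d hd
          simp only [mem_filter] at hd
          rw [Nat.mem_divisors]
          exact ⟨Nat.div_dvd_div_left hd.2.2 hd.2.1,
            (Nat.div_pos (Nat.le_of_dvd hg0 hfg) hf0).ne'⟩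
        · intro e he
          rw [Nat.mem_divisors] at he
          have heg : e ∣ g := he.1.trans (Nat.div_dvd_of_dvd hfg)
          simp only [mem_filter]
          refine ⟨hcl g hg _ (Nat.div_dvd_of_dvd heg), ?_, Nat.div_dvd_of_dvd heg⟩
          have := Nat.div_dvd_div_left (Nat.div_dvd_of_dvd hfg) he.1
          rwa [Nat.div_div_self hfg hg0.ne'] at this
        · intro d hd
          simp only [mem_filter] at hd
          exact Nat.div_div_self hd.2.2 hg0.ne'
        · intro e he
          rw [Nat.mem_divisors] at he
          exact Nat.div_div_self (he.1.trans (Nat.div_dvd_of_dvd hfg)) hg0.ne'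
        · intro d hd; rfl
      rw [h1]
      have h2 : ∑ e ∈ (g / f).divisors, ArithmeticFunction.moebius e
          = (1 : ArithmeticFunction ℤ) (g / f) := by
        rw [← ArithmeticFunction.coe_zeta_mul_moebius, ArithmeticFunction.coe_zeta_mul_apply]
      have h3 : g / f = 1 ↔ g = f := by
        rw [Nat.div_eq_iff_eq_mul_left hf0 hfg, one_mul]
      rw [← Int.cast_sum, h2, ArithmeticFunction.one_apply, if_congr h3 rfl rfl]
      split_ifs <;> simp
    · rw [if_neg (fun h : g = f => hfg (h ▸ dvd_rfl))]
      apply Finset.sum_eq_zero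
      intro d hd
      simp only [mem_filter] at hd
      exact absurd (hd.2.1.trans hd.2.2) hfg
  calc _ = ∑ d ∈ F, ∑ g ∈ F, if f ∣ d ∧ d ∣ g then
        (ArithmeticFunction.moebius (g / d) : ℝ) * y g else 0 := by
        rw [Finset.sum_filter]
        refine Finset.sum_congr rfl fun d _ => ?_
        by_cases h : f ∣ d <;> simp [h, Finset.sum_filter]
    _ = ∑ g ∈ F, (∑ d ∈ F with (f ∣ d ∧ d ∣ g),
        (ArithmeticFunction.moebius (g / d) : ℝ)) * y g := by
        rw [Finset.sum_comm]
        refine Finset.sum_congr rfl fun g _ => ?_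
        rw [Finset.sum_mul, Finset.sum_filter]
    _ = ∑ g ∈ F, (if g = f then 1 else 0) * y g :=
        Finset.sum_congr rfl fun g hg => by rw [hin g hg]
    _ = y f := by simp [hf]

/-- For `d` coprime to `m`, the condition `d ∣ 1 + k * m` selects one residue class of `k`
modulo `d`. -/
theorem abs_count_sub_le (d m K : ℕ) (hd : 0 < d) (hdm : d.Coprime m) :
    |(#{k ∈ range K | d ∣ 1 + k * m} : ℝ) - K / d| ≤ 1 := by
  have : NeZero d := ⟨hd.ne'⟩
  obtain ⟨v, hv⟩ : ∃ v : ℕ, d ∣ 1 + v * m := by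
    refine ⟨(-(m : ZMod d)⁻¹).val, ?_⟩
    rw [← ZMod.natCast_eq_zero_iff]
    push_cast
    rw [ZMod.natCast_val, ZMod.cast_id, neg_mul, mul_comm, ZMod.coe_mul_inv_eq_one m hdm.symm]
    ring
  have h1 : #{k ∈ range K | d ∣ 1 + k * m} = Nat.count (· ≡ v [MOD d]) K := by
    rw [Nat.count_eq_card_filter_range]
    congr 1
    refine Finset.filter_congr fun k _ => ?_
    have key : (d ∣ 1 + k * m) ↔ 1 + k * m ≡ 1 + v * m [MOD d] := by
      rw [← Nat.modEq_zero_iff_dvd]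
      have h0 : 1 + v * m ≡ 0 [MOD d] := Nat.modEq_zero_iff_dvd.2 hv
      exact ⟨fun h => h.trans h0.symm, fun h => h.trans h0⟩
    rw [key]
    constructor
    · intro h
      exact Nat.ModEq.cancel_right_of_coprime hdm (Nat.ModEq.add_left_cancel' 1 h)
    · intro h
      exact (h.mul_right m).add_left 1
  rw [h1, Nat.count_modEq_card _ hd]
  have hd' : (0 : ℝ) < d := by exact_mod_cast hd
  have h2 : (K : ℝ) / d = (K / d : ℕ) + ((K % d : ℕ) : ℝ) / d := by
    have h3 : (d : ℝ) * (K / d : ℕ) + (K % d : ℕ) = K := by exact_mod_cast Nat.div_add_mod K d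
    rw [← h3]
    field_simp
  have h4 : ((K % d : ℕ) : ℝ) / d ≤ 1 := by
    rw [div_le_one hd']; exact_mod_cast (Nat.mod_lt K hd).le
  have h5 : 0 ≤ ((K % d : ℕ) : ℝ) / d := by positivity
  rw [h2, abs_le]
  push_cast
  split_ifs <;> constructor <;> simp <;> linarith

/-! ### The Selberg sieve -/

/-- The admissible moduli of the sieve: squarefree `d ≤ z` not divisible by `q`. -/
def sieveSupport (q z : ℕ) : Finset ℕ := {d ∈ Icc 1 z | Squarefree d ∧ ¬ q ∣ d}

/-- The sum of `1 / f` over the admissible moduli. -/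
noncomputable def sieveMass (q z : ℕ) : ℝ := ∑ f ∈ sieveSupport q z, (1 : ℝ) / f

/-- The dual variables `y_f = μ(f) / (f S)` that diagonalise the quadratic form, with
`S = sieveMass q z`. The factor `f` replaces Selberg's optimal `φ(f)`. -/
noncomputable def dualWeight (q z f : ℕ) : ℝ :=
  ArithmeticFunction.moebius f / (f * sieveMass q z)

/-- The Selberg weights `d ∑ μ(g / d) y_g`, summed over the admissible multiples `g` of `d`. They
vanish for inadmissible `d`, all of whose multiples are inadmissible as well. -/
noncomputable def sieveWeight (q z d : ℕ) : ℝ :=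
  d * ∑ g ∈ sieveSupport q z with d ∣ g,
    (ArithmeticFunction.moebius (g / d) : ℝ) * dualWeight q z g

theorem sieveSupport_pos {q z d : ℕ} (h : d ∈ sieveSupport q z) : 0 < d := by
  simp only [sieveSupport, mem_filter, mem_Icc] at h
  omega

theorem sieveSupport_of_dvd {q z g d : ℕ} (h : g ∈ sieveSupport q z) (hd : d ∣ g) :
    d ∈ sieveSupport q z := by
  simp only [sieveSupport, mem_filter, mem_Icc] at h ⊢
  have h0 : 0 < g := h.1.1
  exact ⟨⟨Nat.pos_of_dvd_of_pos hd h0, (Nat.le_of_dvd h0 hd).trans h.1.2⟩,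
    h.2.1.squarefree_of_dvd hd, fun hq => h.2.2 (hq.trans hd)⟩

theorem one_mem_sieveSupport {q z : ℕ} (hq : q.Prime) (hz : 1 ≤ z) : 1 ∈ sieveSupport q z := by
  simp only [sieveSupport, mem_filter, mem_Icc]
  exact ⟨⟨le_rfl, hz⟩, squarefree_one, hq.one_lt.ne' ∘ Nat.dvd_one.1⟩

theorem sieveMass_pos {q z : ℕ} (hq : q.Prime) (hz : 1 ≤ z) : 0 < sieveMass q z := by
  refine Finset.sum_pos (fun f hf => ?_) ⟨1, one_mem_sieveSupport hq hz⟩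
  have : (0 : ℝ) < f := by exact_mod_cast sieveSupport_pos hf
  positivity

/-- The weights solve the triangular system defining them in terms of the dual variables. -/
theorem sum_sieveWeight_div {q z f : ℕ} (hf : f ∈ sieveSupport q z) :
    ∑ d ∈ sieveSupport q z with f ∣ d, sieveWeight q z d / d = dualWeight q z f := by
  rw [← moebius_inversion_on (sieveSupport q z) (fun _ => sieveSupport_pos)
    (fun g hg d hd => sieveSupport_of_dvd hg hd) (dualWeight q z) f hf]
  refine Finset.sum_congr rfl fun d hd => ?_
  have : (d : ℝ) ≠ 0 := by
    exact_mod_cast (sieveSupport_pos (mem_filter.1 hd).1).ne'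
  rw [sieveWeight, mul_div_cancel_left₀ _ this]

theorem sieveWeight_one {q z : ℕ} (hq : q.Prime) (hz : 1 ≤ z) : sieveWeight q z 1 = 1 := by
  have hS := sieveMass_pos hq hz
  have h : ∀ g ∈ sieveSupport q z, (ArithmeticFunction.moebius (g / 1) : ℝ) * dualWeight q z g
      = 1 / g / sieveMass q z := by
    intro g hg
    have hsq : Squarefree g := (mem_filter.1 hg).2.1
    have h1 : (ArithmeticFunction.moebius g : ℝ) ^ 2 = 1 := by
      exact_mod_cast ArithmeticFunction.moebius_sq_eq_one_of_squarefree hsq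
    have hg0 : (g : ℝ) ≠ 0 := by exact_mod_cast (sieveSupport_pos hg).ne'
    rw [Nat.div_one, dualWeight]
    field_simp
    exact h1
  rw [sieveWeight, Finset.filter_true_of_mem (fun g _ => one_dvd g), Finset.sum_congr rfl h,
    ← Finset.sum_div]
  change ((1 : ℕ) : ℝ) * (sieveMass q z / sieveMass q z) = 1
  rw [div_self hS.ne']; simp

theorem abs_moebius_real_le_one (n : ℕ) : |(ArithmeticFunction.moebius n : ℝ)| ≤ 1 := by
  exact_mod_cast ArithmeticFunction.abs_moebius_le_one (n := n)

/-- A crude bound, obtained by taking absolute values in the definition of the weights; it costs only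
a power of `z` in the error term. -/
theorem abs_sieveWeight_le {q z : ℕ} (hq : q.Prime) (hz : 1 ≤ z) (d : ℕ) :
    |sieveWeight q z d| ≤ d := by
  have hS := sieveMass_pos hq hz
  rw [sieveWeight, abs_mul, Nat.abs_cast]
  refine mul_le_of_le_one_right (Nat.cast_nonneg d) ?_
  calc _ ≤ ∑ g ∈ sieveSupport q z with d ∣ g,
        |(ArithmeticFunction.moebius (g / d) : ℝ) * dualWeight q z g| := abs_sum_le_sum_abs _ _
    _ ≤ ∑ g ∈ sieveSupport q z with d ∣ g, 1 / (g : ℝ) / sieveMass q z := by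
        refine Finset.sum_le_sum fun g _ => ?_
        rw [dualWeight, abs_mul, abs_div, abs_of_nonneg (by positivity : 0 ≤ g * sieveMass q z),
          div_div, ← mul_div_assoc]
        refine div_le_div_of_nonneg_right ?_ (by positivity)
        exact mul_le_one₀ (abs_moebius_real_le_one _) (abs_nonneg _) (abs_moebius_real_le_one _)
    _ ≤ ∑ g ∈ sieveSupport q z, 1 / (g : ℝ) / sieveMass q z :=
        Finset.sum_le_sum_of_subset_of_nonneg (filter_subset _ _) fun _ _ _ => by positivity
    _ = 1 := by
        rw [← Finset.sum_div]; exact div_self (ne_of_gt hS)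

/-- The main term of the sieve. Writing `1 / lcm d e = gcd d e / (d e)` and expanding
`gcd d e = ∑ φ(f)` over common divisors turns the form into `∑ φ(f) y_f ^ 2`. -/
theorem quadratic_form_le {q z : ℕ} (hq : q.Prime) (hz : 1 ≤ z) :
    ∑ d ∈ sieveSupport q z, ∑ e ∈ sieveSupport q z,
      sieveWeight q z d * sieveWeight q z e / (d.lcm e : ℕ) ≤ 1 / sieveMass q z := by
  have hS := sieveMass_pos hq hz
  have hterm : ∀ d ∈ sieveSupport q z, ∀ e ∈ sieveSupport q z,
      sieveWeight q z d * sieveWeight q z e / (d.lcm e : ℕ) =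
      ∑ f ∈ sieveSupport q z, (f.totient : ℝ) *
        ((if f ∣ d then sieveWeight q z d / d else 0) *
          (if f ∣ e then sieveWeight q z e / e else 0)) := by
    intro d hd e he
    have hd0 : (d : ℝ) ≠ 0 := by exact_mod_cast (sieveSupport_pos hd).ne'
    have he0 : (e : ℝ) ≠ 0 := by exact_mod_cast (sieveSupport_pos he).ne'
    have hl0 : ((d.lcm e : ℕ) : ℝ) ≠ 0 := by
      exact_mod_cast Nat.lcm_ne_zero (sieveSupport_pos hd).ne' (sieveSupport_pos he).ne'
    have hgl : ((d.gcd e : ℕ) : ℝ) * (d.lcm e : ℕ) = d * e := by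
      exact_mod_cast Nat.gcd_mul_lcm d e
    have hset : {f ∈ sieveSupport q z | f ∣ d ∧ f ∣ e} = (d.gcd e).divisors := by
      ext f
      simp only [mem_filter, Nat.mem_divisors, Nat.dvd_gcd_iff]
      exact ⟨fun h => ⟨h.2, (Nat.gcd_pos_of_pos_left _ (sieveSupport_pos hd)).ne'⟩,
        fun h => ⟨sieveSupport_of_dvd hd h.1.1, h.1⟩⟩
    have hg : ((d.gcd e : ℕ) : ℝ) = ∑ f ∈ sieveSupport q z with (f ∣ d ∧ f ∣ e),
        (f.totient : ℝ) := by
      rw [hset]; exact_mod_cast (Nat.sum_totient (d.gcd e)).symm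
    calc _ = ((d.gcd e : ℕ) : ℝ) * (sieveWeight q z d / d * (sieveWeight q z e / e)) := by
          field_simp
          linear_combination (-(sieveWeight q z d * sieveWeight q z e)) * hgl
      _ = _ := by
          rw [hg, Finset.sum_filter, Finset.sum_mul]
          refine Finset.sum_congr rfl fun f _ => ?_
          by_cases h1 : f ∣ d <;> by_cases h2 : f ∣ e <;> simp [h1, h2]
  calc _ = ∑ f ∈ sieveSupport q z, (f.totient : ℝ) * dualWeight q z f ^ 2 := by
        rw [Finset.sum_congr rfl fun d hd => Finset.sum_congr rfl fun e he => hterm d hd e he]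
        rw [Finset.sum_congr rfl fun d _ => Finset.sum_comm, Finset.sum_comm]
        refine Finset.sum_congr rfl fun f hf => ?_
        rw [← sum_sieveWeight_div hf, sq, Finset.sum_filter, Finset.sum_mul_sum, Finset.mul_sum]
        refine Finset.sum_congr rfl fun d _ => ?_
        rw [Finset.mul_sum]
    _ ≤ ∑ f ∈ sieveSupport q z, (1 : ℝ) / f / sieveMass q z ^ 2 := by
        refine Finset.sum_le_sum fun f hf => ?_
        have hf0 : (0 : ℝ) < f := by exact_mod_cast sieveSupport_pos hf
        have h1 : (f.totient : ℝ) ≤ f := by exact_mod_cast Nat.totient_le f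
        have h2 : (ArithmeticFunction.moebius f : ℝ) ^ 2 ≤ 1 :=
          (sq_le_one_iff_abs_le_one _).2 (abs_moebius_real_le_one f)
        rw [dualWeight]
        calc _ = (f.totient * (ArithmeticFunction.moebius f : ℝ) ^ 2) /
              (f ^ 2 * sieveMass q z ^ 2) := by ring
          _ ≤ (f * 1) / (f ^ 2 * sieveMass q z ^ 2) := by gcongr
          _ = _ := by field_simp
    _ = 1 / sieveMass q z := by
        rw [← Finset.sum_div, ← sieveMass]
        field_simp

/-- Selberg's upper bound for the primes `1 + k * m` with `k < K`, where every prime dividing `m`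
equals `q` (this is what the hypothesis `hm` is used for). -/
theorem card_prime_le {q m z : ℕ} (hq : q.Prime) (hz : 1 ≤ z) (hm0 : 0 < m)
    (hm : ∀ d : ℕ, ¬ q ∣ d → d.Coprime m) (K : ℕ) :
    (#{k ∈ range K | (1 + k * m).Prime} : ℝ) ≤ z + K / sieveMass q z + (z : ℝ) ^ 4 := by
  set F := sieveSupport q z with hF
  set w := sieveWeight q z with hw
  set T : ℕ → ℝ := fun k => ∑ d ∈ F, if d ∣ 1 + k * m then w d else 0 with hT
  have hsplit : #{k ∈ range K | (1 + k * m).Prime} ≤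
      z + #{k ∈ range K | (1 + k * m).Prime ∧ z < 1 + k * m} := by
    calc _ ≤ #(range z ∪ {k ∈ range K | (1 + k * m).Prime ∧ z < 1 + k * m}) := by
          refine Finset.card_le_card fun k hk => ?_
          simp only [mem_union, mem_filter, mem_range] at hk ⊢
          by_cases h : z < 1 + k * m
          · exact Or.inr ⟨hk.1, hk.2, h⟩
          · left
            have := Nat.le_mul_of_pos_right k hm0
            omega
      _ ≤ _ := (card_union_le _ _).trans (by rw [card_range])
  -- The only admissible divisor of a prime exceeding `z` is `1`.
  have hone : ∀ k, (1 + k * m).Prime ∧ z < 1 + k * m → T k = 1 := by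
    rintro k ⟨hp, hlt⟩
    rw [hT, ← sieveWeight_one hq hz]
    dsimp only
    rw [Finset.sum_eq_single_of_mem 1 (one_mem_sieveSupport hq hz)]
    · simp [hw]
    · intro d hd hd1
      rw [if_neg]
      intro hdvd
      rcases (Nat.dvd_prime hp).1 hdvd with h | h
      · exact hd1 h
      · have := (mem_Icc.1 (mem_filter.1 hd).1).2
        omega
  have hsq : (#{k ∈ range K | (1 + k * m).Prime ∧ z < 1 + k * m} : ℝ) ≤
      ∑ k ∈ range K, T k ^ 2 := by
    rw [← Finset.sum_boole]
    refine Finset.sum_le_sum fun k _ => ?_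
    split_ifs with h
    · rw [hone k h]; norm_num
    · positivity
  have hexp : ∑ k ∈ range K, T k ^ 2 = ∑ d ∈ F, ∑ e ∈ F,
      w d * w e * (#{k ∈ range K | d.lcm e ∣ 1 + k * m} : ℝ) := by
    have h1 : ∀ k, T k ^ 2 = ∑ d ∈ F, ∑ e ∈ F,
        w d * w e * (if d.lcm e ∣ 1 + k * m then 1 else 0) := by
      intro k
      rw [sq, hT]
      dsimp only
      rw [Finset.sum_mul_sum]
      refine Finset.sum_congr rfl fun d _ => Finset.sum_congr rfl fun e _ => ?_
      by_cases h1 : d ∣ 1 + k * m <;> by_cases h2 : e ∣ 1 + k * m <;>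
        simp [h1, h2, Nat.lcm_dvd_iff]
    rw [Finset.sum_congr rfl fun k _ => h1 k, Finset.sum_comm]
    refine Finset.sum_congr rfl fun d _ => ?_
    rw [Finset.sum_comm]
    refine Finset.sum_congr rfl fun e _ => ?_
    rw [← Finset.mul_sum, Finset.sum_boole]
  have hle : ∀ d ∈ F, ∀ e ∈ F, w d * w e * (#{k ∈ range K | d.lcm e ∣ 1 + k * m} : ℝ) ≤
      K * (w d * w e / (d.lcm e : ℕ)) + z * z := by
    intro d hd e he
    have hd' := mem_filter.1 hd
    have he' := mem_filter.1 he
    have hdz : (d : ℝ) ≤ z := by exact_mod_cast (mem_Icc.1 hd'.1).2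
    have hez : (e : ℝ) ≤ z := by exact_mod_cast (mem_Icc.1 he'.1).2
    have hcop : (d.lcm e).Coprime m := by
      refine hm _ fun h => ?_
      rcases hq.dvd_mul.1 (h.trans (Nat.lcm_dvd_mul d e)) with h | h
      · exact hd'.2.2 h
      · exact he'.2.2 h
    have hc := abs_count_sub_le (d.lcm e) m K
      (Nat.lcm_pos (sieveSupport_pos hd) (sieveSupport_pos he)) hcop
    have hww : |w d * w e| ≤ z * z := by
      rw [abs_mul]
      exact mul_le_mul ((abs_sieveWeight_le hq hz d).trans hdz)
        ((abs_sieveWeight_le hq hz e).trans hez) (abs_nonneg _) (by positivity)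
    have h2 : w d * w e * ((#{k ∈ range K | d.lcm e ∣ 1 + k * m} : ℝ) - K / (d.lcm e : ℕ))
        ≤ z * z := by
      refine (le_abs_self _).trans ?_
      rw [abs_mul]
      exact (mul_le_mul hww hc (abs_nonneg _) (by positivity)).trans_eq (mul_one _)
    have h3 : (K : ℝ) * (w d * w e / (d.lcm e : ℕ)) = w d * w e * (K / (d.lcm e : ℕ)) := by ring
    rw [h3]
    linarith
  have hFc : (#F : ℝ) ≤ z := by
    have : #F ≤ #(Icc 1 z) := card_le_card (filter_subset _ _)
    rw [Nat.card_Icc, Nat.add_sub_cancel] at this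
    exact_mod_cast this
  have hfin : ∑ k ∈ range K, T k ^ 2 ≤ K / sieveMass q z + (z : ℝ) ^ 4 := by
    rw [hexp]
    calc _ ≤ ∑ d ∈ F, ∑ e ∈ F, (K * (w d * w e / (d.lcm e : ℕ)) + z * z) :=
          Finset.sum_le_sum fun d hd => Finset.sum_le_sum fun e he => hle d hd e he
      _ = K * (∑ d ∈ F, ∑ e ∈ F, w d * w e / (d.lcm e : ℕ)) + #F * (#F * (z * z)) := by
          simp only [Finset.sum_add_distrib, Finset.sum_const, nsmul_eq_mul, Finset.mul_sum]
      _ ≤ K * (1 / sieveMass q z) + z * (z * (z * z)) := by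
          gcongr
          exact quadratic_form_le hq hz
      _ = _ := by ring
  have : (#{k ∈ range K | (1 + k * m).Prime} : ℝ) ≤
      z + #{k ∈ range K | (1 + k * m).Prime ∧ z < 1 + k * m} := by exact_mod_cast hsplit
  linarith

/-! ### Lower bound for the sieve mass -/

/-- The multiples of `q` contribute at most `1 / q ≤ 1 / 2` of the harmonic sum. -/
theorem sum_inv_le_two_mul_coprime {q : ℕ} (hq : q.Prime) (z : ℕ) :
    ∑ n ∈ Icc 1 z, (1 : ℝ) / n ≤ 2 * ∑ n ∈ Icc 1 z with ¬ q ∣ n, (1 : ℝ) / n := by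
  have h1 : ∑ n ∈ Icc 1 z with q ∣ n, (1 : ℝ) / n ≤ (∑ n ∈ Icc 1 z, (1 : ℝ) / n) / 2 := by
    calc _ ≤ ∑ n ∈ (Icc 1 z).image (q * ·), (1 : ℝ) / n := by
          refine Finset.sum_le_sum_of_subset_of_nonneg (fun n hn => ?_)
            fun _ _ _ => by positivity
          simp only [mem_filter, mem_Icc, mem_image] at hn ⊢
          obtain ⟨⟨hn1, hn2⟩, k, rfl⟩ := hn
          refine ⟨k, ⟨Nat.pos_of_mul_pos_left hn1, ?_⟩, rfl⟩
          exact (Nat.le_mul_of_pos_left k hq.pos).trans hn2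
      _ = ∑ n ∈ Icc 1 z, (1 : ℝ) / (q * n : ℕ) :=
          Finset.sum_image fun a _ b _ h => Nat.eq_of_mul_eq_mul_left hq.pos h
      _ ≤ ∑ n ∈ Icc 1 z, (1 : ℝ) / n / 2 := by
          refine Finset.sum_le_sum fun n hn => ?_
          have hn0 : (0 : ℝ) < n := by exact_mod_cast (mem_Icc.1 hn).1
          have hq2 : (2 : ℝ) ≤ q := by exact_mod_cast hq.two_le
          rw [div_div, Nat.cast_mul]
          refine one_div_le_one_div_of_le (by positivity) ?_
          nlinarith
      _ = _ := by rw [Finset.sum_div]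
  have h2 := Finset.sum_filter_add_sum_filter_not (Icc 1 z) (q ∣ ·) (fun n => (1 : ℝ) / n)
  linarith

theorem sum_inv_sq_le_two (z : ℕ) : ∑ b ∈ Icc 1 z, (1 : ℝ) / (b : ℝ) ^ 2 ≤ 2 := by
  have h := sum_Ioo_inv_sq_le (α := ℝ) 0 (z + 1)
  have hI : Ioo 0 (z + 1) = Icc 1 z := by
    ext b; simp only [mem_Ioo, mem_Icc]; omega
  rw [hI] at h
  norm_num at h ⊢
  exact h

theorem sum_image_inv_le {ι : Type*} [DecidableEq ι] (s : Finset ι) (g : ι → ℕ) :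
    ∑ n ∈ s.image g, (1 : ℝ) / n ≤ ∑ i ∈ s, (1 : ℝ) / (g i : ℕ) :=
  Finset.sum_image_le_of_nonneg (f := fun n : ℕ => (1 : ℝ) / n) fun _ _ => by positivity

theorem sum_biUnion_inv_le {ι : Type*} [DecidableEq ι] (s : Finset ι) (t : ι → Finset ℕ) :
    ∑ n ∈ s.biUnion t, (1 : ℝ) / n ≤ ∑ i ∈ s, ∑ n ∈ t i, (1 : ℝ) / n := by
  induction s using Finset.induction_on with
  | empty => simp
  | insert a s ha ih =>
    rw [Finset.biUnion_insert, Finset.sum_insert ha]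
    have h1 := Finset.sum_union_inter (s₁ := t a) (s₂ := s.biUnion t) (f := fun n => (1 : ℝ) / n)
    have h2 : 0 ≤ ∑ n ∈ t a ∩ s.biUnion t, (1 : ℝ) / n :=
      Finset.sum_nonneg fun _ _ => by positivity
    linarith

/-- Writing `n = b ^ 2 * a` with `a` squarefree bounds the sum by `sieveMass` times
`∑ 1 / b ^ 2`. -/
theorem sum_coprime_inv_le (q z : ℕ) :
    ∑ n ∈ Icc 1 z with ¬ q ∣ n, (1 : ℝ) / n ≤ 2 * sieveMass q z := by
  calc _ ≤ ∑ n ∈ (sieveSupport q z ×ˢ Icc 1 z).image (fun t : ℕ × ℕ => t.2 ^ 2 * t.1), (1 : ℝ) / n := by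
        refine Finset.sum_le_sum_of_subset_of_nonneg (fun n hn => ?_) fun _ _ _ => by positivity
        simp only [mem_filter, mem_Icc] at hn
        obtain ⟨a, b, rfl, ha⟩ := Nat.sq_mul_squarefree n
        have ha0 : 0 < a := Nat.pos_of_ne_zero ha.ne_zero
        have hb0 : 0 < b := by
          rcases Nat.eq_zero_or_pos b with h | h
          · simp [h] at hn
          · exact h
        refine mem_image.2 ⟨(a, b), ?_, rfl⟩
        simp only [mem_product, sieveSupport, mem_filter, mem_Icc]
        refine ⟨⟨⟨ha0, ?_⟩, ha, fun h => hn.2 (h.mul_left _)⟩, hb0, ?_⟩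
        · exact (Nat.le_mul_of_pos_left a (by positivity)).trans hn.1.2
        · have h1 : b ≤ b ^ 2 := by nlinarith
          exact h1.trans ((Nat.le_mul_of_pos_right _ ha0).trans hn.1.2)
    _ ≤ ∑ t ∈ sieveSupport q z ×ˢ Icc 1 z, (1 : ℝ) / (t.2 ^ 2 * t.1 : ℕ) :=
        sum_image_inv_le _ fun t : ℕ × ℕ => t.2 ^ 2 * t.1
    _ = sieveMass q z * ∑ b ∈ Icc 1 z, (1 : ℝ) / (b : ℝ) ^ 2 := by
        rw [Finset.sum_product, sieveMass, Finset.sum_mul_sum]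
        refine Finset.sum_congr rfl fun a _ => Finset.sum_congr rfl fun b _ => ?_
        push_cast
        rw [one_div_mul_one_div, mul_comm]
    _ ≤ 2 * sieveMass q z := by
        rw [mul_comm]
        have : 0 ≤ sieveMass q z := Finset.sum_nonneg fun _ _ => by positivity
        exact mul_le_mul_of_nonneg_right (sum_inv_sq_le_two z) this

theorem log_le_sieveMass {q : ℕ} (hq : q.Prime) {z : ℕ} (hz : 1 ≤ z) :
    Real.log z ≤ 4 * sieveMass q z := by
  have h1 : Real.log z ≤ ∑ n ∈ Icc 1 z, (1 : ℝ) / n := by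
    have h := log_add_one_le_harmonic z
    rw [harmonic_eq_sum_Icc] at h
    push_cast at h
    have h0 : Real.log z ≤ Real.log (z + 1 : ℕ) :=
      Real.log_le_log (by exact_mod_cast hz) (by push_cast; linarith)
    push_cast at h0
    simpa only [one_div] using h0.trans h
  linarith [sum_inv_le_two_mul_coprime hq z, sum_coprime_inv_le q z]

/-! ### Primes congruent to `1` modulo a prime power -/

/-- A Brun–Titchmarsh inequality, uniform in `m`, for `m` whose only possible prime divisor is
`q`. -/
theorem card_prime_dyadic_le {q m : ℕ} (hq : q.Prime) (hm0 : 0 < m)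
    (hm : ∀ d : ℕ, ¬ q ∣ d → d.Coprime m) {j : ℕ} (hj : 1 ≤ j) :
    (#{k ∈ range (2 ^ j) | (1 + k * m).Prime} : ℝ) ≤ 160 * 2 ^ j / j := by
  have hj0 : (0 : ℝ) < j := by exact_mod_cast hj
  have hpow : (0 : ℝ) < 2 ^ j := by positivity
  -- The sieve is used with level `z = 2 ^ i` and `i = ⌊j / 8⌋`, so that `z ^ 4 ≤ 2 ^ (j / 2)`; for
  -- `j < 8` the trivial bound suffices.
  rcases lt_or_ge j 8 with hj8 | hj8
  · have h1 : #{k ∈ range (2 ^ j) | (1 + k * m).Prime} ≤ 2 ^ j :=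
      (card_filter_le _ _).trans_eq (card_range _)
    have h2 : (#{k ∈ range (2 ^ j) | (1 + k * m).Prime} : ℝ) ≤ 2 ^ j := by exact_mod_cast h1
    refine h2.trans ?_
    rw [le_div_iff₀ hj0]
    have : (j : ℝ) ≤ 160 := by exact_mod_cast (by omega : j ≤ 160)
    nlinarith
  · obtain ⟨i, hi1, hi2, hi3⟩ : ∃ i, 1 ≤ i ∧ 8 * i ≤ j ∧ j ≤ 16 * i :=
      ⟨j / 8, by omega, by omega, by omega⟩
    have hi0 : (0 : ℝ) < i := by exact_mod_cast hi1
    have hz : 1 ≤ 2 ^ i := Nat.one_le_two_pow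
    have hS := sieveMass_pos hq hz
    have hmain := card_prime_le hq hz hm0 hm (2 ^ j)
    have hlog := log_le_sieveMass hq hz
    have hj16 : (j : ℝ) ≤ 16 * i := by exact_mod_cast hi3
    have hSj : (j : ℝ) / 128 ≤ sieveMass q (2 ^ i) := by
      push_cast at hlog
      rw [Real.log_pow] at hlog
      have := Real.log_two_gt_d9
      nlinarith
    have h1 : ((2 ^ j : ℕ) : ℝ) / sieveMass q (2 ^ i) ≤ 128 * 2 ^ j / j := by
      calc _ ≤ ((2 ^ j : ℕ) : ℝ) / (j / 128) := by gcongr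
        _ = _ := by push_cast; field_simp
    have hbig : (2 : ℝ) ^ i ≤ ((2 : ℝ) ^ i) ^ 4 := by
      have : (1 : ℝ) ≤ 2 ^ i := one_le_pow₀ (by norm_num)
      exact le_self_pow₀ this (by norm_num)
    have h2 : ((2 : ℝ) ^ i) ^ 4 ≤ 16 * 2 ^ j / j := by
      rw [le_div_iff₀ hj0]
      have hi4 : (i : ℝ) ≤ ((2 : ℝ) ^ i) ^ 4 := by
        have : (i : ℝ) ≤ 2 ^ i := by exact_mod_cast Nat.lt_two_pow_self.le
        exact this.trans hbig
      have h8 : ((2 : ℝ) ^ i) ^ 4 * ((2 : ℝ) ^ i) ^ 4 ≤ 2 ^ j := by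
        rw [← pow_mul, ← pow_add]
        exact pow_le_pow_right₀ (by norm_num) (by omega)
      have hp : (0 : ℝ) < ((2 : ℝ) ^ i) ^ 4 := by positivity
      nlinarith
    have h3 : (160 : ℝ) * 2 ^ j / j = 128 * 2 ^ j / j + 16 * 2 ^ j / j + 16 * 2 ^ j / j := by ring
    rw [h3]
    push_cast at hmain h1
    linarith

/-- The primes `p ≤ N` with `p ≡ 1 [MOD m]`. -/
def progPrimes (N m : ℕ) : Finset ℕ := {p ∈ Icc 1 N | p.Prime ∧ m ∣ p - 1}

/-- The primes are grouped into dyadic blocks according to `Nat.log 2 k`, where `p = 1 + k * m`. -/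
theorem sum_progPrimes_le {q m : ℕ} (hq : q.Prime) (hm0 : 0 < m)
    (hm : ∀ d : ℕ, ¬ q ∣ d → d.Coprime m) (N : ℕ) :
    ∑ p ∈ progPrimes N m, (1 : ℝ) / p ≤ 320 / m * (1 + Real.log (Nat.log 2 N + 1)) := by
  set J := Nat.log 2 N
  have hm' : (0 : ℝ) < m := by exact_mod_cast hm0
  -- `D j` indexes the primes `1 + k * m` of the block `2 ^ j ≤ k < 2 ^ (j + 1)`.
  set D : ℕ → Finset ℕ := fun j => {k ∈ range (2 ^ (j + 1)) | (1 + k * m).Prime ∧ 2 ^ j ≤ k}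
  have hsub : progPrimes N m ⊆ (range (J + 1)).biUnion fun j => (D j).image (1 + · * m) := by
    intro p hp
    simp only [progPrimes, mem_filter, mem_Icc] at hp
    obtain ⟨⟨-, hpN⟩, hpp, k, hk⟩ := hp
    have hp2 := hpp.two_le
    have hpk : p = 1 + k * m := by rw [mul_comm] at hk; omega
    have hk0 : k ≠ 0 := by rintro rfl; omega
    have hkN : k ≤ N := by
      have := Nat.le_mul_of_pos_right k hm0
      omega
    simp only [mem_biUnion, mem_range, mem_image, D, mem_filter]
    exact ⟨Nat.log 2 k, Nat.lt_succ_of_le (Nat.log_mono_right hkN), k,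
      ⟨Nat.lt_pow_succ_log_self (by norm_num) k, hpk ▸ hpp, Nat.pow_log_le_self 2 hk0⟩,
      hpk.symm⟩
  have hblock : ∀ j, ∑ p ∈ (D j).image (1 + · * m), (1 : ℝ) / p ≤ 320 / m * (1 / (j + 1 : ℕ)) := by
    intro j
    calc _ ≤ ∑ k ∈ D j, (1 : ℝ) / (1 + k * m : ℕ) :=
          sum_image_inv_le _ _
      _ ≤ ∑ k ∈ D j, (1 : ℝ) / (2 ^ j * m) := by
          refine Finset.sum_le_sum fun k hk => ?_
          have hk2 : (2 : ℝ) ^ j ≤ k := by exact_mod_cast (mem_filter.1 hk).2.2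
          refine one_div_le_one_div_of_le (by positivity) ?_
          push_cast
          nlinarith
      _ = #(D j) * (1 / (2 ^ j * m)) := by rw [Finset.sum_const, nsmul_eq_mul]
      _ ≤ 160 * 2 ^ (j + 1) / (j + 1 : ℕ) * (1 / (2 ^ j * m)) := by
          gcongr
          refine le_trans ?_ (card_prime_dyadic_le hq hm0 hm (Nat.succ_le_succ (Nat.zero_le j)))
          have hD : D j ⊆ {k ∈ range (2 ^ (j + 1)) | (1 + k * m).Prime} := by
            intro k hk
            simp only [D, mem_filter] at hk ⊢
            exact ⟨hk.1, hk.2.1⟩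
          exact_mod_cast card_le_card hD
      _ = _ := by
          rw [pow_succ]
          field_simp
          ring
  calc _ ≤ ∑ p ∈ (range (J + 1)).biUnion fun j => (D j).image (1 + · * m), (1 : ℝ) / p :=
        Finset.sum_le_sum_of_subset_of_nonneg hsub fun _ _ _ => by positivity
    _ ≤ ∑ j ∈ range (J + 1), ∑ p ∈ (D j).image (1 + · * m), (1 : ℝ) / p :=
        sum_biUnion_inv_le _ _
    _ ≤ ∑ j ∈ range (J + 1), 320 / m * (1 / (j + 1 : ℕ) : ℝ) :=
        Finset.sum_le_sum fun j _ => hblock j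
    _ = 320 / m * (harmonic (J + 1) : ℝ) := by
        rw [← Finset.mul_sum, harmonic]
        push_cast
        simp only [one_div]
    _ ≤ _ := by
        have := harmonic_le_one_add_log (J + 1)
        push_cast at this
        gcongr

/-! ### Prime powers dividing `λ` -/

/-- Since `λ(p ^ e) ∣ p ^ (e - 1) * (p - 1)`, a prime power `q ^ b` dividing `λ(p ^ e)` divides
`p - 1` when `p ≠ q`, and forces `b ≤ e - 1` when `p = q`; by the lcm formula for `λ`, a prime
power dividing `λ(n)` divides `λ(p ^ e)` for some `p ^ e` exactly dividing `n`. -/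
theorem pow_dvd_lam {q b n : ℕ} (hq : q.Prime) (hb : 1 ≤ b) (hn : n ≠ 0) (h : q ^ b ∣ lam n) :
    q ^ (b + 1) ∣ n ∨ ∃ r, r.Prime ∧ r ∣ n ∧ q ^ b ∣ r - 1 := by
  have hlam : ∀ m : ℕ, m ≠ 0 → lam m = ArithmeticFunction.carmichael m := fun m hm =>
    (ArithmeticFunction.carmichael_eq_exponent hm).symm
  rw [hlam n hn] at h
  clear hlam
  induction n using Nat.recOnPosPrimePosCoprime with
  | zero => exact absurd rfl hn
  | one =>
    have := h.trans (ArithmeticFunction.carmichael_dvd_totient 1)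
    rw [Nat.totient_one, Nat.dvd_one] at this
    exact absurd this (Nat.one_lt_pow (by omega) hq.one_lt).ne'
  | prime_pow p e hp he =>
    have h1 := h.trans (ArithmeticFunction.carmichael_dvd_totient _)
    rw [Nat.totient_prime_pow hp he] at h1
    by_cases hpq : p = q
    · subst hpq
      left
      have hcop : (p ^ b).Coprime (p - 1) :=
        Nat.Coprime.pow_left _ ((Nat.coprime_self_sub_right hp.one_lt.le).2 (by simp))
      have h2 := (Nat.pow_dvd_pow_iff_le_right hp.one_lt).1 (hcop.dvd_of_dvd_mul_right h1)
      exact pow_dvd_pow _ (by omega)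
    · right
      refine ⟨p, hp, dvd_pow_self p (by omega), ?_⟩
      exact ((((Nat.coprime_primes hq hp).2 (Ne.symm hpq)).pow b (e - 1))).dvd_of_dvd_mul_left h1
  | coprime m k hm hk hmk ihm ihk =>
    rw [ArithmeticFunction.carmichael_mul hmk] at h
    have hc : ∀ l : ℕ, l ≠ 0 → ArithmeticFunction.carmichael l ≠ 0 := by
      intro l hl h0
      have := ArithmeticFunction.carmichael_dvd_totient l
      rw [h0, zero_dvd_iff, Nat.totient_eq_zero] at this
      exact hl this
    have hor : q ^ b ∣ ArithmeticFunction.carmichael m ∨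
        q ^ b ∣ ArithmeticFunction.carmichael k := by
      have hcm := hc m (by omega)
      have hck := hc k (by omega)
      rw [hq.pow_dvd_iff_le_factorization (Nat.lcm_ne_zero hcm hck),
        Nat.factorization_lcm hcm hck, Finsupp.sup_apply, le_sup_iff] at h
      rwa [hq.pow_dvd_iff_le_factorization hcm, hq.pow_dvd_iff_le_factorization hck]
    rcases hor with h | h
    · rcases ihm (by omega) h with h | ⟨r, hr, hrm, h⟩
      · exact Or.inl (h.mul_right _)
      · exact Or.inr ⟨r, hr, hrm.mul_right _, h⟩
    · rcases ihk (by omega) h with h | ⟨r, hr, hrm, h⟩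
      · exact Or.inl (h.mul_left _)
      · exact Or.inr ⟨r, hr, hrm.mul_left _, h⟩

theorem lam_ne_zero {n : ℕ} (hn : n ≠ 0) : lam n ≠ 0 := by
  have : NeZero n := ⟨hn⟩
  exact Monoid.exponent_ne_zero_of_finite

/-! ### Counting -/

theorem card_dvd_le {x : ℝ} (hx : 0 ≤ x) (d : ℕ) :
    (#{n ∈ Icc 1 ⌊x⌋₊ | d ∣ n} : ℝ) ≤ x * (1 / d) := by
  have h := Nat.Ioc_filter_dvd_card_eq_div ⌊x⌋₊ d
  rw [← Finset.Icc_succ_left_eq_Ioc] at h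
  rw [mul_one_div]
  calc _ = ((⌊x⌋₊ / d : ℕ) : ℝ) := by exact_mod_cast h
    _ ≤ (⌊x⌋₊ : ℝ) / d := Nat.cast_div_le
    _ ≤ x / d := by gcongr; exact Nat.floor_le hx

/-- The four cases obtained by applying `pow_dvd_lam` to `λ(λ(n))` and then to `λ(n)`. -/
theorem subset_cover {N q a : ℕ} (hq : q.Prime) (ha : 1 ≤ a) :
    {n ∈ Icc 1 N | q ^ a ∣ lam (lam n)} ⊆
      {n ∈ Icc 1 N | q ^ (a + 2) ∣ n} ∪
      (progPrimes N (q ^ (a + 1))).biUnion (fun r => {n ∈ Icc 1 N | r ∣ n}) ∪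
      (progPrimes N (q ^ a)).biUnion (fun p => {n ∈ Icc 1 N | p ^ 2 ∣ n} ∪
        (progPrimes N p).biUnion fun r => {n ∈ Icc 1 N | r ∣ n}) := by
  intro n hn
  simp only [mem_filter, mem_Icc] at hn
  obtain ⟨⟨hn1, hnN⟩, h⟩ := hn
  have hle : ∀ r, r ∣ n → r ≤ N := fun r hr => (Nat.le_of_dvd hn1 hr).trans hnN
  simp only [mem_union, mem_biUnion, mem_filter, mem_Icc, progPrimes]
  rcases pow_dvd_lam hq ha (lam_ne_zero (by omega)) h with h | ⟨p, hp, hpn, hpa⟩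
  · left
    rcases pow_dvd_lam hq (by omega) (by omega) h with h | ⟨r, hr, hrn, hra⟩
    · exact Or.inl ⟨⟨hn1, hnN⟩, h⟩
    · exact Or.inr ⟨r, ⟨⟨hr.one_lt.le, hle r hrn⟩, hr, hra⟩, ⟨hn1, hnN⟩, hrn⟩
  · right
    have hpn' : p ^ 1 ∣ lam n := by rwa [pow_one]
    rcases pow_dvd_lam hp le_rfl (by omega) hpn' with h | ⟨r, hr, hrn, hra⟩
    · have hpN : p ≤ N := hle p ((dvd_pow_self p (by norm_num)).trans h)
      exact ⟨p, ⟨⟨hp.one_lt.le, hpN⟩, hp, hpa⟩, Or.inl ⟨⟨hn1, hnN⟩, h⟩⟩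
    · rw [pow_one] at hra
      have hr1 : p ≤ r - 1 := Nat.le_of_dvd (by have := hr.two_le; omega) hra
      have hrN := hle r hrn
      exact ⟨p, ⟨⟨hp.one_lt.le, by omega⟩, hp, hpa⟩,
        Or.inr ⟨r, ⟨⟨hr.one_lt.le, hrN⟩, hr, hra⟩, ⟨hn1, hnN⟩, hrn⟩⟩

/-- The union bound over the four cases, given a bound `B / m` for the sum of `1 / r` over primes
`r ≡ 1 [MOD m]`, `m` a prime power; later `B` is a multiple of `log log x`. -/
theorem card_cover_le {q a : ℕ} (hq : q.Prime) (ha : 1 ≤ a) {x B : ℝ} (hx : 0 ≤ x) (hB : 1 ≤ B)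
    (hsum : ∀ p b : ℕ, p.Prime →
      ∑ r ∈ progPrimes ⌊x⌋₊ (p ^ b), (1 : ℝ) / r ≤ B / (p ^ b : ℕ)) :
    (#{n ∈ Icc 1 ⌊x⌋₊ | q ^ a ∣ lam (lam n)} : ℝ) ≤ 4 * x * B ^ 2 / (q : ℝ) ^ a := by
  set N := ⌊x⌋₊
  have hqa : (0 : ℝ) < (q : ℝ) ^ a := by
    have : (0 : ℝ) < q := by exact_mod_cast hq.pos
    positivity
  have hq1 : (1 : ℝ) ≤ q := by exact_mod_cast hq.one_lt.le
  have hle : ∀ b : ℕ, (1 : ℝ) / (q ^ (a + b) : ℕ) ≤ 1 / (q : ℝ) ^ a := by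
    intro b
    push_cast
    exact one_div_le_one_div_of_le hqa (pow_le_pow_right₀ hq1 (by omega))
  have hcard : (#{n ∈ Icc 1 N | q ^ a ∣ lam (lam n)} : ℝ) ≤
      #{n ∈ Icc 1 N | q ^ (a + 2) ∣ n} +
      ∑ r ∈ progPrimes N (q ^ (a + 1)), (#{n ∈ Icc 1 N | r ∣ n} : ℝ) +
      ∑ p ∈ progPrimes N (q ^ a), ((#{n ∈ Icc 1 N | p ^ 2 ∣ n} : ℝ) +
        ∑ r ∈ progPrimes N p, (#{n ∈ Icc 1 N | r ∣ n} : ℝ)) := by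
    refine le_trans (Nat.cast_le.2 (card_le_card (subset_cover hq ha))) ?_
    norm_cast
    refine (card_union_le _ _).trans (add_le_add ((card_union_le _ _).trans
      (add_le_add le_rfl card_biUnion_le)) (card_biUnion_le.trans ?_))
    exact Finset.sum_le_sum fun p _ => (card_union_le _ _).trans
      (add_le_add le_rfl card_biUnion_le)
  have h1 : (#{n ∈ Icc 1 N | q ^ (a + 2) ∣ n} : ℝ) ≤ x * (1 / (q : ℝ) ^ a) :=
    (card_dvd_le hx _).trans (mul_le_mul_of_nonneg_left (hle 2) hx)
  have hr : ∀ p b : ℕ, p.Prime →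
      ∑ r ∈ progPrimes N (p ^ b), (#{n ∈ Icc 1 N | r ∣ n} : ℝ) ≤ x * B * (1 / (p ^ b : ℕ)) := by
    intro p b hp
    calc _ ≤ ∑ r ∈ progPrimes N (p ^ b), x * (1 / (r : ℝ)) :=
          Finset.sum_le_sum fun r _ => card_dvd_le hx r
      _ ≤ x * (B / (p ^ b : ℕ)) := by
          rw [← Finset.mul_sum]
          exact mul_le_mul_of_nonneg_left (hsum p b hp) hx
      _ = _ := by ring
  have h2 : ∑ r ∈ progPrimes N (q ^ (a + 1)), (#{n ∈ Icc 1 N | r ∣ n} : ℝ) ≤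
      x * B * (1 / (q : ℝ) ^ a) :=
    (hr q (a + 1) hq).trans (mul_le_mul_of_nonneg_left (hle 1) (by positivity))
  have h3 : ∑ p ∈ progPrimes N (q ^ a), ((#{n ∈ Icc 1 N | p ^ 2 ∣ n} : ℝ) +
        ∑ r ∈ progPrimes N p, (#{n ∈ Icc 1 N | r ∣ n} : ℝ)) ≤
      x * (1 + B) * B * (1 / (q : ℝ) ^ a) := by
    calc _ ≤ ∑ p ∈ progPrimes N (q ^ a), x * (1 + B) * (1 / (p : ℝ)) := by
          refine Finset.sum_le_sum fun p hp => ?_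
          have hpp : p.Prime := (mem_filter.1 hp).2.1
          have hp1 : (1 : ℝ) ≤ p := by exact_mod_cast hpp.one_lt.le
          have h4 := card_dvd_le hx (p ^ 2)
          have h5 : (1 : ℝ) / (p ^ 2 : ℕ) ≤ 1 / p := by
            push_cast
            exact one_div_le_one_div_of_le (by linarith) (le_self_pow₀ hp1 (by norm_num))
          have h6 := hr p 1 hpp
          rw [pow_one] at h6
          have h7 := mul_le_mul_of_nonneg_left h5 hx
          linarith
      _ ≤ x * (1 + B) * (B / (q ^ a : ℕ)) := by
          rw [← Finset.mul_sum]
          exact mul_le_mul_of_nonneg_left (hsum q a hq) (by positivity)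
      _ = _ := by push_cast; ring
  have hfin : x * (1 / (q : ℝ) ^ a) + x * B * (1 / (q : ℝ) ^ a) +
      x * (1 + B) * B * (1 / (q : ℝ) ^ a) ≤ 4 * x * B ^ 2 / (q : ℝ) ^ a := by
    have h8 : 1 + B + (1 + B) * B ≤ 4 * B ^ 2 := by nlinarith
    calc _ = (1 + B + (1 + B) * B) * (x * (1 / (q : ℝ) ^ a)) := by ring
      _ ≤ 4 * B ^ 2 * (x * (1 / (q : ℝ) ^ a)) := by gcongr
      _ = _ := by ring
  linarith

theorem one_add_log_log_two_le {x : ℝ} (hx : Real.exp (Real.exp (Real.exp 1)) < x) :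
    1 ≤ Real.log (Real.log x) ∧
      1 + Real.log (Nat.log 2 ⌊x⌋₊ + 1) ≤ 4 * Real.log (Real.log x) := by
  have hx0 : 0 < x := (Real.exp_pos _).trans hx
  have h1 : Real.exp (Real.exp 1) < Real.log x := (Real.lt_log_iff_exp_lt hx0).2 hx
  have hl0 : 0 < Real.log x := (Real.exp_pos _).trans h1
  have h2 : Real.exp 1 < Real.log (Real.log x) := (Real.lt_log_iff_exp_lt hl0).2 h1
  have he := Real.add_one_le_exp 1
  have hll : 1 ≤ Real.log (Real.log x) := by linarith
  refine ⟨hll, ?_⟩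
  have hx1 : 1 ≤ x := (Real.one_le_exp (Real.exp_pos _).le).trans hx.le
  have hlx1 : 1 ≤ Real.log x := (Real.one_le_exp (Real.exp_pos _).le).trans h1.le
  have hJ : (Nat.log 2 ⌊x⌋₊ : ℝ) ≤ 2 * Real.log x := by
    have hN : ⌊x⌋₊ ≠ 0 := (Nat.floor_pos.2 hx1).ne'
    have h3 : ((2 ^ Nat.log 2 ⌊x⌋₊ : ℕ) : ℝ) ≤ x :=
      (Nat.cast_le.2 (Nat.pow_log_le_self 2 hN)).trans (Nat.floor_le hx0.le)
    push_cast at h3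
    have h4 := Real.log_le_log (by positivity) h3
    rw [Real.log_pow] at h4
    have := Real.log_two_gt_d9
    have h5 : (0 : ℝ) ≤ Nat.log 2 ⌊x⌋₊ := Nat.cast_nonneg _
    nlinarith
  have h6 : Real.log (Nat.log 2 ⌊x⌋₊ + 1) ≤ Real.log (3 * Real.log x) :=
    Real.log_le_log (by positivity) (by linarith)
  rw [Real.log_mul (by norm_num) hl0.ne'] at h6
  have h7 : Real.log 3 ≤ 2 := by
    have := Real.log_le_sub_one_of_pos (x := 3) (by norm_num)
    linarith
  linarith

/-- For any prime power `q^a`, the number of positive integers `n ≤ x` with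
`q^a ∣ λ(λ(n))` is `O(x (log log x)² / q^a)`, uniformly. -/
theorem prime_powers_in_lambda_lambda :
    ∃ C : ℝ, 0 < C ∧ ∀ x : ℝ, Real.exp (Real.exp (Real.exp 1)) < x →
      ∀ q a : ℕ, q.Prime → 1 ≤ a →
      (Set.ncard {n : ℕ | 1 ≤ n ∧ (n : ℝ) ≤ x ∧ q ^ a ∣ lam (lam n)} : ℝ) ≤
        C * x * (Real.log (Real.log x))^2 / (q : ℝ) ^ a := by
  refine ⟨4 * 1280 ^ 2, by norm_num, fun x hx q a hq ha => ?_⟩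
  obtain ⟨hL, hlog⟩ := one_add_log_log_two_le hx
  have hx0 : 0 ≤ x := ((Real.exp_pos _).trans hx).le
  have hset : {n : ℕ | 1 ≤ n ∧ (n : ℝ) ≤ x ∧ q ^ a ∣ lam (lam n)} =
      ({n ∈ Icc 1 ⌊x⌋₊ | q ^ a ∣ lam (lam n)} : Finset ℕ) := by
    ext n
    simp only [Set.mem_ofPred_eq, coe_filter, mem_Icc, Nat.le_floor_iff hx0, and_assoc]
  rw [hset, Set.ncard_coe_finset]
  have hsum : ∀ p b : ℕ, p.Prime →
      ∑ r ∈ progPrimes ⌊x⌋₊ (p ^ b), (1 : ℝ) / r ≤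
        1280 * Real.log (Real.log x) / (p ^ b : ℕ) := by
    intro p b hp
    refine (sum_progPrimes_le hp (pow_pos hp.pos b) (fun d hd =>
      (((Nat.Prime.coprime_iff_not_dvd hp).2 hd).pow_left b).symm) ⌊x⌋₊).trans ?_
    have : (0 : ℝ) < (p ^ b : ℕ) := by exact_mod_cast pow_pos hp.pos b
    rw [div_mul_eq_mul_div]
    refine div_le_div_of_nonneg_right ?_ this.le
    linarith
  refine (card_cover_le hq ha hx0 (by linarith) hsum).trans_eq ?_
  ring
end
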